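/- Uniform Tits alternative: Let K be a field and Γ a finitely generated subgroup of GL_n(K) that is not virtually solvable. Then there exists N ∈ ℕ such that for every finite symmetric generating set Σ of Γ with 1 ∈ Σ, the ball Σ^N contains two independent elements. (Equivalently, the independence diameter d_Γ = sup over finite symmetric generating sets Σ with 1 ∈ Σ of the least n such that Σⁿ contains two independent elements is finite.) -/

import Mathlib

open Matrix Pointwise

/-!
Suppose that generating sets `S i` of `Γ` have no free pair in their ball of radius `i`. As `Γ` is
not virtually solvable, a subgroup of finite index has a strongly irreducible representation of
dimension at least two over an algebraically closed field; Schreier generators and a twist by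
scalars reduce to this subgroup and to determinant one.

The entries of the `i`-th representation, after a finite extension, lie in a finitely generated
ring, which carries a system of places for which only finitely many elements have bounded height.
The traces of short words cannot all be small at all places: in a fixed basis of words the
representation is determined by finitely many traces, and these would take only finitely many
values. So at some place a short word has an eigenvalue of absolute value greater than one, and
after replacing the absolute value by a power, the largest such absolute value is two.

At this place, the Gram matrix for the trace form of a spanning set of words is bounded away from
zero, so the representation may be conjugated into a bounded one and passes to the ultralimit of
the fields along an ultrafilter. The limit is again strongly irreducible, and some element of it
has eigenvalues of distinct absolute values. Limits of its rescaled powers, put in general position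
by conjugation, give a ping-pong pair in the limit. Ping-pong is an open condition, so it holds for
almost all `i`, a contradiction.
-/

namespace UniformTits

open Filter Topology

/-! ### Ultralimits of valued fields -/

section Ultralimit

variable {ι k : Type*} [Field k]

/-- The sequences in `k` whose `i`-th term is bounded for the `i`-th absolute value, along `U`. -/
def boundedSubring (U : Ultrafilter ι) (av : ι → AbsoluteValue k ℝ) : Subring (ι → k) where
  carrier := {x | ∃ C : ℝ, ∀ᶠ i in (U : Filter ι), av i (x i) ≤ C}
  mul_mem' := by
    rintro a b ⟨C, hC⟩ ⟨D, hD⟩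
    refine ⟨C * D, ?_⟩
    filter_upwards [hC, hD] with i hCi hDi
    simp only [Pi.mul_apply, map_mul]
    exact mul_le_mul hCi hDi ((av i).nonneg _) (((av i).nonneg _).trans hCi)
  one_mem' := ⟨1, by simp⟩
  add_mem' := by
    rintro a b ⟨C, hC⟩ ⟨D, hD⟩
    refine ⟨C + D, ?_⟩
    filter_upwards [hC, hD] with i hCi hDi
    exact ((av i).add_le _ _).trans (add_le_add hCi hDi)
  zero_mem' := ⟨0, by simp⟩
  neg_mem' := by
    rintro a ⟨C, hC⟩
    exact ⟨C, by simpa using hC⟩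

/-- The bounded sequences tending to zero along `U`. -/
def infinitesimalIdeal (U : Ultrafilter ι) (av : ι → AbsoluteValue k ℝ) :
    Ideal (boundedSubring U av) where
  carrier := {x | Tendsto (fun i ↦ av i (x.1 i)) U (𝓝 0)}
  add_mem' := by
    intro a b ha hb
    have h := Filter.Tendsto.add ha hb
    rw [add_zero] at h
    exact squeeze_zero (fun i ↦ (av i).nonneg _) (fun i ↦ (av i).add_le _ _) h
  zero_mem' := by simp
  smul_mem' := by
    rintro ⟨c, C, hC⟩ ⟨x, _⟩ hx
    have h := Filter.Tendsto.const_mul C hx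
    rw [mul_zero] at h
    refine squeeze_zero' (Eventually.of_forall fun i ↦ (av i).nonneg _) ?_ h
    filter_upwards [hC] with i hi
    simp only [smul_eq_mul, Subring.coe_mul, Pi.mul_apply, map_mul]
    exact mul_le_mul_of_nonneg_right hi ((av i).nonneg _)

theorem exists_tendsto_of_eventually_le {U : Ultrafilter ι} {f : ι → ℝ} {C : ℝ}
    (hf : ∀ i, 0 ≤ f i) (hC : ∀ᶠ i in (U : Filter ι), f i ≤ C) :
    ∃ l, Tendsto f U (𝓝 l) := by
  have hmem : ∀ᶠ i in (U : Filter ι), f i ∈ Set.Icc 0 C := hC.mono fun i hi ↦ ⟨hf i, hi⟩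
  obtain ⟨l, -, hl⟩ := isCompact_Icc.ultrafilter_le_nhds' (U.map f) hmem
  exact ⟨l, hl⟩

theorem infinitesimalIdeal_isMaximal (U : Ultrafilter ι) (av : ι → AbsoluteValue k ℝ) :
    (infinitesimalIdeal U av).IsMaximal := by
  refine Ideal.isMaximal_iff.2 ⟨fun h ↦ ?_, ?_⟩
  · have hone : Tendsto (fun i ↦ av i ((1 : boundedSubring U av).1 i)) U (𝓝 0) := h
    simp at hone
  · rintro J ⟨x, C, hC⟩ hJ hx hxJ
    obtain ⟨l, hl⟩ := exists_tendsto_of_eventually_le (fun i ↦ (av i).nonneg (x i)) hC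
    have hl_ne : l ≠ 0 := by
      rintro rfl
      exact hx hl
    have hl_pos : 0 < l := (ge_of_tendsto' hl fun i ↦ (av i).nonneg _).lt_of_ne' hl_ne
    have hlower : ∀ᶠ i in (U : Filter ι), l / 2 < av i (x i) :=
      hl.eventually (lt_mem_nhds (half_lt_self hl_pos))
    have hinv : (fun i ↦ (x i)⁻¹) ∈ boundedSubring U av := by
      refine ⟨(l / 2)⁻¹, ?_⟩
      filter_upwards [hlower] with i hi
      rw [map_inv₀]
      exact inv_anti₀ (half_pos hl_pos) hi.le
    have hmul : (⟨_, hinv⟩ : boundedSubring U av) * ⟨x, C, hC⟩ ∈ J := J.mul_mem_left _ hxJ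
    have hsub : (1 : boundedSubring U av) - ⟨_, hinv⟩ * ⟨x, C, hC⟩ ∈ J := by
      refine hJ (tendsto_const_nhds.congr' ?_)
      filter_upwards [hlower] with i hi
      have hxi : x i ≠ 0 := (av i).pos_iff.1 ((half_pos hl_pos).trans hi)
      simp [hxi]
    simpa using J.add_mem hsub hmul

/-- The ultralimit of the valued fields `(k, av i)`: bounded sequences modulo infinitesimal ones. -/
def Ultralimit (U : Ultrafilter ι) (av : ι → AbsoluteValue k ℝ) : Type _ :=
  boundedSubring U av ⧸ infinitesimalIdeal U av

/-- The field structure of the ultralimit, as a definition so that instance unification does not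
unfold it to the quotient ring. -/
noncomputable def ultralimitField (U : Ultrafilter ι) (av : ι → AbsoluteValue k ℝ) :
    Field (Ultralimit U av) :=
  haveI := infinitesimalIdeal_isMaximal U av
  Ideal.Quotient.field (infinitesimalIdeal U av)

noncomputable instance (U : Ultrafilter ι) (av : ι → AbsoluteValue k ℝ) :
    Field (Ultralimit U av) :=
  ultralimitField U av

variable {U : Ultrafilter ι} {av : ι → AbsoluteValue k ℝ}

/-- The bounded sequence `f` represents the element `x` of the ultralimit. -/
def IsUltralimit (f : ι → k) (x : Ultralimit U av) : Prop :=
  ∃ h : f ∈ boundedSubring U av, (Ideal.Quotient.mk (infinitesimalIdeal U av) ⟨f, h⟩ :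
    Ultralimit U av) = x

theorem Ultralimit.exists_isUltralimit (x : Ultralimit U av) : ∃ f, IsUltralimit f x := by
  obtain ⟨⟨f, hf⟩, hfx⟩ := Ideal.Quotient.mk_surjective x
  exact ⟨f, hf, hfx⟩

theorem exists_isUltralimit_of_eventually_le {f : ι → k} {C : ℝ}
    (h : ∀ᶠ i in (U : Filter ι), av i (f i) ≤ C) :
    ∃ x : Ultralimit U av, IsUltralimit f x :=
  ⟨_, ⟨C, h⟩, rfl⟩

namespace IsUltralimit

variable {f g : ι → k} {x y : Ultralimit U av}

theorem exists_eventually_le (h : IsUltralimit f x) :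
    ∃ C : ℝ, ∀ᶠ i in (U : Filter ι), av i (f i) ≤ C := h.1

theorem unique (hx : IsUltralimit f x) (hy : IsUltralimit f y) : x = y := by
  obtain ⟨_, rfl⟩ := hx
  obtain ⟨_, rfl⟩ := hy
  rfl

theorem add (hf : IsUltralimit f x) (hg : IsUltralimit g y) :
    IsUltralimit (fun i ↦ f i + g i) (x + y) := by
  obtain ⟨hf, rfl⟩ := hf
  obtain ⟨hg, rfl⟩ := hg
  exact ⟨add_mem hf hg, rfl⟩

theorem mul (hf : IsUltralimit f x) (hg : IsUltralimit g y) :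
    IsUltralimit (fun i ↦ f i * g i) (x * y) := by
  obtain ⟨hf, rfl⟩ := hf
  obtain ⟨hg, rfl⟩ := hg
  exact ⟨mul_mem hf hg, rfl⟩

theorem neg (hf : IsUltralimit f x) : IsUltralimit (fun i ↦ -f i) (-x) := by
  obtain ⟨hf, rfl⟩ := hf
  exact ⟨neg_mem hf, rfl⟩

theorem zero : IsUltralimit (fun _ ↦ 0) (0 : Ultralimit U av) :=
  ⟨zero_mem _, rfl⟩

theorem one : IsUltralimit (fun _ ↦ 1) (1 : Ultralimit U av) :=
  ⟨one_mem _, rfl⟩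

theorem sub (hf : IsUltralimit f x) (hg : IsUltralimit g y) :
    IsUltralimit (fun i ↦ f i - g i) (x - y) := by
  simpa only [sub_eq_add_neg] using hf.add hg.neg

theorem sum {β : Type*} (s : Finset β) {f : β → ι → k} {x : β → Ultralimit U av}
    (h : ∀ j ∈ s, IsUltralimit (f j) (x j)) :
    IsUltralimit (fun i ↦ ∑ j ∈ s, f j i) (∑ j ∈ s, x j) := by
  classical
  induction s using Finset.induction_on with
  | empty => simpa using zero
  | insert a s ha ih =>
    simp only [Finset.sum_insert ha]
    exact (h a (by simp)).add (ih fun j hj ↦ h j (by simp [hj]))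

theorem prod {β : Type*} (s : Finset β) {f : β → ι → k} {x : β → Ultralimit U av}
    (h : ∀ j ∈ s, IsUltralimit (f j) (x j)) :
    IsUltralimit (fun i ↦ ∏ j ∈ s, f j i) (∏ j ∈ s, x j) := by
  classical
  induction s using Finset.induction_on with
  | empty => simpa using one
  | insert a s ha ih =>
    simp only [Finset.prod_insert ha]
    exact (h a (by simp)).mul (ih fun j hj ↦ h j (by simp [hj]))

theorem pow (h : IsUltralimit f x) (n : ℕ) : IsUltralimit (fun i ↦ f i ^ n) (x ^ n) := by
  simpa using prod (Finset.range n) (f := fun _ ↦ f) (x := fun _ ↦ x) fun _ _ ↦ h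

theorem zero_iff : IsUltralimit f (0 : Ultralimit U av) ↔
    Tendsto (fun i ↦ av i (f i)) U (𝓝 0) := by
  constructor
  · rintro ⟨h, h0⟩
    exact (Ideal.Quotient.eq_zero_iff_mem (I := infinitesimalIdeal U av)).1 h0
  · intro h
    have hb : f ∈ boundedSubring U av :=
      ⟨1, (h.eventually (gt_mem_nhds one_pos)).mono fun _ h ↦ h.le⟩
    exact ⟨hb, (Ideal.Quotient.eq_zero_iff_mem (I := infinitesimalIdeal U av)).2 h⟩

theorem congr (h : IsUltralimit f x) (hfg : ∀ᶠ i in (U : Filter ι), f i = g i) :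
    IsUltralimit g x := by
  have hsub : IsUltralimit (fun i ↦ g i - f i) (0 : Ultralimit U av) := by
    refine zero_iff.2 (tendsto_const_nhds.congr' ?_)
    filter_upwards [hfg] with i hi
    simp [hi]
  simpa using hsub.add h

end IsUltralimit

theorem Ultralimit.exists_forall_tendsto (x : Ultralimit U av) :
    ∃ l : ℝ, ∀ f, IsUltralimit f x → Tendsto (fun i ↦ av i (f i)) U (𝓝 l) := by
  obtain ⟨f, hf⟩ := x.exists_isUltralimit
  obtain ⟨C, hC⟩ := hf.exists_eventually_le
  obtain ⟨l, hl⟩ := exists_tendsto_of_eventually_le (fun i ↦ (av i).nonneg _) hC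
  refine ⟨l, fun g hg ↦ ?_⟩
  have hzero := hg.sub hf
  rw [sub_self, IsUltralimit.zero_iff] at hzero
  have hdiff : Tendsto (fun i ↦ av i (g i) - av i (f i)) U (𝓝 0) :=
    squeeze_zero_norm (fun i ↦ (av i).abs_abv_sub_le_abv_sub _ _) hzero
  simpa using hdiff.add hl

/-- The limit along `U` of the absolute values of any sequence representing `x`. -/
noncomputable def Ultralimit.abs (x : Ultralimit U av) : ℝ :=
  x.exists_forall_tendsto.choose

theorem IsUltralimit.tendsto_abs {f : ι → k} {x : Ultralimit U av} (h : IsUltralimit f x) :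
    Tendsto (fun i ↦ av i (f i)) U (𝓝 x.abs) :=
  x.exists_forall_tendsto.choose_spec f h

variable (U av) in
/-- `Ultralimit.abs` as an absolute value on the ultralimit. -/
noncomputable def ultralimitAbs : AbsoluteValue (Ultralimit U av) ℝ where
  toFun := Ultralimit.abs
  map_mul' x y := by
    obtain ⟨f, hf⟩ := x.exists_isUltralimit
    obtain ⟨g, hg⟩ := y.exists_isUltralimit
    have hmul := (hf.mul hg).tendsto_abs
    simp only [map_mul] at hmul
    exact tendsto_nhds_unique hmul (hf.tendsto_abs.mul hg.tendsto_abs)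
  nonneg' x := by
    obtain ⟨f, hf⟩ := x.exists_isUltralimit
    exact ge_of_tendsto' hf.tendsto_abs fun i ↦ (av i).nonneg _
  eq_zero' x := by
    obtain ⟨f, hf⟩ := x.exists_isUltralimit
    constructor
    · intro hx
      have hlim := hf.tendsto_abs
      rw [hx, ← IsUltralimit.zero_iff] at hlim
      exact hf.unique hlim
    · rintro rfl
      exact tendsto_nhds_unique hf.tendsto_abs (IsUltralimit.zero_iff.1 hf)
  add_le' x y := by
    obtain ⟨f, hf⟩ := x.exists_isUltralimit
    obtain ⟨g, hg⟩ := y.exists_isUltralimit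
    exact le_of_tendsto_of_tendsto' (hf.add hg).tendsto_abs (hf.tendsto_abs.add hg.tendsto_abs)
      fun i ↦ (av i).add_le _ _

namespace IsUltralimit

variable {f : ι → k} {x : Ultralimit U av}

theorem tendsto (h : IsUltralimit f x) :
    Tendsto (fun i ↦ av i (f i)) U (𝓝 (ultralimitAbs U av x)) := h.tendsto_abs

theorem eventually_ne_zero (h : IsUltralimit f x) (hx : x ≠ 0) :
    ∀ᶠ i in (U : Filter ι), f i ≠ 0 := by
  filter_upwards [h.tendsto.eventually (lt_mem_nhds ((ultralimitAbs U av).pos hx))] with i hi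
  exact (av i).pos_iff.1 hi

end IsUltralimit

/-- Entrywise version of `IsUltralimit` for matrices. -/
def IsMatrixUltralimit {p q : Type*} (A : ι → Matrix p q k) (X : Matrix p q (Ultralimit U av)) :
    Prop :=
  ∀ a b, IsUltralimit (fun i ↦ A i a b) (X a b)

variable {p q r : Type*}

theorem exists_isMatrixUltralimit (X : Matrix p q (Ultralimit U av)) :
    ∃ A : ι → Matrix p q k, IsMatrixUltralimit A X := by
  choose f hf using fun a b ↦ (X a b).exists_isUltralimit
  exact ⟨fun i ↦ Matrix.of fun a b ↦ f a b i, fun a b ↦ hf a b⟩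

theorem exists_isMatrixUltralimit_of_eventually_le {A : ι → Matrix p q k}
    (h : ∀ a b, ∃ C : ℝ, ∀ᶠ i in (U : Filter ι), av i (A i a b) ≤ C) :
    ∃ X : Matrix p q (Ultralimit U av), IsMatrixUltralimit A X := by
  choose C hC using h
  choose X hX using fun a b ↦ exists_isUltralimit_of_eventually_le (hC a b)
  exact ⟨Matrix.of X, hX⟩

namespace IsMatrixUltralimit

variable {A B : ι → Matrix p q k} {X Y : Matrix p q (Ultralimit U av)}

theorem unique (hX : IsMatrixUltralimit A X) (hY : IsMatrixUltralimit A Y) : X = Y :=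
  Matrix.ext fun a b ↦ (hX a b).unique (hY a b)

theorem mul [Fintype q] {B : ι → Matrix q r k} {Y : Matrix q r (Ultralimit U av)}
    (hA : IsMatrixUltralimit A X) (hB : IsMatrixUltralimit B Y) :
    IsMatrixUltralimit (fun i ↦ A i * B i) (X * Y) := by
  intro a b
  simp only [Matrix.mul_apply]
  exact .sum _ fun j _ ↦ (hA a j).mul (hB j b)

theorem mulVec [Fintype q] {v : ι → q → k} {w : q → Ultralimit U av}
    (hA : IsMatrixUltralimit A X) (hv : ∀ j, IsUltralimit (fun i ↦ v i j) (w j)) (a : p) :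
    IsUltralimit (fun i ↦ (A i *ᵥ v i) a) ((X *ᵥ w) a) := by
  simp only [Matrix.mulVec, dotProduct]
  exact .sum _ fun j _ ↦ (hA a j).mul (hv j)

theorem sub (hA : IsMatrixUltralimit A X) (hB : IsMatrixUltralimit B Y) :
    IsMatrixUltralimit (fun i ↦ A i - B i) (X - Y) := fun a b ↦ (hA a b).sub (hB a b)

theorem smul {c : ι → k} {x : Ultralimit U av} (hc : IsUltralimit c x)
    (hA : IsMatrixUltralimit A X) : IsMatrixUltralimit (fun i ↦ c i • A i) (x • X) :=
  fun a b ↦ hc.mul (hA a b)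

theorem one [DecidableEq p] :
    IsMatrixUltralimit (fun _ ↦ (1 : Matrix p p k)) (1 : Matrix p p (Ultralimit U av)) := by
  intro a b
  obtain rfl | hab := eq_or_ne a b
  · simpa using IsUltralimit.one
  · simpa [hab] using IsUltralimit.zero

theorem congr (hA : IsMatrixUltralimit A X) (hAB : ∀ᶠ i in (U : Filter ι), A i = B i) :
    IsMatrixUltralimit B X :=
  fun a b ↦ (hA a b).congr (hAB.mono fun i hi ↦ by rw [hi])

theorem det [Fintype p] [DecidableEq p] {A : ι → Matrix p p k}
    {X : Matrix p p (Ultralimit U av)} (h : IsMatrixUltralimit A X) :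
    IsUltralimit (fun i ↦ (A i).det) X.det := by
  simp only [Matrix.det_apply']
  refine .sum _ fun σ _ ↦ .mul ?_ (.prod _ fun j _ ↦ h _ _)
  obtain hσ | hσ := Int.units_eq_one_or (Equiv.Perm.sign σ)
  · simpa [hσ] using IsUltralimit.one
  · simpa [hσ] using IsUltralimit.one.neg

theorem trace [Fintype p] {A : ι → Matrix p p k} {X : Matrix p p (Ultralimit U av)}
    (h : IsMatrixUltralimit A X) : IsUltralimit (fun i ↦ (A i).trace) X.trace :=
  .sum _ fun j _ ↦ h j j

end IsMatrixUltralimit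

end Ultralimit

/-! ### Ping-pong -/

section PingPong

variable {k n α : Type*} [Field k] [Fintype n] (v : AbsoluteValue k ℝ)

/-- The `ℓ¹` norm of a vector with respect to the absolute value `v`. -/
def vecNorm (u : n → k) : ℝ := ∑ j, v (u j)

/-- The sum of the absolute values of the entries of a matrix; it bounds the operator norm
for `vecNorm`. -/
def matNorm (A : Matrix n n k) : ℝ := ∑ i, ∑ j, v (A i j)

theorem vecNorm_nonneg (u : n → k) : 0 ≤ vecNorm v u :=
  Finset.sum_nonneg fun _ _ ↦ v.nonneg _

theorem vecNorm_pos {u : n → k} (hu : u ≠ 0) : 0 < vecNorm v u := by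
  obtain ⟨j, hj⟩ := Function.ne_iff.1 hu
  exact Finset.sum_pos' (fun _ _ ↦ v.nonneg _) ⟨j, Finset.mem_univ _, v.pos hj⟩

theorem vecNorm_smul (c : k) (u : n → k) : vecNorm v (c • u) = v c * vecNorm v u := by
  simp [vecNorm, Finset.mul_sum]

theorem vecNorm_sub_le (u w : n → k) : vecNorm v (u - w) ≤ vecNorm v u + vecNorm v w := by
  rw [vecNorm, vecNorm, vecNorm, ← Finset.sum_add_distrib]
  exact Finset.sum_le_sum fun j _ ↦ (v.sub_le_add _ _)

theorem vecNorm_mulVec_le (A : Matrix n n k) (u : n → k) :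
    vecNorm v (A *ᵥ u) ≤ matNorm v A * vecNorm v u := by
  rw [matNorm, Finset.sum_mul]
  refine Finset.sum_le_sum fun i _ ↦ ?_
  rw [Finset.sum_mul, Matrix.mulVec, dotProduct]
  refine (v.sum_le _ _).trans (Finset.sum_le_sum fun j _ ↦ ?_)
  rw [map_mul]
  gcongr
  exact Finset.single_le_sum (f := fun j ↦ v (u j)) (fun _ _ ↦ v.nonneg _) (Finset.mem_univ j)

/-- The element of `G` named by the letter `x` of a word of `FreeGroup α`. -/
def letter {G : Type*} [Group G] (a : α → G) (x : α × Bool) : G :=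
  cond x.2 (a x.1) (a x.1)⁻¹

/-- The formal inverse of a letter. -/
def letterInv (x : α × Bool) : α × Bool := (x.1, !x.2)

theorem letter_letterInv {G : Type*} [Group G] (a : α → G) (x : α × Bool) :
    letter a (letterInv x) = (letter a x)⁻¹ := by
  obtain ⟨i, b⟩ := x
  cases b <;> simp [letter, letterInv]

/-- The quantitative ping-pong condition for a family `X` of matrices indexed by letters:
`Z x y` is an approximate left inverse of `X x` on the range of `X y` whenever `x y` is reduced,
and `δ` is a lower bound for the dilation of the base point `p` by every `X x`. All the
inequalities are strict and can be tested at a limit. -/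
structure IsPingPong (X : α × Bool → Matrix n n k) (Z : α × Bool → α × Bool → Matrix n n k)
    (p : n → k) (δ : ℝ) : Prop where
  pos : 0 < δ
  matNorm_sub_lt : ∀ x y, y ≠ letterInv x → matNorm v (Z x y * X x * X y - X y) < δ / 2
  matNorm_lt : ∀ x y, 2 * δ * matNorm v (Z x y) < 1
  lt_vecNorm : ∀ x, δ * vecNorm v p < vecNorm v (X x *ᵥ p)

variable {v}

theorem IsPingPong.le_vecNorm_mulVec {X : α × Bool → Matrix n n k}
    {Z : α × Bool → α × Bool → Matrix n n k} {p : n → k} {δ : ℝ} (h : IsPingPong v X Z p δ)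
    {x y : α × Bool} (hxy : y ≠ letterInv x) {q : n → k}
    (hq : δ * vecNorm v q ≤ vecNorm v (X y *ᵥ q)) :
    δ * vecNorm v (X y *ᵥ q) ≤ vecNorm v (X x *ᵥ (X y *ᵥ q)) := by
  have hδ := h.pos
  have hdecomp : X y *ᵥ q = Z x y *ᵥ (X x *ᵥ (X y *ᵥ q)) - (Z x y * X x * X y - X y) *ᵥ q := by
    rw [Matrix.sub_mulVec, ← Matrix.mulVec_mulVec, ← Matrix.mulVec_mulVec, sub_sub_cancel]
  have herror : vecNorm v ((Z x y * X x * X y - X y) *ᵥ q) ≤ vecNorm v (X y *ᵥ q) / 2 := by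
    refine (vecNorm_mulVec_le v _ _).trans ?_
    have := mul_le_mul_of_nonneg_right (h.matNorm_sub_lt x y hxy).le (vecNorm_nonneg v q)
    linarith
  have hle : vecNorm v (X y *ᵥ q) ≤
      matNorm v (Z x y) * vecNorm v (X x *ᵥ (X y *ᵥ q)) + vecNorm v (X y *ᵥ q) / 2 :=
    calc vecNorm v (X y *ᵥ q)
        ≤ vecNorm v (Z x y *ᵥ (X x *ᵥ (X y *ᵥ q))) +
          vecNorm v ((Z x y * X x * X y - X y) *ᵥ q) := by
          conv_lhs => rw [hdecomp]
          exact vecNorm_sub_le v _ _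
      _ ≤ _ := add_le_add (vecNorm_mulVec_le v _ _) herror
  calc δ * vecNorm v (X y *ᵥ q)
      ≤ δ * (2 * (matNorm v (Z x y) * vecNorm v (X x *ᵥ (X y *ᵥ q)))) := by gcongr; linarith
    _ = 2 * δ * matNorm v (Z x y) * vecNorm v (X x *ᵥ (X y *ᵥ q)) := by ring
    _ ≤ 1 * vecNorm v (X x *ᵥ (X y *ᵥ q)) := by
      gcongr
      exacts [vecNorm_nonneg v _, (h.matNorm_lt x y).le]
    _ = _ := one_mul _

variable [DecidableEq n]

/-- The matrix of a letter, rescaled by a constant depending on the letter. -/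
def scaledLetter (c : α × Bool → k) (a : α → GL n k) (x : α × Bool) : Matrix n n k :=
  c x • (letter a x).1

variable (v) in
/-- Suitable multiples of the letters of the tuple `a` of matrices satisfy `IsPingPong`, and the
scaling constants of a letter and its inverse have a small product. -/
def PingPongCertificate (a : α → GL n k) : Prop :=
  ∃ (c : α × Bool → k) (Z : α × Bool → α × Bool → Matrix n n k) (p : n → k) (δ : ℝ),
    (∀ x, c x ≠ 0) ∧ IsPingPong v (scaledLetter c a) Z p δ ∧
    ∀ x, v (c x * c (letterInv x)) < δ ^ 2

theorem letterInv_mulVec_mulVec (a : α → GL n k) (x : α × Bool) (q : n → k) :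
    (letter a (letterInv x)).1 *ᵥ ((letter a x).1 *ᵥ q) = q := by
  rw [Matrix.mulVec_mulVec, letter_letterInv, ← Units.val_mul]
  simp

theorem IsPingPong.le_vecNorm_word {c : α × Bool → k} {a : α → GL n k}
    {Z : α × Bool → α × Bool → Matrix n n k} {p : n → k} {δ : ℝ} (hc : ∀ x, c x ≠ 0)
    (h : IsPingPong v (scaledLetter c a) Z p δ) {x : α × Bool} {L : List (α × Bool)}
    (hred : FreeGroup.IsReduced (x :: L)) :
    δ * vecNorm v ((L.map (letter a)).prod.1 *ᵥ p) ≤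
      vecNorm v (scaledLetter c a x *ᵥ ((L.map (letter a)).prod.1 *ᵥ p)) := by
  induction L generalizing x with
  | nil => simpa using (h.lt_vecNorm x).le
  | cons y L ih =>
    rw [FreeGroup.isReduced_cons_cons] at hred
    have hxy : y ≠ letterInv x := by
      rintro rfl
      simpa [letterInv] using hred.1 rfl
    have hstep := h.le_vecNorm_mulVec hxy (ih hred.2)
    rw [show scaledLetter c a y = c y • (letter a y).1 from rfl, Matrix.smul_mulVec, vecNorm_smul,
      Matrix.mulVec_smul, vecNorm_smul, mul_left_comm] at hstep
    rw [List.map_cons, List.prod_cons, Units.val_mul, ← Matrix.mulVec_mulVec]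
    exact le_of_mul_le_mul_left hstep (v.pos (hc y))

theorem PingPongCertificate.injective_lift {a : α → GL n k} (h : PingPongCertificate v a) :
    Function.Injective (FreeGroup.lift a) := by
  classical
  obtain ⟨c, Z, p, δ, hc, h, hcc⟩ := h
  refine (injective_iff_map_eq_one _).2 fun w hw ↦ by_contra fun hw_ne ↦ ?_
  obtain ⟨x, L, hL⟩ := List.exists_cons_of_ne_nil (mt FreeGroup.toWord_eq_nil_iff.1 hw_ne)
  have hprod : letter a x * (L.map (letter a)).prod = 1 := by
    rw [← hw, ← FreeGroup.mk_toWord (x := w), hL, FreeGroup.lift_mk, List.map_cons, List.prod_cons]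
    rfl
  have hred : FreeGroup.IsReduced (x :: L) := hL ▸ FreeGroup.isReduced_toWord (x := w)
  set q := (L.map (letter a)).prod.1 *ᵥ p with hq
  have hxq : (letter a x).1 *ᵥ q = p := by
    rw [hq, Matrix.mulVec_mulVec, ← Units.val_mul, hprod]
    simp
  have hle : δ * vecNorm v q ≤ v (c x) * vecNorm v p := by
    simpa only [scaledLetter, Matrix.smul_mulVec, ← hq, hxq, vecNorm_smul] using
      h.le_vecNorm_word hc hred
  have hlt : δ * vecNorm v p < v (c (letterInv x)) * vecNorm v q := by
    have := h.lt_vecNorm (letterInv x)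
    rwa [scaledLetter, Matrix.smul_mulVec, vecNorm_smul, ← hxq, letterInv_mulVec_mulVec, hxq]
      at this
  have hδ := h.pos
  refine lt_irrefl (δ ^ 2 * vecNorm v p) ?_
  calc δ ^ 2 * vecNorm v p = δ * (δ * vecNorm v p) := by ring
    _ < δ * (v (c (letterInv x)) * vecNorm v q) := by gcongr
    _ = v (c (letterInv x)) * (δ * vecNorm v q) := by ring
    _ ≤ v (c (letterInv x)) * (v (c x) * vecNorm v p) := by gcongr
    _ = v (c x * c (letterInv x)) * vecNorm v p := by rw [map_mul]; ring
    _ ≤ δ ^ 2 * vecNorm v p := by gcongr; exacts [vecNorm_nonneg v p, (hcc x).le]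

end PingPong

section PingPongUltralimit

variable {ι k n α : Type*} [Field k] [Fintype n] {U : Ultrafilter ι}
  {av : ι → AbsoluteValue k ℝ}

theorem IsMatrixUltralimit.tendsto_matNorm {A : ι → Matrix n n k}
    {X : Matrix n n (Ultralimit U av)} (h : IsMatrixUltralimit A X) :
    Tendsto (fun i ↦ matNorm (av i) (A i)) U (𝓝 (matNorm (ultralimitAbs U av) X)) :=
  tendsto_finsetSum _ fun a _ ↦ tendsto_finsetSum _ fun b _ ↦ (h a b).tendsto

theorem tendsto_vecNorm {u : ι → n → k} {x : n → Ultralimit U av}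
    (h : ∀ j, IsUltralimit (fun i ↦ u i j) (x j)) :
    Tendsto (fun i ↦ vecNorm (av i) (u i)) U (𝓝 (vecNorm (ultralimitAbs U av) x)) :=
  tendsto_finsetSum _ fun j _ ↦ (h j).tendsto

variable [Finite α]

theorem IsPingPong.eventually {A : ι → α × Bool → Matrix n n k}
    {X : α × Bool → Matrix n n (Ultralimit U av)}
    {Z : α × Bool → α × Bool → Matrix n n (Ultralimit U av)} {p : n → Ultralimit U av} {δ : ℝ}
    (h : IsPingPong (ultralimitAbs U av) X Z p δ)
    (hA : ∀ x, IsMatrixUltralimit (fun i ↦ A i x) (X x)) :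
    ∀ᶠ i in (U : Filter ι), ∃ Z p, IsPingPong (av i) (A i) Z p δ := by
  choose Z' hZ' using fun x y ↦ exists_isMatrixUltralimit (Z x y)
  choose p' hp' using fun j ↦ (p j).exists_isUltralimit
  have hsub : ∀ᶠ i in (U : Filter ι), ∀ x y, y ≠ letterInv x →
      matNorm (av i) (Z' x y i * A i x * A i y - A i y) < δ / 2 := by
    simp only [eventually_all]
    exact fun x y hxy ↦ ((((hZ' x y).mul (hA x)).mul (hA y)).sub (hA y)).tendsto_matNorm.eventually
      (gt_mem_nhds (h.matNorm_sub_lt x y hxy))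
  have hZ : ∀ᶠ i in (U : Filter ι), ∀ x y, 2 * δ * matNorm (av i) (Z' x y i) < 1 := by
    simp only [eventually_all]
    exact fun x y ↦ ((hZ' x y).tendsto_matNorm.const_mul (2 * δ)).eventually
      (gt_mem_nhds (h.matNorm_lt x y))
  have hp : ∀ᶠ i in (U : Filter ι), ∀ x, δ * vecNorm (av i) (fun j ↦ p' j i) <
      vecNorm (av i) (A i x *ᵥ fun j ↦ p' j i) := by
    simp only [eventually_all]
    exact fun x ↦ ((tendsto_vecNorm hp').const_mul δ).eventually_lt
      (tendsto_vecNorm ((hA x).mulVec hp')) (h.lt_vecNorm x)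
  filter_upwards [hsub, hZ, hp] with i hsub hZ hp
  exact ⟨fun x y ↦ Z' x y i, fun j ↦ p' j i, h.pos, hsub, hZ, hp⟩

variable [DecidableEq n]

theorem IsPingPong.eventually_certificate {a : ι → α → GL n k} {c : ι → α × Bool → k}
    {X : α × Bool → Matrix n n (Ultralimit U av)}
    {Z : α × Bool → α × Bool → Matrix n n (Ultralimit U av)} {p : n → Ultralimit U av} {δ : ℝ}
    (h : IsPingPong (ultralimitAbs U av) X Z p δ)
    (hX : ∀ x, IsMatrixUltralimit (fun i ↦ scaledLetter (c i) (a i) x) (X x))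
    (hc : ∀ x, ∀ᶠ i in (U : Filter ι), c i x ≠ 0)
    (hcc : ∀ x, ∀ᶠ i in (U : Filter ι), av i (c i x * c i (letterInv x)) < δ ^ 2) :
    ∀ᶠ i in (U : Filter ι), PingPongCertificate (av i) (a i) := by
  filter_upwards [h.eventually hX, eventually_all.2 hc, eventually_all.2 hcc]
    with i ⟨Z, p, h⟩ hc hcc
  exact ⟨c i, Z, p, δ, hc, h, hcc⟩

theorem PingPongCertificate.eventually {a : ι → α → GL n k} {b : α → GL n (Ultralimit U av)}
    (hab : ∀ x, IsMatrixUltralimit (fun i ↦ (letter (a i) x).1) (letter b x).1)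
    (h : PingPongCertificate (ultralimitAbs U av) b) :
    ∀ᶠ i in (U : Filter ι), PingPongCertificate (av i) (a i) := by
  obtain ⟨c, Z, p, δ, hc, h, hcc⟩ := h
  choose c' hc' using fun x ↦ (c x).exists_isUltralimit
  exact h.eventually_certificate (c := fun i x ↦ c' x i) (fun x ↦ .smul (hc' x) (hab x))
    (fun x ↦ (hc' x).eventually_ne_zero (hc x))
    fun x ↦ ((hc' x).mul (hc' (letterInv x))).tendsto.eventually (gt_mem_nhds (hcc x))

end PingPongUltralimit

/-! ### Zariski-generic elements -/

section Transversality

theorem isPreirreducible_mul {G : Type*} [Mul G] [TopologicalSpace G] [SeparatelyContinuousMul G]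
    {s t : Set G} (hs : IsPreirreducible s) (ht : IsPreirreducible t) :
    IsPreirreducible (s * t) := by
  rintro u w hu hw ⟨_, ⟨a, ha, b, hb, rfl⟩, hab⟩ ⟨_, ⟨a', ha', b', hb', rfl⟩, hab'⟩
  obtain ⟨x, hx, hxu, hxw⟩ := hs _ _ (hu.preimage (continuous_mul_const b))
    (hw.preimage (continuous_mul_const b')) ⟨a, ha, hab⟩ ⟨a', ha', hab'⟩
  obtain ⟨y, hy, hyu, hyw⟩ := ht _ _ (hu.preimage (continuous_const_mul x))
    (hw.preimage (continuous_const_mul x)) ⟨b, hb, hxu⟩ ⟨b', hb', hxw⟩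
  exact ⟨x * y, Set.mul_mem_mul hx hy, hyu, hyw⟩

variable {G : Type*} [Group G] [TopologicalSpace G] [SeparatelyContinuousMul G]

theorem isIrreducible_smul {s : Set G} (hs : IsIrreducible s) (g : G) : IsIrreducible (g • s) :=
  hs.image _ (continuous_const_mul g).continuousOn

theorem smul_mem_irreducibleComponents {s : Set G} (hs : s ∈ irreducibleComponents G) (g : G) :
    g • s ∈ irreducibleComponents G := by
  refine ⟨isIrreducible_smul hs.1 g, fun t ht hst ↦ ?_⟩
  have hle : s ⊆ g⁻¹ • t := Set.smul_set_subset_iff_subset_inv_smul_set.1 hst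
  exact Set.subset_smul_set_iff.2 (hs.2 (isIrreducible_smul ht g⁻¹) hle)

theorem coe_stabilizer_irreducibleComponent_one :
    (MulAction.stabilizer G (irreducibleComponent (1 : G)) : Set G) = irreducibleComponent 1 := by
  set C := irreducibleComponent (1 : G)
  have hC_irr : IsIrreducible C := isIrreducible_irreducibleComponent
  have hone : (1 : G) ∈ C := mem_irreducibleComponent
  have hmul : C * C = C := eq_irreducibleComponent
    (isPreirreducible_mul hC_irr.2 hC_irr.2) (Set.subset_mul_left C hone)
  ext g
  refine ⟨fun hg ↦ ?_, fun hg ↦ ?_⟩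
  · have hgC : g • C = C := hg
    exact hgC ▸ ⟨1, hone, mul_one g⟩
  · have hle : g • C ⊆ C := (Set.smul_set_subset_mul hg).trans hmul.subset
    exact hle.antisymm ((smul_mem_irreducibleComponents
      (irreducibleComponent_mem_irreducibleComponents 1) g).2 hC_irr hle)

theorem exists_finiteIndex_isIrreducible [TopologicalSpace.NoetherianSpace G] :
    ∃ H : Subgroup G, H.FiniteIndex ∧ IsIrreducible (H : Set G) := by
  refine ⟨MulAction.stabilizer G (irreducibleComponent (1 : G)), ?_, ?_⟩
  · have hfin : (MulAction.orbit G (irreducibleComponent (1 : G))).Finite :=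
      TopologicalSpace.NoetherianSpace.finite_irreducibleComponents.subset <| by
        rintro _ ⟨g, rfl⟩
        exact smul_mem_irreducibleComponents (irreducibleComponent_mem_irreducibleComponents 1) g
    have := hfin.to_subtype
    have := Finite.of_equiv _ (MulAction.orbitEquivQuotientStabilizer G
      (irreducibleComponent (1 : G)))
    exact Subgroup.finiteIndex_of_finite_quotient
  · rw [coe_stabilizer_irreducibleComponent_one]
    exact isIrreducible_irreducibleComponent

end Transversality

section MatrixTransversality

theorem exists_mem_mul_map_mul_ne_zero {L F n : Type*} [Field L] [Field F] [Fintype n] (e : L →+* F)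
    {S : Set (Matrix n n L)} (hS : Submodule.span L S = ⊤) {B C : Matrix n n F} (hB : B ≠ 0)
    (hC : C ≠ 0) : ∃ A ∈ S, B * A.map e * C ≠ 0 := by
  classical
  by_contra! hzero
  have hall (A : Matrix n n L) : B * A.map e * C = 0 := by
    have hA : A ∈ Submodule.span L S := hS ▸ Submodule.mem_top
    induction hA using Submodule.span_induction with
    | mem A hA => exact hzero A hA
    | zero => simp
    | add A A' _ _ hA hA' => rw [Matrix.map_add _ (map_add e), mul_add, add_mul, hA, hA', add_zero]
    | smul c A _ hA =>
      have hsmul : (c • A).map e = e c • A.map e := by ext; simp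
      rw [hsmul, Matrix.mul_smul, Matrix.smul_mul, hA, smul_zero]
  obtain ⟨i, hi⟩ := Function.ne_iff.1 hB
  obtain ⟨a, hBa⟩ := Function.ne_iff.1 hi
  obtain ⟨b, hb⟩ := Function.ne_iff.1 hC
  obtain ⟨j, hCb⟩ := Function.ne_iff.1 hb
  have hsingle := congrFun₂ (hall (Matrix.single a b 1)) i j
  rw [Matrix.map_single] at hsingle
  simp [Matrix.mul_apply, Matrix.single_apply, ite_and] at hsingle
  exact hsingle.elim hBa hCb

theorem comap_bind₁_pointToPoint {σ τ F : Type*} [Field F] (s : σ → MvPolynomial τ F) (x : τ → F) :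
    PrimeSpectrum.comap (MvPolynomial.bind₁ s).toRingHom (MvPolynomial.pointToPoint x) =
      MvPolynomial.pointToPoint fun t ↦ MvPolynomial.eval x (s t) := by
  ext f
  simp [MvPolynomial.pointToPoint, MvPolynomial.mem_vanishingIdeal_iff, MvPolynomial.aeval_bind₁,
    MvPolynomial.aeval_eq_eval]

variable {Γ F n : Type*} [Group Γ] [Field F] [Fintype n] [DecidableEq n]

/-- The `F`-points of the affine space of matrices underlying a representation, as points of the
spectrum of the polynomial ring in the matrix entries. -/
noncomputable def entriesPoint (ρ : Γ →* GL n F) (g : Γ) :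
    PrimeSpectrum (MvPolynomial (n × n) F) :=
  MvPolynomial.pointToPoint fun t ↦ (ρ g).1 t.1 t.2

/-- The value of the polynomial `f` at the entries of `ρ g`. -/
noncomputable def evalEntries (ρ : Γ →* GL n F) (g : Γ) : MvPolynomial (n × n) F →+* F :=
  MvPolynomial.eval fun t ↦ (ρ g).1 t.1 t.2

theorem evalEntries_mvPolynomialX (ρ : Γ →* GL n F) (g : Γ) :
    (mvPolynomialX n n F).map (evalEntries ρ g) = (ρ g).1 := by
  ext i j
  simp [evalEntries]

theorem map_C_map_evalEntries (ρ : Γ →* GL n F) (g : Γ) (A : Matrix n n F) :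
    (A.map MvPolynomial.C).map (evalEntries ρ g) = A := by
  ext i j
  simp [evalEntries]

theorem exists_finiteIndex_forall_evalEntries_ne_zero (ρ : Γ →* GL n F) :
    ∃ Γ₀ : Subgroup Γ, Γ₀.FiniteIndex ∧ ∀ s : Set (MvPolynomial (n × n) F),
      s.Finite → (∀ f ∈ s, ∃ h ∈ Γ₀, evalEntries ρ h f ≠ 0) →
        ∃ h ∈ Γ₀, ∀ f ∈ s, evalEntries ρ h f ≠ 0 := by
  let _ : TopologicalSpace Γ := .induced (entriesPoint ρ) inferInstance
  have hind : IsInducing (entriesPoint ρ) := ⟨rfl⟩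
  have hnoeth : TopologicalSpace.NoetherianSpace Γ := hind.noetherianSpace
  have hcont (φ : Γ → Γ) (P : Matrix n n (MvPolynomial (n × n) F))
      (h : ∀ g, P.map (evalEntries ρ g) = (ρ (φ g)).1) : Continuous φ := by
    have hcomp : entriesPoint ρ ∘ φ =
        PrimeSpectrum.comap (MvPolynomial.bind₁ fun t ↦ P t.1 t.2).toRingHom ∘ entriesPoint ρ := by
      funext g
      simp only [Function.comp_apply, entriesPoint, comap_bind₁_pointToPoint, ← h g]
      rfl
    rw [hind.continuous_iff, hcomp]
    exact (PrimeSpectrum.continuous_comap _).comp hind.continuous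
  have hsep : SeparatelyContinuousMul Γ :=
    { continuous_const_mul := fun {g} ↦ hcont _ ((ρ g).1.map MvPolynomial.C * mvPolynomialX n n F)
        fun h ↦ by
          rw [Matrix.map_mul, evalEntries_mvPolynomialX, map_C_map_evalEntries, map_mul]
          rfl
      continuous_mul_const := fun {g} ↦ hcont _ (mvPolynomialX n n F * (ρ g).1.map MvPolynomial.C)
        fun h ↦ by
          rw [Matrix.map_mul, evalEntries_mvPolynomialX, map_C_map_evalEntries, map_mul]
          rfl }
  obtain ⟨Γ₀, hfin, hirr⟩ := exists_finiteIndex_isIrreducible (G := Γ)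
  refine ⟨Γ₀, hfin, fun s hs hne ↦ ?_⟩
  have hopen (f : MvPolynomial (n × n) F) : IsOpen {h : Γ | evalEntries ρ h f ≠ 0} := by
    convert (PrimeSpectrum.basicOpen f).2.preimage hind.continuous using 1
    ext h
    simp [entriesPoint, evalEntries, MvPolynomial.pointToPoint, MvPolynomial.aeval_eq_eval,
      MvPolynomial.mem_vanishingIdeal_iff]
  classical
  simpa [Set.Nonempty] using isIrreducible_iff_sInter.1 hirr
    (hs.toFinset.image fun f ↦ {h : Γ | evalEntries ρ h f ≠ 0})
    (by simpa using fun f _ ↦ hopen f) (by simpa [Set.Nonempty] using hne)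

theorem map_evalEntries_mul_mul (ρ : Γ →* GL n F) (g : Γ) (B C : Matrix n n F)
    (X : Matrix n n (MvPolynomial (n × n) F)) :
    (B.map MvPolynomial.C * X * C.map MvPolynomial.C).map (evalEntries ρ g) =
      B * X.map (evalEntries ρ g) * C := by
  rw [Matrix.map_mul, Matrix.map_mul, map_C_map_evalEntries, map_C_map_evalEntries]

theorem map_evalEntries_adjugate (ρ : Γ →* GL n F) (g : Γ) :
    (mvPolynomialX n n F).adjugate.map (evalEntries ρ g) = (ρ g).1.det • (ρ g⁻¹).1 := by
  have hmap : (mvPolynomialX n n F).adjugate.map (evalEntries ρ g) = (ρ g).1.adjugate := by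
    rw [← evalEntries_mvPolynomialX ρ g]
    exact (evalEntries ρ g).map_adjugate _
  have hdet : IsUnit (ρ g).1.det := (Matrix.isUnit_iff_isUnit_det _).1 (ρ g).isUnit
  rw [hmap, map_inv, Matrix.coe_units_inv, Matrix.inv_def, smul_smul,
    Ring.mul_inverse_cancel _ hdet, one_smul]

theorem exists_forall_mul_mul_ne_zero (ρ : Γ →* GL n F)
    (hρ : ∀ Γ₀ : Subgroup Γ, Γ₀.FiniteIndex → ∀ B C : Matrix n n F, B ≠ 0 → C ≠ 0 →
      ∃ h ∈ Γ₀, B * (ρ h).1 * C ≠ 0)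
    {ι : Type*} [Finite ι] {B C : ι → Matrix n n F} (hB : ∀ i, B i ≠ 0) (hC : ∀ i, C i ≠ 0) :
    ∃ h : Γ, ∀ i, B i * (ρ h).1 * C i ≠ 0 ∧ B i * (ρ h⁻¹).1 * C i ≠ 0 := by
  obtain ⟨Γ₀, hfin, hgen⟩ := exists_finiteIndex_forall_evalEntries_ne_zero ρ
  have hentry (i : ι) : ∃ h ∈ Γ₀, ∃ a b, (B i * (ρ h).1 * C i) a b ≠ 0 := by
    obtain ⟨h, hh, hne⟩ := hρ Γ₀ hfin (B i) (C i) (hB i) (hC i)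
    obtain ⟨a, ha⟩ := Function.ne_iff.1 hne
    exact ⟨h, hh, a, Function.ne_iff.1 ha⟩
  choose h hh a b hab using hentry
  -- The adjugate stands in for the inverse: it is polynomial in the entries.
  let P (X : Matrix n n (MvPolynomial (n × n) F)) (i : ι) : MvPolynomial (n × n) F :=
    ((B i).map MvPolynomial.C * X * (C i).map MvPolynomial.C : Matrix n n _) (a i) (b i)
  have hP (X) (i : ι) (g : Γ) :
      evalEntries ρ g (P X i) = (B i * X.map (evalEntries ρ g) * C i) (a i) (b i) := by
    rw [← map_evalEntries_mul_mul]
    rfl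
  have hX (i : ι) (g : Γ) : evalEntries ρ g (P (mvPolynomialX n n F) i) =
      (B i * (ρ g).1 * C i) (a i) (b i) := by
    rw [hP, evalEntries_mvPolynomialX]
  have hadj (i : ι) (g : Γ) : evalEntries ρ g (P (mvPolynomialX n n F).adjugate i) =
      (ρ g).1.det * (B i * (ρ g⁻¹).1 * C i) (a i) (b i) := by
    rw [hP, map_evalEntries_adjugate, Matrix.mul_smul, Matrix.smul_mul, Matrix.smul_apply,
      smul_eq_mul]
  obtain ⟨g, _, hg⟩ := hgen (Set.range (P (mvPolynomialX n n F)) ∪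
      Set.range (P (mvPolynomialX n n F).adjugate))
      ((Set.finite_range _).union (Set.finite_range _)) <| by
    rintro _ (⟨i, rfl⟩ | ⟨i, rfl⟩)
    · exact ⟨h i, hh i, by simpa only [hX] using hab i⟩
    · refine ⟨(h i)⁻¹, Γ₀.inv_mem (hh i), ?_⟩
      rw [hadj, inv_inv]
      exact mul_ne_zero ((Matrix.isUnit_iff_isUnit_det _).1 (ρ _).isUnit).ne_zero (hab i)
  refine ⟨g, fun i ↦ ⟨fun h0 ↦ hg _ (.inl ⟨i, rfl⟩) ?_, fun h0 ↦ hg _ (.inr ⟨i, rfl⟩) ?_⟩⟩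
  · rw [hX, h0, Matrix.zero_apply]
  · rw [hadj, h0, Matrix.zero_apply, mul_zero]

end MatrixTransversality

/-! ### Limits of rescaled group elements -/

section Rank

variable {F m n p : Type*} [Field F] [Fintype n]

theorem rank_lt_card_of_mulVec_eq_zero {X : Matrix m n F} {w : n → F} (hw : w ≠ 0)
    (h : X *ᵥ w = 0) : X.rank < Fintype.card n := by
  have hker : 0 < Module.finrank F (LinearMap.ker X.mulVecLin) :=
    Module.finrank_pos_iff_exists_ne_zero.2 ⟨⟨w, h⟩, fun h0 ↦ hw (congrArg Subtype.val h0)⟩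
  have hnullity := LinearMap.finrank_range_add_finrank_ker X.mulVecLin
  rw [Module.finrank_fintype_fun_eq_card] at hnullity
  rw [Matrix.rank]
  lia

theorem det_eq_zero_of_rank_lt_card [DecidableEq n] {X : Matrix n n F}
    (h : X.rank < Fintype.card n) : X.det = 0 := by
  by_contra hdet
  exact h.ne (Matrix.rank_of_isUnit X ((Matrix.isUnit_iff_isUnit_det X).2 (Ne.isUnit hdet)))

theorem exists_mul_mul_eq_of_rank_le [Fintype m] [Fintype p] (X : Matrix m n F) (Y : Matrix n p F)
    (h : Y.rank ≤ (X * Y).rank) : ∃ Z : Matrix n m F, Z * X * Y = Y := by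
  classical
  let f : LinearMap.range Y.mulVecLin →ₗ[F] m → F :=
    X.mulVecLin.comp (LinearMap.range Y.mulVecLin).subtype
  have hrange : LinearMap.range f = LinearMap.range (X * Y).mulVecLin := by
    rw [Matrix.mulVecLin_mul, LinearMap.range_comp, Submodule.range_subtype, LinearMap.range_comp]
  have hinj : LinearMap.ker f = ⊥ := by
    have hnullity := LinearMap.finrank_range_add_finrank_ker f
    rw [hrange] at hnullity
    rw [Matrix.rank, Matrix.rank] at h
    exact Submodule.finrank_eq_zero.1 (by lia)
  obtain ⟨g, hg⟩ := LinearMap.exists_leftInverse_of_injective f hinj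
  refine ⟨LinearMap.toMatrix' ((LinearMap.range Y.mulVecLin).subtype.comp g), ?_⟩
  apply Matrix.toLin'.injective
  rw [Matrix.toLin'_mul, Matrix.toLin'_mul, Matrix.toLin'_toMatrix']
  exact LinearMap.ext fun w ↦
    congrArg Subtype.val (LinearMap.congr_fun hg ⟨Y.mulVecLin w, LinearMap.mem_range_self _ w⟩)

end Rank

section ScaledLimit

theorem exists_isMatrixUltralimit_smul {ι k p q : Type*} [Field k] [Finite p] [Finite q]
    {U : Ultrafilter ι} {av : ι → AbsoluteValue k ℝ} {A : ι → Matrix p q k} (hA : ∀ i, A i ≠ 0) :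
    ∃ (c : ι → k) (X : Matrix p q (Ultralimit U av)),
      (∀ i, c i ≠ 0) ∧ X ≠ 0 ∧ IsMatrixUltralimit (fun i ↦ c i • A i) X := by
  have hentry (i : ι) : ∃ t : p × q, A i t.1 t.2 ≠ 0 := by
    obtain ⟨a, ha⟩ := Function.ne_iff.1 (hA i)
    obtain ⟨b, hab⟩ := Function.ne_iff.1 ha
    exact ⟨(a, b), hab⟩
  have hmax (i : ι) : ∃ t : p × q, ∀ s : p × q, av i (A i s.1 s.2) ≤ av i (A i t.1 t.2) :=
    have := (hentry i).nonempty
    Finite.exists_max _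
  choose t ht using hmax
  have hne (i : ι) : A i (t i).1 (t i).2 ≠ 0 := by
    obtain ⟨s, hs⟩ := hentry i
    exact (av i).pos_iff.1 (((av i).pos hs).trans_le (ht i s))
  have hle (i : ι) (a : p) (b : q) : av i (((A i (t i).1 (t i).2)⁻¹ • A i) a b) ≤ 1 := by
    rw [Matrix.smul_apply, smul_eq_mul, map_mul, map_inv₀, inv_mul_le_iff₀ ((av i).pos (hne i)),
      mul_one]
    exact ht i (a, b)
  obtain ⟨X, hX⟩ := exists_isMatrixUltralimit_of_eventually_le (U := U)
    fun a b ↦ ⟨1, Eventually.of_forall fun i ↦ hle i a b⟩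
  refine ⟨fun i ↦ (A i (t i).1 (t i).2)⁻¹, X, fun i ↦ inv_ne_zero (hne i), ?_, hX⟩
  rintro rfl
  have hlt : ∀ᶠ i in (U : Filter ι), ∀ a b, av i (((A i (t i).1 (t i).2)⁻¹ • A i) a b) < 1 :=
    eventually_all.2 fun a ↦ eventually_all.2 fun b ↦
      (IsUltralimit.zero_iff.1 (hX a b)).eventually (gt_mem_nhds one_pos)
  obtain ⟨i, hi⟩ := hlt.exists
  have hone := hi (t i).1 (t i).2
  rw [Matrix.smul_apply, smul_eq_mul, inv_mul_cancel₀ (hne i), map_one] at hone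
  exact hone.false

variable {ι L Γ n : Type*} [Field L] [Group Γ] (v : AbsoluteValue L ℝ) (U : Ultrafilter ι)

/-- The embedding of `L` in its ultralimit as constant sequences. -/
noncomputable def constHom : L →+* Ultralimit U fun _ ↦ v :=
  (Ideal.Quotient.mk (infinitesimalIdeal U fun _ ↦ v)).comp <|
    (Pi.constRingHom ι L).codRestrict (boundedSubring U fun _ ↦ v)
      fun x ↦ ⟨v x, Eventually.of_forall fun _ ↦ le_rfl⟩

theorem isUltralimit_const (x : L) : IsUltralimit (fun _ ↦ x) (constHom v U x) := ⟨_, rfl⟩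

variable [Fintype n] [DecidableEq n] (ρ : Γ →* GL n L)

/-- The representation `ρ` with coefficients extended to the ultralimit. -/
noncomputable def constRep : Γ →* GL n (Ultralimit U fun _ ↦ v) :=
  (Matrix.GeneralLinearGroup.map (constHom v U)).comp ρ

variable {v U}

/-- `X` is the limit of the matrices `ρ (g i)` rescaled by nonzero constants `c i`. -/
structure IsScaledLimit (g : ι → Γ) (c : ι → L) (X : Matrix n n (Ultralimit U fun _ ↦ v)) :
    Prop where
  ne_zero : ∀ i, c i ≠ 0
  isMatrixUltralimit : IsMatrixUltralimit (fun i ↦ c i • (ρ (g i)).1) X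

variable {ρ} {g g' : ι → Γ} {c c' : ι → L} {X Y : Matrix n n (Ultralimit U fun _ ↦ v)}

theorem IsScaledLimit.mul (h : IsScaledLimit ρ g c X) (h' : IsScaledLimit ρ g' c' Y) :
    IsScaledLimit ρ (fun i ↦ g i * g' i) (fun i ↦ c i * c' i) (X * Y) := by
  refine ⟨fun i ↦ mul_ne_zero (h.1 i) (h'.1 i),
    (h.2.mul h'.2).congr (Eventually.of_forall fun i ↦ ?_)⟩
  rw [Matrix.smul_mul, Matrix.mul_smul, smul_smul, map_mul, Units.val_mul]

variable (v U ρ) in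
theorem isScaledLimit_const (h : Γ) :
    IsScaledLimit ρ (fun _ ↦ h) (fun _ ↦ 1) (constRep v U ρ h).1 := by
  refine ⟨fun _ ↦ one_ne_zero, ?_⟩
  simp only [one_smul]
  exact fun a b ↦ isUltralimit_const v U _

variable (v U ρ) in
theorem exists_isScaledLimit [Nonempty n] (g : ι → Γ) :
    ∃ c X, IsScaledLimit ρ g c X ∧ X ≠ (0 : Matrix n n (Ultralimit U fun _ ↦ v)) := by
  obtain ⟨c, X, hc, hX, h⟩ := exists_isMatrixUltralimit_smul (U := U) (av := fun _ ↦ v)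
    (A := fun i ↦ (ρ (g i)).1) fun i ↦ (ρ (g i)).ne_zero
  exact ⟨c, X, ⟨hc, h⟩, hX⟩

theorem IsScaledLimit.isUltralimit_mul_zero (h : IsScaledLimit ρ g c X)
    (h' : IsScaledLimit ρ (fun i ↦ (g i)⁻¹) c' Y) (hdet : X.det = 0) :
    IsUltralimit (fun i ↦ c i * c' i) (0 : Ultralimit U fun _ ↦ v) := by
  obtain hn | ⟨⟨o⟩⟩ := isEmpty_or_nonempty n
  · simp at hdet
  have hscalar : IsMatrixUltralimit (fun i ↦ (c i * c' i) • (1 : Matrix n n L)) (X * Y) := by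
    refine (h.mul h').2.congr (Eventually.of_forall fun i ↦ ?_)
    rw [mul_inv_cancel, map_one, Units.val_one]
  have hentry : IsUltralimit (fun i ↦ c i * c' i) ((X * Y) o o) := by simpa using hscalar o o
  have hdet_scalar := hscalar.det
  simp only [Matrix.det_smul, Matrix.det_one, mul_one] at hdet_scalar
  have hpow := (hentry.pow (Fintype.card n)).unique hdet_scalar
  rw [Matrix.det_mul, hdet, zero_mul] at hpow
  exact eq_zero_of_pow_eq_zero hpow ▸ hentry

theorem pow_mulVec_eq_pow_smul {γ : Γ} {w : n → L} {x : L} (h : (ρ γ).1 *ᵥ w = x • w) (N : ℕ) :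
    (ρ (γ ^ N)).1 *ᵥ w = x ^ N • w := by
  induction N with
  | zero => simp
  | succ N ih =>
    rw [pow_succ, map_mul, Units.val_mul, ← Matrix.mulVec_mulVec, h, Matrix.mulVec_smul, ih,
      smul_smul, pow_succ, mul_comm]

theorem IsScaledLimit.rank_lt_card_of_eigenvectors {U : Ultrafilter ℕ} (hU : (U : Filter ℕ) ≤ atTop)
    {γ : Γ} {c : ℕ → L} {X : Matrix n n (Ultralimit U fun _ ↦ v)}
    (hX : IsScaledLimit ρ (fun N ↦ γ ^ N) c X) {lam mu : L} (hlt : v mu < v lam) {u z : n → L}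
    (hu : u ≠ 0) (hz : z ≠ 0) (hγu : (ρ γ).1 *ᵥ u = lam • u) (hγz : (ρ γ).1 *ᵥ z = mu • z) :
    X.rank < Fintype.card n := by
  have hlam : lam ≠ 0 := v.pos_iff.1 ((v.nonneg mu).trans_lt hlt)
  obtain ⟨j, hj : u j ≠ 0⟩ := Function.ne_iff.1 hu
  obtain ⟨y, hy⟩ : ∃ y : Ultralimit U fun _ ↦ v, IsUltralimit (fun N ↦ c N * lam ^ N) y := by
    have hcol := hX.2.mulVec (fun j ↦ isUltralimit_const v U (u j)) j
    refine ⟨_, (hcol.mul (isUltralimit_const v U (u j)⁻¹)).congr (Eventually.of_forall fun N ↦ ?_)⟩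
    rw [Matrix.smul_mulVec, pow_mulVec_eq_pow_smul hγu, Pi.smul_apply, Pi.smul_apply, smul_eq_mul,
      smul_eq_mul]
    field_simp
  have hratio : IsUltralimit (fun N ↦ (mu / lam) ^ N) (0 : Ultralimit U fun _ ↦ v) := by
    rw [IsUltralimit.zero_iff]
    have hlt_one : v (mu / lam) < 1 := by rwa [map_div₀, div_lt_one (v.pos hlam)]
    simpa [map_pow] using
      (tendsto_pow_atTop_nhds_zero_of_lt_one (v.nonneg _) hlt_one).mono_left hU
  have hXz : X *ᵥ (fun j ↦ constHom v U (z j)) = 0 := by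
    funext a
    have hcol := hX.2.mulVec (fun j ↦ isUltralimit_const v U (z j)) a
    have hzero := (hy.mul hratio).mul (isUltralimit_const v U (z a))
    rw [mul_zero, zero_mul] at hzero
    refine hcol.unique (hzero.congr (Eventually.of_forall fun N ↦ ?_))
    rw [Matrix.smul_mulVec, pow_mulVec_eq_pow_smul hγz, Pi.smul_apply, Pi.smul_apply, smul_eq_mul,
      smul_eq_mul, div_pow]
    field_simp
  refine rank_lt_card_of_mulVec_eq_zero (fun h0 ↦ hz (funext fun j ↦ ?_)) hXz
  exact (map_eq_zero (constHom v U)).1 (congrFun h0 j)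

end ScaledLimit

section ContractingPair

variable {ι L Γ n : Type*} [Field L] [Group Γ] [Fintype n] [DecidableEq n]
  {v : AbsoluteValue L ℝ} {U : Ultrafilter ι} {ρ : Γ →* GL n L}

variable (v U ρ) in
/-- The least rank of a nonzero limit of rescaled elements of the image of `ρ`. -/
noncomputable def minRank : ℕ :=
  sInf {r | ∃ (g : ι → Γ) (c : ι → L) (X : Matrix n n (Ultralimit U fun _ ↦ v)),
    IsScaledLimit ρ g c X ∧ X ≠ 0 ∧ X.rank = r}

theorem IsScaledLimit.minRank_le {g : ι → Γ} {c : ι → L} {X : Matrix n n (Ultralimit U fun _ ↦ v)}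
    (h : IsScaledLimit ρ g c X) (hX : X ≠ 0) : minRank v U ρ ≤ X.rank :=
  Nat.sInf_le ⟨g, c, X, h, hX, rfl⟩

variable (v U ρ) in
theorem exists_isScaledLimit_rank_eq_minRank [Nonempty n] :
    ∃ (g : ι → Γ) (c : ι → L) (X : Matrix n n (Ultralimit U fun _ ↦ v)),
      IsScaledLimit ρ g c X ∧ X ≠ 0 ∧ X.rank = minRank v U ρ := by
  have hne : {r | ∃ (g : ι → Γ) (c : ι → L) (X : Matrix n n (Ultralimit U fun _ ↦ v)),
      IsScaledLimit ρ g c X ∧ X ≠ 0 ∧ X.rank = r}.Nonempty :=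
    ⟨_, _, _, _, isScaledLimit_const v U ρ 1, (constRep v U ρ 1).ne_zero, rfl⟩
  exact Nat.sInf_mem hne

/-- The elements `s i` and their inverses, rescaled, converge to nonzero matrices `Q true` and
`Q false` of least rank. -/
structure IsContractingPair (s : ι → Γ) (c : Bool → ι → L)
    (Q : Bool → Matrix n n (Ultralimit U fun _ ↦ v)) : Prop where
  isScaledLimit : ∀ b, IsScaledLimit ρ (fun i ↦ cond b (s i) (s i)⁻¹) (c b) (Q b)
  rank_le : ∀ b, (Q b).rank ≤ minRank v U ρ
  ne_zero : ∀ b, Q b ≠ 0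

variable (hρ : ∀ Γ₀ : Subgroup Γ, Γ₀.FiniteIndex →
  ∀ B C : Matrix n n (Ultralimit U fun _ ↦ v), B ≠ 0 → C ≠ 0 →
    ∃ h ∈ Γ₀, B * (constRep v U ρ h).1 * C ≠ 0)

include hρ
-- If `X` is a limit of the rescaled `g i` and `Y` of their inverses, then `g i * h * (g i)⁻¹` and
-- its inverse converge to `X h Y` and `X h⁻¹ Y`, so the least rank is attained at both.
theorem exists_isContractingPair [Nonempty n] :
    ∃ (s : ι → Γ) (c : Bool → ι → L) (Q : Bool → Matrix n n (Ultralimit U fun _ ↦ v)),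
      IsContractingPair (ρ := ρ) s c Q := by
  obtain ⟨g, c, X, hX, hX0, hrank⟩ := exists_isScaledLimit_rank_eq_minRank v U ρ
  obtain ⟨c', Y, hY, hY0⟩ := exists_isScaledLimit v U ρ fun i ↦ (g i)⁻¹
  obtain ⟨h, hh⟩ := exists_forall_mul_mul_ne_zero (constRep v U ρ) hρ (ι := Unit)
    (fun _ ↦ hX0) fun _ ↦ hY0
  have hrank_le (k : Γ) : (X * (constRep v U ρ k).1 * Y).rank ≤ minRank v U ρ := by
    rw [← hrank, Matrix.mul_assoc]
    exact Matrix.rank_mul_le_left X _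
  refine ⟨fun i ↦ g i * h * (g i)⁻¹, fun _ i ↦ c i * 1 * c' i,
    fun b ↦ X * (constRep v U ρ (cond b h h⁻¹)).1 * Y, fun b ↦ ?_, fun b ↦ hrank_le _, ?_⟩
  · have heq : (fun i ↦ cond b (g i * h * (g i)⁻¹) (g i * h * (g i)⁻¹)⁻¹) =
        fun i ↦ g i * cond b h h⁻¹ * (g i)⁻¹ := by
      funext i
      cases b
      exacts [conj_inv, rfl]
    rw [heq]
    exact (hX.mul (isScaledLimit_const v U ρ _)).mul hY
  · rintro (_ | _)
    exacts [(hh ()).2, (hh ()).1]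

theorem IsContractingPair.exists_sq_ne_zero {s : ι → Γ} {c : Bool → ι → L}
    {Q : Bool → Matrix n n (Ultralimit U fun _ ↦ v)} (h : IsContractingPair (ρ := ρ) s c Q) :
    ∃ (s : ι → Γ) (c : Bool → ι → L) (Q : Bool → Matrix n n (Ultralimit U fun _ ↦ v)),
      IsContractingPair (ρ := ρ) s c Q ∧ ∀ b, Q b * Q b ≠ 0 := by
  obtain ⟨l, hl⟩ := exists_forall_mul_mul_ne_zero (constRep v U ρ) hρ h.ne_zero h.ne_zero
  have hsq (b : Bool) : (cond b (Q true * (constRep v U ρ l).1)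
      ((constRep v U ρ l⁻¹).1 * Q false)) * cond b (Q true * (constRep v U ρ l).1)
        ((constRep v U ρ l⁻¹).1 * Q false) ≠ 0 := by
    cases b
    · rw [cond_false, Matrix.mul_assoc, ← Matrix.mul_assoc (Q false), ne_eq,
        Units.mul_right_eq_zero]
      exact (hl false).2
    · rw [cond_true, ← Matrix.mul_assoc, ne_eq, Units.mul_left_eq_zero]
      exact (hl true).1
  refine ⟨fun i ↦ s i * l, fun b i ↦ cond b (c true i * 1) (1 * c false i), _, ⟨?_, ?_, ?_⟩, hsq⟩
  · rintro (_ | _)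
    · simp only [cond_false, _root_.mul_inv_rev]
      exact (isScaledLimit_const v U ρ l⁻¹).mul (h.isScaledLimit false)
    · exact (h.isScaledLimit true).mul (isScaledLimit_const v U ρ l)
  · rintro (_ | _)
    exacts [(Matrix.rank_mul_le_right _ _).trans (h.rank_le _),
      (Matrix.rank_mul_le_left _ _).trans (h.rank_le _)]
  · exact fun b h0 ↦ hsq b (by rw [h0, zero_mul])

theorem exists_forall_mulVec_ne_zero {κ : Type*} [Finite κ]
    {X : κ → Matrix n n (Ultralimit U fun _ ↦ v)} (hX : ∀ x, X x ≠ 0) [Nonempty n] :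
    ∃ p, ∀ x, X x *ᵥ p ≠ 0 := by
  obtain ⟨o⟩ := ‹Nonempty n›
  have hsingle : Matrix.single o o (1 : Ultralimit U fun _ ↦ v) ≠ 0 := fun h0 ↦
    one_ne_zero ((Matrix.single_apply_same o o _).symm.trans (congrFun (congrFun h0 o) o))
  obtain ⟨t, ht⟩ := exists_forall_mul_mul_ne_zero (constRep v U ρ) hρ hX fun _ ↦ hsingle
  refine ⟨(constRep v U ρ t).1 *ᵥ Pi.single o 1, fun x h0 ↦ (ht x).1 ?_⟩
  rw [Matrix.mulVec_mulVec, Matrix.mulVec_single_one] at h0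
  ext a b
  obtain rfl | hb := eq_or_ne b o
  · simpa using congrFun h0 a
  · exact Matrix.mul_single_apply_of_ne _ _ _ _ _ hb _

end ContractingPair

section FreePair

theorem exists_isPingPong {k n α : Type*} [Field k] [Fintype n] [Finite α] (v : AbsoluteValue k ℝ)
    {X : α × Bool → Matrix n n k} {Z : α × Bool → α × Bool → Matrix n n k} {p : n → k}
    (hZ : ∀ x y, y ≠ letterInv x → Z x y * X x * X y = X y) (hp : ∀ x, X x *ᵥ p ≠ 0) :
    ∃ δ, IsPingPong v X Z p δ := by
  have hsmall (r : ℝ) {s : ℝ} (hs : 0 < s) : ∀ᶠ δ : ℝ in 𝓝[>] 0, δ * r < s := by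
    have hcont : Tendsto (fun δ : ℝ ↦ δ * r) (𝓝 0) (𝓝 (0 * r)) :=
      (continuous_mul_const r).tendsto 0
    rw [zero_mul] at hcont
    exact (hcont.mono_left nhdsWithin_le_nhds).eventually (gt_mem_nhds hs)
  have hmat : ∀ᶠ δ : ℝ in 𝓝[>] 0, ∀ x y, δ * (2 * matNorm v (Z x y)) < 1 :=
    eventually_all.2 fun x ↦ eventually_all.2 fun y ↦ hsmall _ one_pos
  have hvec : ∀ᶠ δ : ℝ in 𝓝[>] 0, ∀ x, δ * vecNorm v p < vecNorm v (X x *ᵥ p) :=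
    eventually_all.2 fun x ↦ hsmall _ (vecNorm_pos v (hp x))
  obtain ⟨δ, ⟨hmat, hvec⟩, hδ : 0 < δ⟩ := ((hmat.and hvec).and self_mem_nhdsWithin).exists
  refine ⟨δ, hδ, fun x y hxy ↦ ?_, fun x y ↦ by linarith [hmat x y], hvec⟩
  rw [hZ x y hxy, sub_self]
  simpa [matNorm] using hδ

theorem letter_map {α G H : Type*} [Group G] [Group H] (f : G →* H) (a : α → G) (x : α × Bool) :
    letter (fun j ↦ f (a j)) x = f (letter a x) := by
  obtain ⟨j, _ | _⟩ := x
  exacts [(map_inv f _).symm, rfl]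

variable {ι L Γ n α : Type*} [Field L] [Group Γ] [Fintype n] [DecidableEq n]
  {v : AbsoluteValue L ℝ} {U : Ultrafilter ι} {ρ : Γ →* GL n L}

theorem letter_conj (l : α → Γ) (s : Γ) (x : α × Bool) :
    letter (fun j ↦ l j * s * (l j)⁻¹) x = l x.1 * cond x.2 s s⁻¹ * (l x.1)⁻¹ := by
  obtain ⟨j, _ | _⟩ := x
  exacts [conj_inv, rfl]

theorem conj_mul_conj_ne_zero {Q : Bool → Matrix n n L} {l : α → Γ} (hsq : ∀ b, Q b * Q b ≠ 0)
    (hl : ∀ i j, i ≠ j → ∀ b b', Q b * (ρ ((l i)⁻¹ * l j)).1 * Q b' ≠ 0) {x y : α × Bool}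
    (hxy : y ≠ letterInv x) :
    (ρ (l x.1)).1 * Q x.2 * (ρ (l x.1)⁻¹).1 * ((ρ (l y.1)).1 * Q y.2 * (ρ (l y.1)⁻¹).1) ≠ 0 := by
  have hassoc : (ρ (l x.1)).1 * Q x.2 * (ρ (l x.1)⁻¹).1 *
      ((ρ (l y.1)).1 * Q y.2 * (ρ (l y.1)⁻¹).1) =
      (ρ (l x.1)).1 * (Q x.2 * (ρ ((l x.1)⁻¹ * l y.1)).1 * Q y.2 * (ρ (l y.1)⁻¹).1) := by
    simp only [map_mul, Units.val_mul, Matrix.mul_assoc]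
  rw [hassoc, ne_eq, Units.mul_right_eq_zero, Units.mul_left_eq_zero]
  obtain ⟨i, b⟩ := x
  obtain ⟨j, b'⟩ := y
  obtain rfl | hij := eq_or_ne i j
  · obtain rfl : b' = b := by simpa [letterInv] using hxy
    simpa using hsq b'
  · exact hl i j hij b b'

variable [Finite α]

theorem eventually_pingPongCertificate_of_isScaledLimit {a : ι → α → Γ} {c : α × Bool → ι → L}
    {X : α × Bool → Matrix n n (Ultralimit U fun _ ↦ v)} {p : n → Ultralimit U fun _ ↦ v}
    (hX : ∀ x, IsScaledLimit ρ (fun i ↦ letter (a i) x) (c x) (X x))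
    (hrank : ∀ x, (X x).rank ≤ minRank v U ρ) (hlt : minRank v U ρ < Fintype.card n)
    (hmul : ∀ x y, y ≠ letterInv x → X x * X y ≠ 0) (hp : ∀ x, X x *ᵥ p ≠ 0) :
    ∀ᶠ i in (U : Filter ι), PingPongCertificate v fun j ↦ ρ (a i j) := by
  have hZ (x y : α × Bool) : ∃ Z, y ≠ letterInv x → Z * X x * X y = X y := by
    by_cases hxy : y = letterInv x
    · exact ⟨0, fun h ↦ absurd hxy h⟩
    · obtain ⟨Z, hZ⟩ := exists_mul_mul_eq_of_rank_le (X x) (X y)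
        ((hrank y).trans (((hX x).mul (hX y)).minRank_le (hmul x y hxy)))
      exact ⟨Z, fun _ ↦ hZ⟩
  choose Z hZ using hZ
  obtain ⟨δ, hδ⟩ := exists_isPingPong (ultralimitAbs U fun _ ↦ v) hZ hp
  have hscale (x : α × Bool) :
      IsUltralimit (fun i ↦ c x i * c (letterInv x) i) (0 : Ultralimit U fun _ ↦ v) := by
    refine (hX x).isUltralimit_mul_zero (Y := X (letterInv x)) ?_
      (det_eq_zero_of_rank_lt_card ((hrank x).trans_lt hlt))
    simpa only [letter_letterInv] using hX (letterInv x)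
  refine hδ.eventually_certificate (c := fun i x ↦ c x i) (fun x ↦ ?_)
    (fun x ↦ Eventually.of_forall fun i ↦ (hX x).ne_zero i)
    fun x ↦ (IsUltralimit.zero_iff.1 (hscale x)).eventually (gt_mem_nhds (pow_pos hδ.pos 2))
  simpa only [scaledLetter, letter_map] using (hX x).isMatrixUltralimit

-- Two conjugates of a contracting sequence by transverse elements play ping-pong.
theorem exists_pingPongCertificate_of_minRank_lt (hρ : ∀ Γ₀ : Subgroup Γ, Γ₀.FiniteIndex →
      ∀ B C : Matrix n n (Ultralimit U fun _ ↦ v), B ≠ 0 → C ≠ 0 →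
        ∃ h ∈ Γ₀, B * (constRep v U ρ h).1 * C ≠ 0) (hlt : minRank v U ρ < Fintype.card n) :
    ∃ a : Fin 2 → Γ, PingPongCertificate v fun j ↦ ρ (a j) := by
  have : Nonempty n := Fintype.card_pos_iff.1 (by lia)
  obtain ⟨_, _, _, hpair⟩ := exists_isContractingPair hρ
  obtain ⟨s, c, Q, hQ, hsq⟩ := hpair.exists_sq_ne_zero hρ
  obtain ⟨t, ht⟩ := exists_forall_mul_mul_ne_zero (constRep v U ρ) hρ (ι := Bool × Bool)
    (fun x ↦ hQ.ne_zero x.1) fun x ↦ hQ.ne_zero x.2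
  let l : Fin 2 → Γ := ![1, t]
  have hl : ∀ i j, i ≠ j → ∀ b b', Q b * (constRep v U ρ ((l i)⁻¹ * l j)).1 * Q b' ≠ 0 := by
    intro i j hij b b'
    fin_cases i <;> fin_cases j
    · exact absurd rfl hij
    · simpa [l] using (ht (b, b')).1
    · simpa [l] using (ht (b, b')).2
    · exact absurd rfl hij
  let X : Fin 2 × Bool → Matrix n n (Ultralimit U fun _ ↦ v) := fun x ↦
    (constRep v U ρ (l x.1)).1 * Q x.2 * (constRep v U ρ (l x.1)⁻¹).1
  have hmul (x y : Fin 2 × Bool) (hxy : y ≠ letterInv x) : X x * X y ≠ 0 :=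
    conj_mul_conj_ne_zero hsq hl hxy
  have hX (x : Fin 2 × Bool) : X x ≠ 0 := fun h0 ↦
    hmul x x (by simp [letterInv, Prod.ext_iff]) (by rw [h0, zero_mul])
  obtain ⟨p, hp⟩ := exists_forall_mulVec_ne_zero hρ hX
  have hlim (x : Fin 2 × Bool) : IsScaledLimit ρ (fun i ↦ letter (fun j ↦ l j * s i * (l j)⁻¹) x)
      (fun i ↦ 1 * c x.2 i * 1) (X x) := by
    simp only [letter_conj]
    exact ((isScaledLimit_const v U ρ _).mul (hQ.isScaledLimit x.2)).mul
      (isScaledLimit_const v U ρ _)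
  have hrank (x : Fin 2 × Bool) : (X x).rank ≤ minRank v U ρ :=
    (Matrix.rank_mul_le_left _ _).trans ((Matrix.rank_mul_le_right _ _).trans (hQ.rank_le x.2))
  obtain ⟨i, hi⟩ :=
    (eventually_pingPongCertificate_of_isScaledLimit hlim hrank hlt hmul hp).exists
  exact ⟨_, hi⟩

theorem exists_pingPongCertificate_of_eigenvectors
    (hspan : ∀ Γ₀ : Subgroup Γ, Γ₀.FiniteIndex →
      Submodule.span L ((fun g ↦ (ρ g).1) '' (Γ₀ : Set Γ)) = ⊤)
    {γ : Γ} {lam mu : L} (hlt : v mu < v lam) {u z : n → L} (hu : u ≠ 0) (hz : z ≠ 0)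
    (hγu : (ρ γ).1 *ᵥ u = lam • u) (hγz : (ρ γ).1 *ᵥ z = mu • z) :
    ∃ a : Fin 2 → Γ, PingPongCertificate v fun j ↦ ρ (a j) := by
  have : Nonempty n := (Function.ne_iff.1 hu).nonempty
  have hU : (hyperfilter ℕ : Filter ℕ) ≤ atTop :=
    hyperfilter_le_cofinite.trans Nat.cofinite_eq_atTop.le
  obtain ⟨c, X, hX, hX0⟩ := exists_isScaledLimit v (hyperfilter ℕ) ρ fun N ↦ γ ^ N
  refine exists_pingPongCertificate_of_minRank_lt (U := hyperfilter ℕ) (fun Γ₀ hΓ₀ B C hB hC ↦ ?_)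
    ((hX.minRank_le hX0).trans_lt (hX.rank_lt_card_of_eigenvectors hU hlt hu hz hγu hγz))
  obtain ⟨_, ⟨h, hh, rfl⟩, hne⟩ :=
    exists_mem_mul_map_mul_ne_zero (constHom v (hyperfilter ℕ)) (hspan Γ₀ hΓ₀) hB hC
  exact ⟨h, hh, hne⟩

end FreePair

/-! ### Systems of places -/

/-- A finite nonempty family of algebraically closed normed fields, playing the role of the
completions of a global field at the places under consideration. -/
structure PlaceFamily where
  Place : Type
  Completion : Place → Type
  [fintypePlace : Fintype Place]
  [nonemptyPlace : Nonempty Place]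
  [normedField : ∀ w, NormedField (Completion w)]
  [isAlgClosed : ∀ w, IsAlgClosed (Completion w)]

attribute [instance] PlaceFamily.fintypePlace PlaceFamily.nonemptyPlace
  PlaceFamily.normedField PlaceFamily.isAlgClosed

/-- Families `τ` of homomorphisms from `A` to the completions which can be chosen injective on any
given finite set and satisfy, uniformly in `τ`, one half of the product formula and the Northcott
finiteness property. Several `τ` are allowed because polynomial rings are specialised. -/
structure BasePlaceSystem (A : Type*) [CommRing A] extends PlaceFamily where
  homs : Set (∀ w, A →+* Completion w)
  exists_forall_ne_zero : ∀ X : Set A, X.Finite → (∀ x ∈ X, x ≠ 0) →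
    ∃ τ ∈ homs, ∀ x ∈ X, ∀ w, τ w x ≠ 0
  one_le_prod_norm : ∀ τ ∈ homs, ∀ a, (∀ w, τ w a ≠ 0) → 1 ≤ ∏ w, ‖τ w a‖
  finite_values : ∀ (B : ℝ) (w),
    {z | ∃ τ ∈ homs, ∃ a, (∀ w', ‖τ w' a‖ ≤ B) ∧ τ w a = z}.Finite

/-- The analogue of `BasePlaceSystem` for an integral extension: a member `Ψ w` of the system
consists of all the extensions of one homomorphism of the base ring, and the product formula takes
the form of a Liouville inequality with a uniform exponent. -/
structure PlaceSystem (R : Type*) [CommRing R] extends PlaceFamily where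
  exponent : ℕ
  homSets : Set (∀ w, Set (R →+* Completion w))
  nonempty_of_mem : ∀ Ψ ∈ homSets, ∀ w, (Ψ w).Nonempty
  exists_forall_ne_zero : ∀ X : Set R, X.Finite → (∀ x ∈ X, x ≠ 0) →
    ∃ Ψ ∈ homSets, ∀ x ∈ X, ∀ w, ∀ ψ ∈ Ψ w, ψ x ≠ 0
  one_le_norm_mul_pow : ∀ Ψ ∈ homSets, ∀ x, (∀ w, ∀ ψ ∈ Ψ w, ψ x ≠ 0) → ∀ B : ℝ, 1 ≤ B →
    (∀ w, ∀ ψ ∈ Ψ w, ‖ψ x‖ ≤ B) → ∀ w, ∀ ψ ∈ Ψ w, 1 ≤ ‖ψ x‖ * B ^ exponent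
  finite_values : ∀ (B : ℝ) (w),
    {z | ∃ Ψ ∈ homSets, ∃ x, (∀ w', ∀ ψ ∈ Ψ w', ‖ψ x‖ ≤ B) ∧ ∃ ψ ∈ Ψ w, ψ x = z}.Finite
  exists_norm_le : ∀ Ψ ∈ homSets, ∀ x, ∃ B : ℝ, ∀ w, ∀ ψ ∈ Ψ w, ‖ψ x‖ ≤ B

/-! ### Extending homomorphisms to integral extensions -/

theorem exists_comp_eq_of_isIntegral_of_injective {D S C : Type*} [CommRing D] [IsDomain D]
    [CommRing S] [IsDomain S] [Field C] [IsAlgClosed C] {i : D →+* S} (hi : Function.Injective i)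
    (hint : i.IsIntegral) {j : D →+* C} (hj : Function.Injective j) :
    ∃ φ : S →+* C, φ.comp i = j := by
  algebraize [i, j]
  have : Module.IsTorsionFree D S := Module.isTorsionFree_iff_algebraMap_injective.2 hi
  have : Module.IsTorsionFree D C := Module.isTorsionFree_iff_algebraMap_injective.2 hj
  have : Algebra.IsIntegral D S := ⟨hint⟩
  exact ⟨(IsAlgClosed.lift : S →ₐ[D] C).toRingHom,
    RingHom.ext (IsAlgClosed.lift : S →ₐ[D] C).commutes⟩

theorem exists_comp_eq_of_isIntegral {B R C : Type*} [CommRing B] [CommRing R] [Field C]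
    [IsAlgClosed C] {f : B →+* R} (hf : f.IsIntegral) {g : B →+* C}
    (hker : RingHom.ker f ≤ RingHom.ker g) : ∃ ψ : R →+* C, ψ.comp f = g := by
  obtain ⟨Q, hQprime, hQ⟩ : ∃ Q : Ideal R, Q.IsPrime ∧ Q.comap f = RingHom.ker g := by
    algebraize [f]
    have : Algebra.IsIntegral B R := ⟨hf⟩
    have : (RingHom.ker g).IsPrime := RingHom.ker_isPrime g
    obtain ⟨Q, -, hQprime, hQ⟩ :=
      Ideal.exists_ideal_over_prime_of_isIntegral (RingHom.ker g) (⊥ : Ideal R) hker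
    exact ⟨Q, hQprime, hQ⟩
  have : (Q.comap f).IsPrime := hQprime.comap f
  have hj : Function.Injective (Ideal.Quotient.lift (Q.comap f) g hQ.le) :=
    Ideal.injective_lift_iff hQ.le |>.2 hQ.symm
  obtain ⟨φ, hφ⟩ := exists_comp_eq_of_isIntegral_of_injective
    (i := Ideal.quotientMap Q f le_rfl) Ideal.quotientMap_injective hf.quotient hj
  exact ⟨φ.comp (Ideal.Quotient.mk Q),
    RingHom.ext fun b ↦ RingHom.congr_fun hφ (Ideal.Quotient.mk _ b)⟩

theorem norm_multiset_prod_le_pow {C : Type*} [NormedField C] {B : ℝ} (hB : 1 ≤ B)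
    {s : Multiset C} {D : ℕ} (hs : ∀ z ∈ s, ‖z‖ ≤ B) (hcard : s.card ≤ D) : ‖s.prod‖ ≤ B ^ D := by
  refine le_trans ?_ (pow_le_pow_right₀ hB hcard)
  clear hcard
  induction s using Multiset.induction with
  | empty => simp
  | cons a s ih =>
    rw [Multiset.prod_cons, norm_mul, Multiset.card_cons, pow_succ']
    gcongr
    · exact hs a (Multiset.mem_cons_self a s)
    · exact ih fun z hz ↦ hs z (Multiset.mem_cons_of_mem hz)

section Lift

variable {A R C : Type*} [CommRing A] [CommRing R] [Algebra A R]

/-- The extensions to `R` of a homomorphism defined on `A`. -/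
def homExtensions (R : Type*) [CommRing R] [Algebra A R] [Semiring C] (τ : A →+* C) :
    Set (R →+* C) :=
  {ψ | ψ.comp (algebraMap A R) = τ}

theorem homExtensions_nonempty [Algebra.IsIntegral A R] [FaithfulSMul A R] [Field C]
    [IsAlgClosed C] (τ : A →+* C) : (homExtensions R τ).Nonempty :=
  exists_comp_eq_of_isIntegral (algebraMap_isIntegral_iff.2 inferInstance) <| by
    rw [(RingHom.injective_iff_ker_eq_bot _).1 (FaithfulSMul.algebraMap_injective A R)]
    exact bot_le

theorem isRoot_map_minpoly [CommRing C] {τ : A →+* C} {ψ : R →+* C} (hψ : ψ ∈ homExtensions R τ)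
    (x : R) : ((minpoly A x).map τ).IsRoot (ψ x) := by
  rw [Polynomial.IsRoot, Polynomial.eval_map, ← Set.mem_ofPred.1 hψ, ← Polynomial.hom_eval₂,
    ← Polynomial.aeval_def, minpoly.aeval, map_zero]

theorem card_roots_map_minpoly_le [Module.Finite A R] [Field C] [IsAlgClosed C]
    (τ : A →+* C) (x : R) :
    ((minpoly A x).map τ).roots.card ≤ (⊤ : Submodule A R).spanFinrank := by
  rw [← (IsAlgClosed.splits ((minpoly A x).map τ)).natDegree_eq_card_roots,
    (minpoly.monic (Algebra.IsIntegral.isIntegral x)).natDegree_map]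
  exact minpoly.natDegree_le_spanFinrank A x

theorem norm_map_coeff_zero_minpoly [Algebra.IsIntegral A R] [NormedField C]
    [IsAlgClosed C] (τ : A →+* C) (x : R) :
    ‖τ ((minpoly A x).coeff 0)‖ = ‖((minpoly A x).map τ).roots.prod‖ := by
  have h := (IsAlgClosed.splits ((minpoly A x).map τ)).coeff_zero_eq_prod_roots_of_monic
    ((minpoly.monic (Algebra.IsIntegral.isIntegral x)).map _)
  rw [Polynomial.coeff_map] at h
  simp [h]

variable [IsDomain A] [IsIntegrallyClosed A] [IsDomain R] [Algebra.IsIntegral A R]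
  [Module.IsTorsionFree A R]

theorem exists_mem_homExtensions_apply_eq [Field C] [IsAlgClosed C] {τ : A →+* C} {x : R} {z : C}
    (hz : ((minpoly A x).map τ).IsRoot z) : ∃ ψ ∈ homExtensions R τ, ψ x = z := by
  have hker : RingHom.ker (Polynomial.aeval (R := A) x).toRingHom ≤
      RingHom.ker (Polynomial.eval₂RingHom τ z) := fun p hp ↦ by
    obtain ⟨q, rfl⟩ := minpoly.isIntegrallyClosed_dvd (Algebra.IsIntegral.isIntegral x) hp
    have hroot : Polynomial.eval₂ τ z (minpoly A x) = 0 := by rwa [← Polynomial.eval_map]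
    rw [RingHom.mem_ker, map_mul, Polynomial.coe_eval₂RingHom, hroot, zero_mul]
  have hint : (Polynomial.aeval (R := A) x).toRingHom.IsIntegral := by
    refine RingHom.IsIntegral.tower_top (Polynomial.C : A →+* _) _ ?_
    convert (algebraMap_isIntegral_iff (R := A) (A := R)).2 inferInstance using 1
    ext a
    simp
  obtain ⟨ψ, hψ⟩ := exists_comp_eq_of_isIntegral hint hker
  refine ⟨ψ, RingHom.ext fun a ↦ ?_, ?_⟩
  · simpa using RingHom.congr_fun hψ (Polynomial.C a)
  · simpa using RingHom.congr_fun hψ Polynomial.X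

theorem mem_roots_map_minpoly_iff [Field C] [IsAlgClosed C] {τ : A →+* C} {x : R} {z : C} :
    z ∈ ((minpoly A x).map τ).roots ↔ ∃ ψ ∈ homExtensions R τ, ψ x = z := by
  rw [Polynomial.mem_roots ((minpoly.monic (Algebra.IsIntegral.isIntegral x)).map τ).ne_zero]
  exact ⟨exists_mem_homExtensions_apply_eq, fun ⟨ψ, hψ, hz⟩ ↦ hz ▸ isRoot_map_minpoly hψ x⟩

theorem minpoly_coeff_zero_ne_zero {x : R} (hx : x ≠ 0) : (minpoly A x).coeff 0 ≠ 0 := by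
  intro h0
  have hx_int : IsIntegral A x := Algebra.IsIntegral.isIntegral x
  obtain ⟨q, hq⟩ := Polynomial.X_dvd_iff.2 h0
  have hdvd := minpoly.isIntegrallyClosed_dvd hx_int (p := q) <| by
    have hroot := minpoly.aeval A x
    rw [hq, map_mul, Polynomial.aeval_X] at hroot
    exact (mul_eq_zero.1 hroot).resolve_left hx
  have hq0 : q ≠ 0 := right_ne_zero_of_mul (hq ▸ minpoly.ne_zero hx_int)
  have hdeg := Polynomial.natDegree_le_of_dvd hdvd hq0
  rw [hq, Polynomial.natDegree_X_mul hq0] at hdeg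
  omega

theorem exists_forall_homExtensions_norm_le [NormedField C] [IsAlgClosed C]
    (τ : A →+* C) (x : R) :
    ∃ B : ℝ, ∀ ψ ∈ homExtensions R τ, ‖ψ x‖ ≤ B := by
  classical
  obtain ⟨B, hB⟩ := (((minpoly A x).map τ).roots.toFinset.finite_toSet.image norm).bddAbove
  exact ⟨B, fun ψ hψ ↦ hB ⟨ψ x,
    Multiset.mem_toFinset.2 (mem_roots_map_minpoly_iff.2 ⟨ψ, hψ, rfl⟩), rfl⟩⟩

variable [Module.Finite A R] [NormedField C] [IsAlgClosed C] {τ : A →+* C} {x : R} {B : ℝ}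

theorem norm_map_coeff_zero_minpoly_le (hB : 1 ≤ B) (hx : ∀ ψ ∈ homExtensions R τ, ‖ψ x‖ ≤ B) :
    ‖τ ((minpoly A x).coeff 0)‖ ≤ B ^ (⊤ : Submodule A R).spanFinrank := by
  rw [norm_map_coeff_zero_minpoly]
  refine norm_multiset_prod_le_pow hB (fun z hz ↦ ?_) (card_roots_map_minpoly_le τ x)
  obtain ⟨ψ, hψ, rfl⟩ := mem_roots_map_minpoly_iff.1 hz
  exact hx ψ hψ

theorem norm_map_coeff_zero_minpoly_le_mul (hB : 1 ≤ B)
    (hx : ∀ ψ ∈ homExtensions R τ, ‖ψ x‖ ≤ B) {ψ : R →+* C} (hψ : ψ ∈ homExtensions R τ) :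
    ‖τ ((minpoly A x).coeff 0)‖ ≤ ‖ψ x‖ * B ^ (⊤ : Submodule A R).spanFinrank := by
  obtain ⟨s, hs⟩ := Multiset.exists_cons_of_mem (mem_roots_map_minpoly_iff.2 ⟨ψ, hψ, rfl⟩)
  have hcard := card_roots_map_minpoly_le τ x
  rw [hs, Multiset.card_cons] at hcard
  rw [norm_map_coeff_zero_minpoly, hs, Multiset.prod_cons, norm_mul]
  refine mul_le_mul_of_nonneg_left
    (norm_multiset_prod_le_pow hB (fun z hz ↦ ?_) (by omega)) (norm_nonneg _)
  obtain ⟨ψ', hψ', rfl⟩ := mem_roots_map_minpoly_iff.1 (hs ▸ Multiset.mem_cons_of_mem hz)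
  exact hx ψ' hψ'

theorem norm_map_coeff_minpoly_le (hB : 1 ≤ B) (hx : ∀ ψ ∈ homExtensions R τ, ‖ψ x‖ ≤ B)
    (i : ℕ) : ‖τ ((minpoly A x).coeff i)‖ ≤
      B ^ (⊤ : Submodule A R).spanFinrank * 2 ^ (⊤ : Submodule A R).spanFinrank := by
  have hdeg := minpoly.natDegree_le_spanFinrank A x
  rw [← Polynomial.coeff_map]
  refine (Polynomial.coeff_le_of_roots_le (B := B) i
    (minpoly.monic (Algebra.IsIntegral.isIntegral x)) (IsAlgClosed.splits _)
    fun z hz ↦ ?_).trans ?_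
  · obtain ⟨ψ, hψ, rfl⟩ := mem_roots_map_minpoly_iff.1 hz
    exact hx ψ hψ
  · gcongr ?_ * ?_
    · exact pow_le_pow_right₀ hB (by omega)
    · exact_mod_cast (Nat.choose_le_two_pow _ i).trans (Nat.pow_le_pow_right two_pos hdeg)

end Lift

namespace BasePlaceSystem

variable {A R : Type*} [CommRing A] [IsDomain A] [IsIntegrallyClosed A] [CommRing R] [IsDomain R]
  [Algebra A R] [Module.Finite A R] [Module.IsTorsionFree A R] (b : BasePlaceSystem A)

theorem exists_forall_homExtensions_ne_zero {X : Set R} (hX : X.Finite) (hX0 : ∀ x ∈ X, x ≠ 0) :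
    ∃ τ ∈ b.homs, ∀ x ∈ X, ∀ w, ∀ ψ ∈ homExtensions R (τ w), ψ x ≠ 0 := by
  obtain ⟨τ, hτ, hne⟩ := b.exists_forall_ne_zero ((fun x ↦ (minpoly A x).coeff 0) '' X)
    (hX.image _) (by rintro _ ⟨x, hx, rfl⟩; exact minpoly_coeff_zero_ne_zero (hX0 x hx))
  refine ⟨τ, hτ, fun x hx w ψ hψ h0 ↦ hne _ ⟨x, hx, rfl⟩ w ?_⟩
  have hroot := isRoot_map_minpoly hψ x
  rwa [h0, Polynomial.IsRoot, ← Polynomial.coeff_zero_eq_eval_zero, Polynomial.coeff_map] at hroot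

theorem one_le_norm_mul_pow {τ : ∀ w, A →+* b.Completion w} (hτ : τ ∈ b.homs) {x : R}
    (hx0 : ∀ w, ∀ ψ ∈ homExtensions R (τ w), ψ x ≠ 0) {B : ℝ} (hB : 1 ≤ B)
    (hx : ∀ w, ∀ ψ ∈ homExtensions R (τ w), ‖ψ x‖ ≤ B) {w₀ : b.Place} {ψ : R →+* b.Completion w₀}
    (hψ : ψ ∈ homExtensions R (τ w₀)) :
    1 ≤ ‖ψ x‖ * B ^ ((⊤ : Submodule A R).spanFinrank * Fintype.card b.Place) := by
  classical
  set D := (⊤ : Submodule A R).spanFinrank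
  have hne : ∀ w, τ w ((minpoly A x).coeff 0) ≠ 0 := fun w ↦ by
    rw [← norm_ne_zero_iff, norm_map_coeff_zero_minpoly, norm_ne_zero_iff]
    intro h
    obtain ⟨ψ, hψ, h0⟩ := mem_roots_map_minpoly_iff.1 (Multiset.prod_eq_zero_iff.1 h)
    exact hx0 w ψ hψ h0
  have hcard : Fintype.card b.Place = (Finset.univ.erase w₀).card + 1 :=
    (Finset.card_erase_add_one (Finset.mem_univ w₀)).symm
  calc 1 ≤ ∏ w, ‖τ w ((minpoly A x).coeff 0)‖ := b.one_le_prod_norm τ hτ _ hne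
    _ = ‖τ w₀ ((minpoly A x).coeff 0)‖ *
        ∏ w ∈ Finset.univ.erase w₀, ‖τ w ((minpoly A x).coeff 0)‖ :=
      (Finset.mul_prod_erase _ _ (Finset.mem_univ w₀)).symm
    _ ≤ ‖ψ x‖ * B ^ D * (B ^ D) ^ (Finset.univ.erase w₀).card := by
      gcongr
      · exact norm_map_coeff_zero_minpoly_le_mul hB (hx w₀) hψ
      · exact (Finset.prod_le_prod (fun _ _ ↦ norm_nonneg _)
          fun w _ ↦ norm_map_coeff_zero_minpoly_le hB (hx w)).trans_eq (Finset.prod_const _)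
    _ = ‖ψ x‖ * B ^ (D * Fintype.card b.Place) := by rw [hcard]; ring

theorem finite_values_homExtensions (B : ℝ) (w : b.Place) :
    {z | ∃ τ ∈ b.homs, ∃ x : R, (∀ w', ∀ ψ ∈ homExtensions R (τ w'), ‖ψ x‖ ≤ B) ∧
      ∃ ψ ∈ homExtensions R (τ w), ψ x = z}.Finite := by
  classical
  set D := (⊤ : Submodule A R).spanFinrank
  refine (Polynomial.bUnion_roots_finite (RingHom.id _) D
    (b.finite_values ((max 1 B) ^ D * 2 ^ D) w)).subset ?_
  rintro z ⟨τ, hτ, x, hx, hz⟩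
  simp only [Set.mem_iUnion, Polynomial.map_id]
  refine ⟨(minpoly A x).map (τ w), ⟨?_, fun i ↦ ⟨τ, hτ, (minpoly A x).coeff i, fun w' ↦ ?_, ?_⟩⟩,
    Multiset.mem_toFinset.2 (mem_roots_map_minpoly_iff.2 hz)⟩
  · rw [(minpoly.monic (Algebra.IsIntegral.isIntegral x)).natDegree_map]
    exact minpoly.natDegree_le_spanFinrank A x
  · exact norm_map_coeff_minpoly_le (le_max_left 1 B)
      (fun ψ hψ ↦ (hx w' ψ hψ).trans (le_max_right 1 B)) i
  · rw [Polynomial.coeff_map]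

/-- The place system formed by the extensions to `R` of the homomorphisms of a system on `A`. -/
noncomputable def lift (b : BasePlaceSystem A) (R : Type*) [CommRing R] [IsDomain R] [Algebra A R]
    [Module.Finite A R] [Module.IsTorsionFree A R] : PlaceSystem R where
  __ := b.toPlaceFamily
  exponent := (⊤ : Submodule A R).spanFinrank * Fintype.card b.Place
  homSets := (fun τ w ↦ homExtensions R (τ w)) '' b.homs
  nonempty_of_mem := by
    rintro _ ⟨τ, -, rfl⟩ w
    exact homExtensions_nonempty (τ w)
  exists_forall_ne_zero X hX hX0 := by
    obtain ⟨τ, hτ, hne⟩ := b.exists_forall_homExtensions_ne_zero hX hX0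
    exact ⟨_, ⟨τ, hτ, rfl⟩, hne⟩
  one_le_norm_mul_pow := by
    rintro _ ⟨τ, hτ, rfl⟩ x hx0 B hB hx w ψ hψ
    exact b.one_le_norm_mul_pow hτ hx0 hB hx hψ
  finite_values B w := by
    refine (b.finite_values_homExtensions (R := R) B w).subset ?_
    rintro z ⟨_, ⟨τ, hτ, rfl⟩, h⟩
    exact ⟨τ, hτ, h⟩
  exists_norm_le := by
    rintro _ ⟨τ, -, rfl⟩ x
    choose B hB using fun w ↦ exists_forall_homExtensions_norm_le (τ w) x
    obtain ⟨M, hM⟩ := (Set.finite_range B).bddAbove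
    exact ⟨M, fun w ψ hψ ↦ (hB w ψ hψ).trans (hM ⟨w, rfl⟩)⟩

end BasePlaceSystem

/-! ### Place systems on polynomial rings and on localisations of the integers -/

/-- The specialisations of a polynomial ring over a subring of `O`, followed by the homomorphisms
of a system on `O`. -/
def BasePlaceSystem.mvPolynomial {A O : Type*} [CommRing A] [CommRing O] [IsDomain O] [Infinite O]
    (b : BasePlaceSystem O) (σ : Type*) {φ : A →+* O} (hφ : Function.Injective φ) :
    BasePlaceSystem (MvPolynomial σ A) where
  __ := b.toPlaceFamily
  homs := {τ' | ∃ τ ∈ b.homs, ∃ z : σ → O, τ' = fun w ↦ (τ w).comp (MvPolynomial.eval₂Hom φ z)}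
  exists_forall_ne_zero X hX hX0 := by
    classical
    have hprod : ∏ x ∈ hX.toFinset, MvPolynomial.map φ x ≠ 0 :=
      Finset.prod_ne_zero_iff.2 fun x hx ↦ (map_ne_zero_iff _ (MvPolynomial.map_injective φ hφ)).2
        (hX0 x (hX.mem_toFinset.1 hx))
    obtain ⟨z, hz⟩ : ∃ z : σ → O,
        MvPolynomial.eval z (∏ x ∈ hX.toFinset, MvPolynomial.map φ x) ≠ 0 := by
      by_contra! h
      exact hprod (MvPolynomial.funext fun z ↦ by rw [h z, map_zero])
    rw [map_prod, Finset.prod_ne_zero_iff] at hz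
    obtain ⟨τ, hτ, h⟩ := b.exists_forall_ne_zero (MvPolynomial.eval₂Hom φ z '' X) (hX.image _) (by
      rintro _ ⟨x, hx, rfl⟩
      rw [MvPolynomial.coe_eval₂Hom, ← MvPolynomial.eval_map]
      exact hz x (hX.mem_toFinset.2 hx))
    exact ⟨_, ⟨τ, hτ, z, rfl⟩, fun x hx w ↦ h _ ⟨x, hx, rfl⟩ w⟩
  one_le_prod_norm := by
    rintro _ ⟨τ, hτ, z, rfl⟩ a ha
    exact b.one_le_prod_norm τ hτ _ ha
  finite_values B w := by
    refine (b.finite_values B w).subset ?_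
    rintro x ⟨_, ⟨τ, hτ, z, rfl⟩, a, ha, rfl⟩
    exact ⟨τ, hτ, _, ha, rfl⟩

/-- The absolute value `2 ^ deg` on rational functions. -/
noncomputable def degreeAbs (F : Type*) [Field F] : AbsoluteValue (RatFunc F) ℝ where
  toFun r := open Classical in if r = 0 then 0 else (2 : ℝ) ^ r.intDegree
  map_mul' x y := by
    by_cases hx : x = 0
    · simp [hx]
    by_cases hy : y = 0
    · simp [hy]
    simp only [hx, hy, mul_eq_zero, or_self, if_false]
    rw [RatFunc.intDegree_mul hx hy, zpow_add₀ two_ne_zero]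
  nonneg' x := by
    split_ifs
    · rfl
    · positivity
  eq_zero' x := by
    split_ifs with h
    · simp only [h]
    · simp only [h, iff_false]
      positivity
  add_le' x y := by
    by_cases hx : x = 0
    · subst hx
      rw [zero_add]
      simp
    by_cases hy : y = 0
    · subst hy
      rw [add_zero]
      simp
    by_cases hxy : x + y = 0
    · simp only [hxy, if_true, hx, hy, if_false]
      positivity
    simp only [hx, hy, hxy, if_false]
    have hx_pos : (0 : ℝ) < 2 ^ x.intDegree := by positivity
    have hy_pos : (0 : ℝ) < 2 ^ y.intDegree := by positivity
    rcases le_max_iff.1 (RatFunc.intDegree_add_le hy hxy) with h | h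
    · linarith [zpow_le_zpow_right₀ (one_le_two (α := ℝ)) h]
    · linarith [zpow_le_zpow_right₀ (one_le_two (α := ℝ)) h]

theorem degreeAbs_algebraMap {F : Type*} [Field F] {q : Polynomial F} (hq : q ≠ 0) :
    degreeAbs F (algebraMap _ (RatFunc F) q) = (2 : ℝ) ^ q.natDegree := by
  classical
  change (if _ then _ else _) = _
  rw [if_neg (by simpa using hq), RatFunc.intDegree_polynomial, zpow_natCast]

universe u

theorem exists_isAlgClosed_norm_preserving (F : Type u) [NontriviallyNormedField F]
    [CompleteSpace F] [IsUltrametricDist F] : ∃ (C : Type u) (_ : NormedField C)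
      (_ : IsAlgClosed C) (f : F →+* C), ∀ x, ‖f x‖ = ‖x‖ :=
  ⟨AlgebraicClosure F, spectralNorm.normedField F (AlgebraicClosure F), inferInstance,
    algebraMap F (AlgebraicClosure F), fun x ↦ spectralNorm_extends x⟩

theorem exists_isAlgClosed_norm_eq_degreeAbs (F : Type u) [Field F] :
    ∃ (C : Type u) (_ : NormedField C) (_ : IsAlgClosed C) (f : RatFunc F →+* C),
      ∀ x, ‖f x‖ = degreeAbs F x := by
  set v := degreeAbs F
  let coe : RatFunc F →+* v.Completion :=
    (UniformSpace.Completion.coeRingHom (α := WithAbs v)).comp (WithAbs.equiv v).symm.toRingHom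
  have norm_coe : ∀ x, ‖coe x‖ = v x := fun x ↦
    UniformSpace.Completion.norm_coe (WithAbs.toAbs v x)
  let _ : NontriviallyNormedField v.Completion :=
    { (inferInstance : NormedField v.Completion) with
      non_trivial := ⟨coe RatFunc.X, by
        rw [norm_coe, ← RatFunc.algebraMap_X, degreeAbs_algebraMap Polynomial.X_ne_zero]
        norm_num⟩ }
  have : IsUltrametricDist v.Completion := by
    refine IsUltrametricDist.isUltrametricDist_of_forall_norm_natCast_le_one fun n ↦ ?_
    rw [← map_natCast coe, norm_coe, ← map_natCast (algebraMap (Polynomial F) (RatFunc F))]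
    by_cases h : (n : Polynomial F) = 0
    · simp [h]
    · rw [degreeAbs_algebraMap h]
      simp
  obtain ⟨C, hC, hC', f, hf⟩ := exists_isAlgClosed_norm_preserving v.Completion
  exact ⟨C, hC, hC', f.comp coe, fun x ↦ by rw [RingHom.comp_apply, hf, norm_coe]⟩

theorem finite_setOf_degree_lt (F : Type*) [Field F] [Finite F] (M : ℕ) :
    {q : Polynomial F | q.degree < M}.Finite := by
  have : Finite (Polynomial.degreeLT F M) :=
    Finite.of_equiv _ (Polynomial.degreeLTEquiv F M).symm.toEquiv
  exact (Set.toFinite (Polynomial.degreeLT F M : Set (Polynomial F))).subset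
    fun q hq ↦ Polynomial.mem_degreeLT.2 hq

theorem nonempty_basePlaceSystem_polynomial (F : Type) [Field F] [Finite F] :
    Nonempty (BasePlaceSystem (Polynomial F)) := by
  obtain ⟨C, hC, hC', f, hf⟩ := exists_isAlgClosed_norm_eq_degreeAbs F
  let g : Polynomial F →+* C := f.comp (algebraMap _ (RatFunc F))
  have norm_g : ∀ q ≠ 0, ‖g q‖ = (2 : ℝ) ^ q.natDegree := fun q hq ↦
    (hf _).trans (degreeAbs_algebraMap hq)
  have g_ne_zero : ∀ q ≠ 0, g q ≠ 0 := fun q hq ↦ by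
    rw [← norm_pos_iff, norm_g q hq]
    positivity
  refine ⟨{
    Place := Unit
    Completion := fun _ ↦ C
    homs := {fun _ ↦ g}
    exists_forall_ne_zero := fun X _ hX0 ↦ ⟨_, rfl, fun x hx _ ↦ g_ne_zero x (hX0 x hx)⟩
    one_le_prod_norm := ?_
    finite_values := fun B _ ↦ ?_ }⟩
  · rintro _ rfl a ha
    have ha0 : a ≠ 0 := fun h ↦ ha () (by rw [h, map_zero])
    rw [Fintype.prod_unique, norm_g a ha0]
    exact one_le_pow₀ one_le_two
  · obtain ⟨M, hM⟩ := pow_unbounded_of_one_lt B one_lt_two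
    refine ((finite_setOf_degree_lt F M).image g).subset ?_
    rintro _ ⟨_, rfl, a, ha, rfl⟩
    refine ⟨a, ?_, rfl⟩
    rcases eq_or_ne a 0 with rfl | h0
    · exact WithBot.bot_lt_coe M
    have hlt := (ha ()).trans_lt hM
    rw [norm_g a h0, pow_lt_pow_iff_right₀ one_lt_two] at hlt
    exact (Polynomial.natDegree_lt_iff_degree_lt h0).1 hlt

theorem max_one_padicNorm_mul_padicNorm_den (p : ℕ) [Fact p.Prime] (q : ℚ) :
    max 1 (padicNorm p q) * padicNorm p q.den = 1 := by
  have hmul : padicNorm p q * padicNorm p q.den = padicNorm p q.num := by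
    rw [← padicNorm.mul, Rat.mul_den_eq_num]
  by_cases hp : p ∣ q.den
  · have hnum : padicNorm p q.num = 1 := (padicNorm.int_eq_one_iff _).2 fun h ↦
      Nat.Prime.not_coprime_iff_dvd.2 ⟨p, Fact.out, Int.natCast_dvd.1 h, hp⟩ q.reduced
    have hle : 1 ≤ padicNorm p q := by
      have h_den := padicNorm.of_nat (p := p) q.den
      nlinarith [padicNorm.nonneg (p := p) q]
    rw [max_eq_right hle, hmul, hnum]
  · have hden : padicNorm p q.den = 1 := (padicNorm.nat_eq_one_iff _).2 hp
    rw [hden, mul_one] at hmul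
    rw [hden, mul_one, hmul, max_eq_left (padicNorm.of_int _)]

theorem natCast_mul_prod_padicNorm {S : Finset ℕ} (hS : ∀ p ∈ S, p.Prime) {n : ℕ} (hn : n ≠ 0)
    (hnS : n.primeFactors ⊆ S) :
    (n : ℚ) * ∏ p ∈ S, padicNorm p n = 1 := by
  have hfact : (n : ℚ) = ∏ p ∈ S, (p : ℚ) ^ padicValNat p n := by
    conv_lhs => rw [← Nat.prod_factorization_pow_eq_self hn,
      Finsupp.prod_of_support_subset _ hnS _ fun _ _ ↦ pow_zero _]
    push_cast
    exact Finset.prod_congr rfl fun p hp ↦ by rw [Nat.factorization_def _ (hS p hp)]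
  conv_lhs => enter [1]; rw [hfact]
  rw [← Finset.prod_mul_distrib]
  refine Finset.prod_eq_one fun p hp ↦ ?_
  have hp0 : (p : ℚ) ≠ 0 := mod_cast (hS p hp).ne_zero
  rw [padicNorm.eq_zpow_of_nonzero (mod_cast hn), padicValRat.of_nat, _root_.zpow_neg,
    zpow_natCast, mul_inv_cancel₀ (pow_ne_zero _ hp0)]

theorem one_le_abs_intCast_mul_prod_padicNorm {S : Finset ℕ} (hS : ∀ p ∈ S, p.Prime) {z : ℤ}
    (hz : z ≠ 0) :
    1 ≤ |(z : ℚ)| * ∏ p ∈ S, padicNorm p z := by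
  classical
  have hprime : ∀ p ∈ S ∪ z.natAbs.primeFactors, p.Prime := fun p hp ↦
    (Finset.mem_union.1 hp).elim (hS p) Nat.prime_of_mem_primeFactors
  have hnorm : ∀ p, padicNorm p (z.natAbs : ℚ) = padicNorm p z := fun p ↦ by
    rw [Nat.cast_natAbs, Int.cast_abs]
    rcases abs_choice (z : ℚ) with h | h <;> simp [h]
  have hfull := natCast_mul_prod_padicNorm hprime (Int.natAbs_ne_zero.2 hz)
    Finset.subset_union_right
  rw [Finset.prod_congr rfl fun p _ ↦ hnorm p, Nat.cast_natAbs, Int.cast_abs,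
    ← Finset.prod_sdiff Finset.subset_union_left] at hfull
  have hle : ∏ p ∈ (S ∪ z.natAbs.primeFactors) \ S, padicNorm p z ≤ 1 :=
    Finset.prod_le_one (fun p _ ↦ padicNorm.nonneg _) fun p hp ↦ by
      have : Fact p.Prime := ⟨hprime p (Finset.mem_sdiff.1 hp).1⟩
      exact padicNorm.of_int z
  rw [← hfull]
  gcongr
  exact mul_le_of_le_one_left (Finset.prod_nonneg fun p _ ↦ padicNorm.nonneg _) hle

theorem one_le_abs_mul_prod_padicNorm {S : Finset ℕ} (hS : ∀ p ∈ S, p.Prime) {q : ℚ} (hq : q ≠ 0)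
    (hqS : q.den.primeFactors ⊆ S) :
    1 ≤ |q| * ∏ p ∈ S, padicNorm p q := by
  have hnum : ∀ p ∈ S, padicNorm p (q.num : ℚ) = padicNorm p q * padicNorm p q.den :=
    fun p hp ↦ by
      have : Fact p.Prime := ⟨hS p hp⟩
      rw [← padicNorm.mul, Rat.mul_den_eq_num]
  calc 1 ≤ |(q.num : ℚ)| * ∏ p ∈ S, padicNorm p q.num :=
      one_le_abs_intCast_mul_prod_padicNorm hS (Rat.num_ne_zero.2 hq)
    _ = |q| * (∏ p ∈ S, padicNorm p q) * (q.den * ∏ p ∈ S, padicNorm p q.den) := by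
      rw [Finset.prod_congr rfl hnum, Finset.prod_mul_distrib, ← Rat.mul_den_eq_num q, abs_mul,
        Nat.abs_cast]
      ring
    _ = |q| * ∏ p ∈ S, padicNorm p q := by
      rw [natCast_mul_prod_padicNorm hS q.den_ne_zero hqS, mul_one]

theorem den_eq_prod_max_padicNorm {S : Finset ℕ} (hS : ∀ p ∈ S, p.Prime) {q : ℚ}
    (hqS : q.den.primeFactors ⊆ S) :
    (q.den : ℚ) = ∏ p ∈ S, max 1 (padicNorm p q) := by
  have hprod : (∏ p ∈ S, max 1 (padicNorm p q)) * ∏ p ∈ S, padicNorm p q.den = 1 := by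
    rw [← Finset.prod_mul_distrib]
    refine Finset.prod_eq_one fun p hp ↦ ?_
    have : Fact p.Prime := ⟨hS p hp⟩
    exact max_one_padicNorm_mul_padicNorm_den p q
  exact mul_right_cancel₀ (right_ne_zero_of_mul_eq_one hprod)
    ((natCast_mul_prod_padicNorm hS q.den_ne_zero hqS).trans hprod.symm)

theorem finite_setOf_abs_le_den_le (B D : ℝ) :
    {q : ℚ | |(q : ℝ)| ≤ B ∧ (q.den : ℝ) ≤ D}.Finite := by
  obtain ⟨M, hM⟩ := exists_nat_ge (B * D)
  obtain ⟨L, hL⟩ := exists_nat_ge D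
  have hinj : Function.Injective fun q : ℚ ↦ (q.num, q.den) := fun q r h ↦
    Rat.ext (congrArg Prod.fst h) (congrArg Prod.snd h)
  refine (((Set.finite_Icc (-M : ℤ) M).prod (Set.finite_Iic L)).preimage hinj.injOn).subset ?_
  rintro q ⟨hB, hD⟩
  have hnum : |(q.num : ℝ)| ≤ M := by
    have h : (q.num : ℝ) = q * q.den := mod_cast (Rat.mul_den_eq_num q).symm
    rw [h, abs_mul, Nat.abs_cast]
    exact (mul_le_mul hB hD (by positivity) ((abs_nonneg _).trans hB)).trans hM
  exact ⟨⟨mod_cast (abs_le.1 hnum).1, mod_cast (abs_le.1 hnum).2⟩, mod_cast hD.trans hL⟩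

theorem finite_setOf_forall_padicNorm_le {S : Finset ℕ} (hS : ∀ p ∈ S, p.Prime) (B : ℝ) :
    {q : ℚ | q.den.primeFactors ⊆ S ∧ |(q : ℝ)| ≤ B ∧
      ∀ p ∈ S, (padicNorm p q : ℝ) ≤ B}.Finite := by
  refine (finite_setOf_abs_le_den_le B ((max 1 B) ^ S.card)).subset ?_
  rintro q ⟨hqS, hB, hp⟩
  refine ⟨hB, ?_⟩
  have hden : (q.den : ℝ) = ∏ p ∈ S, max 1 (padicNorm p q : ℝ) :=
    mod_cast den_eq_prod_max_padicNorm hS hqS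
  rw [hden, ← Finset.prod_const]
  exact Finset.prod_le_prod (fun _ _ ↦ by positivity) fun p h ↦ max_le_max le_rfl (hp p h)

theorem exists_isAlgClosed_norm_eq_padicNorm (p : ℕ) [Fact p.Prime] :
    ∃ (C : Type) (_ : NormedField C) (_ : IsAlgClosed C) (f : ℚ →+* C),
      ∀ q, ‖f q‖ = (padicNorm p q : ℝ) :=
  ⟨PadicAlgCl p, inferInstance, inferInstance,
    (algebraMap ℚ_[p] (PadicAlgCl p)).comp (algebraMap ℚ ℚ_[p]), fun q ↦
      (PadicAlgCl.norm_extends p _).trans (Padic.eq_padicNorm q)⟩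

theorem nonempty_basePlaceSystem_of_injective_rat {A : Type*} [CommRing A] {h : A →+* ℚ}
    (hinj : Function.Injective h) {S : Finset ℕ} (hS : ∀ p ∈ S, p.Prime)
    (hA : ∀ a, (h a).den.primeFactors ⊆ S) : Nonempty (BasePlaceSystem A) := by
  have hfield : ∀ w : Option S, ∃ (C : Type) (_ : NormedField C) (_ : IsAlgClosed C)
      (f : ℚ →+* C), ∀ q, ‖f q‖ = w.elim |(q : ℝ)| fun p ↦ (padicNorm p q : ℝ) := by
    rintro (_ | ⟨p, hp⟩)
    · exact ⟨ℂ, inferInstance, inferInstance, algebraMap ℚ ℂ, fun q ↦ by simp⟩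
    · have : Fact p.Prime := ⟨hS p hp⟩
      exact exists_isAlgClosed_norm_eq_padicNorm p
  choose C hC hC' f hf using hfield
  refine ⟨{
    Place := Option S
    Completion := C
    homs := {fun w ↦ (f w).comp h}
    exists_forall_ne_zero := fun X _ hX0 ↦ ⟨_, rfl, fun x hx w ↦
      (map_ne_zero (f w)).2 ((map_ne_zero_iff h hinj).2 (hX0 x hx))⟩
    one_le_prod_norm := ?_
    finite_values := fun B w ↦ ?_ }⟩
  · rintro _ rfl a ha
    have ha0 : h a ≠ 0 := fun h0 ↦ ha none (by rw [RingHom.comp_apply, h0, map_zero])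
    have hprod := one_le_abs_mul_prod_padicNorm hS ha0 (hA a)
    rw [← Finset.prod_coe_sort] at hprod
    simp only [RingHom.comp_apply, hf, Fintype.prod_option, Option.elim]
    exact_mod_cast hprod
  · refine ((finite_setOf_forall_padicNorm_le hS B).image (f w)).subset ?_
    rintro _ ⟨_, rfl, a, ha, rfl⟩
    simp only [RingHom.comp_apply, hf] at ha
    exact ⟨h a, ⟨hA a, ha none, fun p hp ↦ ha (some ⟨p, hp⟩)⟩, rfl⟩

theorem exists_placeSystem_of_isIntegralElem {K : Type u} {A : Type} [Field K] [CommRing A]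
    [IsDomain A] [IsIntegrallyClosed A] (b : BasePlaceSystem A) {f : A →+* K}
    (hf : Function.Injective f) {Y : Finset K} (hY : ∀ y ∈ Y, f.IsIntegralElem y) :
    ∃ (R : Type u) (_ : CommRing R) (ι : R →+* K), Function.Injective ι ∧
      (∀ y ∈ Y, y ∈ Set.range ι) ∧ Nonempty (PlaceSystem R) := by
  let _ : Algebra A K := f.toAlgebra
  let R := Algebra.adjoin A (Y : Set K)
  have : Module.Finite A R :=
    Module.Finite.iff_fg.2 (fg_adjoin_of_finite Y.finite_toSet fun y hy ↦ hY y hy)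
  have : Module.IsTorsionFree A R :=
    Module.isTorsionFree_iff_algebraMap_injective.2 fun x y hxy ↦ hf (congrArg Subtype.val hxy)
  exact ⟨R, inferInstance, R.val.toRingHom, Subtype.val_injective,
    fun y hy ↦ ⟨⟨y, Algebra.subset_adjoin hy⟩, rfl⟩, ⟨b.lift R⟩⟩

theorem exists_injective_algHom_isIntegralElem (k : Type*) {K : Type*} [Field k] [Field K]
    [Algebra k K] (Y : Finset K) :
    ∃ (s : ℕ) (G : MvPolynomial (Fin s) k →ₐ[k] K), Function.Injective G ∧
      ∀ y ∈ Y, G.toRingHom.IsIntegralElem y := by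
  let R := Algebra.adjoin k (Y : Set K)
  have : Algebra.FiniteType k R := (Subalgebra.fg_iff_finiteType R).1 ⟨Y, rfl⟩
  obtain ⟨s, g, hg, hint⟩ := exists_integral_inj_algHom_of_fg k R
  refine ⟨s, R.val.comp g, Subtype.val_injective.comp hg, fun y hy ↦ ?_⟩
  obtain ⟨p, hp, hp0⟩ := hint ⟨y, Algebra.subset_adjoin hy⟩
  refine ⟨p, hp, ?_⟩
  have h := Polynomial.hom_eval₂ p g.toRingHom R.val.toRingHom ⟨y, Algebra.subset_adjoin hy⟩
  rw [hp0, map_zero] at h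
  exact h.symm

theorem exists_forall_mul_natCast_eq_intCast (Q : Finset ℚ) :
    ∃ N : ℕ, N ≠ 0 ∧ ∀ q ∈ Q, ∃ z : ℤ, q * N = z := by
  classical
  refine ⟨∏ q ∈ Q, q.den, Finset.prod_ne_zero_iff.2 fun q _ ↦ q.den_ne_zero, fun q hq ↦ ?_⟩
  refine ⟨q.num * (∏ q ∈ Q.erase q, q.den : ℕ), ?_⟩
  rw [← Finset.mul_prod_erase _ _ hq]
  push_cast
  rw [← mul_assoc, Rat.mul_den_eq_num]

section Away

variable {N : ℕ}

/-- The inclusion of `ℤ[1/N]` into `ℚ`. -/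
noncomputable def awayToRat (hN : N ≠ 0) : Localization.Away (N : ℤ) →+* ℚ :=
  IsLocalization.Away.lift (N : ℤ) (g := algebraMap ℤ ℚ) (by simpa using hN)

theorem awayToRat_algebraMap (hN : N ≠ 0) (z : ℤ) : awayToRat hN (algebraMap ℤ _ z) = z :=
  IsLocalization.Away.lift_eq _ _ _

theorem exists_awayToRat_mul_pow (hN : N ≠ 0) (a : Localization.Away (N : ℤ)) :
    ∃ (k : ℕ) (z : ℤ), awayToRat hN a * (N : ℚ) ^ k = z := by
  obtain ⟨k, z, hz⟩ := IsLocalization.Away.surj (N : ℤ) a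
  refine ⟨k, z, ?_⟩
  have h := congrArg (awayToRat hN) hz
  rwa [map_mul, map_pow, awayToRat_algebraMap, awayToRat_algebraMap, Int.cast_natCast] at h

theorem awayToRat_injective (hN : N ≠ 0) : Function.Injective (awayToRat hN) :=
  IsLocalization.lift_injective_iff _ |>.2 fun x y ↦ by
    rw [(IsLocalization.injective (Localization.Away (N : ℤ)) (M := Submonoid.powers (N : ℤ))
      (powers_le_nonZeroDivisors_of_noZeroDivisors (mod_cast hN))).eq_iff,
      (algebraMap ℤ ℚ).injective_int.eq_iff]

theorem den_awayToRat_primeFactors_subset (hN : N ≠ 0) (a : Localization.Away (N : ℤ)) :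
    (awayToRat hN a).den.primeFactors ⊆ N.primeFactors := by
  obtain ⟨k, z, hz⟩ := exists_awayToRat_mul_pow hN a
  have hdvd : (awayToRat hN a).den ∣ N ^ k := by
    have hval : awayToRat hN a = (z : ℚ) / ((N ^ k : ℕ) : ℤ) := by
      rw [← hz]
      push_cast
      rw [mul_div_cancel_right₀ _ (pow_ne_zero k (mod_cast hN))]
    rw [hval]
    exact_mod_cast Rat.den_dvd z (N ^ k : ℕ)
  exact fun p hp ↦ Nat.mem_primeFactors.2 ⟨Nat.prime_of_mem_primeFactors hp,
    (Nat.prime_of_mem_primeFactors hp).dvd_of_dvd_pow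
      ((Nat.dvd_of_mem_primeFactors hp).trans hdvd), hN⟩

theorem mem_range_awayToRat (hN : N ≠ 0) {q : ℚ} {z : ℤ} (hz : q * N = z) :
    q ∈ Set.range (awayToRat hN) := by
  have hN0 : (N : ℚ) ≠ 0 := mod_cast hN
  obtain ⟨u, hu⟩ := IsLocalization.Away.algebraMap_isUnit
    (S := Localization.Away (N : ℤ)) (N : ℤ)
  have hinv : awayToRat hN ↑u⁻¹ * N = 1 := by
    have hu' : awayToRat hN u = N := by rw [hu, awayToRat_algebraMap, Int.cast_natCast]
    rw [← hu', ← map_mul, Units.inv_mul, map_one]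
  refine ⟨algebraMap ℤ _ z * ↑u⁻¹, mul_right_cancel₀ hN0 ?_⟩
  rw [map_mul, awayToRat_algebraMap, mul_assoc, hinv, mul_one, hz]

end Away

theorem isIntegralElem_comp_map {A k K σ : Type*} [CommRing A] [CommRing k] [CommRing K]
    {h : A →+* k} {G : MvPolynomial σ k →+* K} {y : K} {P : Polynomial (MvPolynomial σ k)}
    (hP : P.Monic) (hPy : P.eval₂ G y = 0)
    (hcoeff : ∀ i, ∀ q ∈ (P.coeff i).coeffs, q ∈ Set.range h) :
    (G.comp (MvPolynomial.map h)).IsIntegralElem y := by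
  have hlift : P ∈ Polynomial.lifts (MvPolynomial.map (σ := σ) h) :=
    (Polynomial.lifts_iff_coeff_lifts _).2 fun i ↦
      MvPolynomial.mem_range_map_iff_coeffs_subset.2 (hcoeff i)
  obtain ⟨q, hq, -, hmonic⟩ := Polynomial.lifts_and_natDegree_eq_and_monic hlift hP
  exact ⟨q, hmonic, by rw [← Polynomial.eval₂_map, hq, hPy]⟩

theorem exists_placeSystem_of_charP {K : Type u} [Field K] (p : ℕ) [Fact p.Prime] [CharP K p]
    (Y : Finset K) :
    ∃ (R : Type u) (_ : CommRing R) (ι : R →+* K), Function.Injective ι ∧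
      (∀ y ∈ Y, y ∈ Set.range ι) ∧ Nonempty (PlaceSystem R) := by
  let _ : Algebra (ZMod p) K := ZMod.algebra K p
  obtain ⟨s, G, hG, hY⟩ := exists_injective_algHom_isIntegralElem (ZMod p) Y
  obtain ⟨b⟩ := nonempty_basePlaceSystem_polynomial (ZMod p)
  exact exists_placeSystem_of_isIntegralElem
    (b.mvPolynomial (Fin s) (φ := Polynomial.C) Polynomial.C_injective) hG hY

theorem exists_placeSystem_of_charZero {K : Type u} [Field K] [CharZero K] (Y : Finset K) :
    ∃ (R : Type u) (_ : CommRing R) (ι : R →+* K), Function.Injective ι ∧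
      (∀ y ∈ Y, y ∈ Set.range ι) ∧ Nonempty (PlaceSystem R) := by
  classical
  obtain ⟨s, G, hG, hY⟩ := exists_injective_algHom_isIntegralElem ℚ Y
  choose! P hmonic hP using hY
  obtain ⟨N, hN, hden⟩ := exists_forall_mul_natCast_eq_intCast
    (Y.biUnion fun y ↦ (P y).coeffs.biUnion fun c ↦ c.coeffs)
  have hinj := awayToRat_injective hN
  have : IsDomain (Localization.Away (N : ℤ)) := hinj.isDomain _
  have : CharZero (Localization.Away (N : ℤ)) := (awayToRat hN).charZero
  have : UniqueFactorizationMonoid (Localization.Away (N : ℤ)) :=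
    inferInstanceAs (UniqueFactorizationMonoid (Localization (Submonoid.powers (N : ℤ))))
  obtain ⟨b⟩ := nonempty_basePlaceSystem_of_injective_rat hinj
    (fun p ↦ Nat.prime_of_mem_primeFactors) (den_awayToRat_primeFactors_subset hN)
  refine exists_placeSystem_of_isIntegralElem
    (b.mvPolynomial (Fin s) (φ := RingHom.id _) Function.injective_id)
    (hG.comp (MvPolynomial.map_injective _ hinj)) fun y hy ↦
    isIntegralElem_comp_map (G := G.toRingHom) (hmonic y hy) (hP y hy) fun i q hq ↦ ?_
  have hi : (P y).coeff i ≠ 0 := fun h0 ↦ by simp [h0] at hq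
  obtain ⟨z, hz⟩ := hden q <| Finset.mem_biUnion.2
    ⟨y, hy, Finset.mem_biUnion.2 ⟨_, Polynomial.coeff_mem_coeffs hi, hq⟩⟩
  exact mem_range_awayToRat hN hz

theorem exists_placeSystem {K : Type u} [Field K] (Y : Finset K) :
    ∃ (R : Type u) (_ : CommRing R) (ι : R →+* K), Function.Injective ι ∧
      (∀ y ∈ Y, y ∈ Set.range ι) ∧ Nonempty (PlaceSystem R) := by
  obtain ⟨p, hp⟩ := CharP.exists K
  rcases CharP.char_is_prime_or_zero K p with hprime | rfl
  · have : Fact p.Prime := ⟨hprime⟩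
    exact exists_placeSystem_of_charP p Y
  · have : CharZero K := CharP.charP_to_charZero K
    exact exists_placeSystem_of_charZero Y

/-! ### Burnside's theorem and ultrapowers -/

theorem subalgebra_eq_top_of_forall_invariant {Ω V : Type*} [Field Ω] [IsAlgClosed Ω]
    [AddCommGroup V] [Module Ω V] [FiniteDimensional Ω V] [Nontrivial V]
    (A : Subalgebra Ω (Module.End Ω V))
    (hA : ∀ W : Submodule Ω V, (∀ a ∈ A, ∀ v ∈ W, a v ∈ W) → W = ⊥ ∨ W = ⊤) : A = ⊤ := by
  classical
  have : IsSimpleModule A V := isSimpleModule_iff A V |>.2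
    { exists_pair_ne := ⟨⊥, ⊤, bot_ne_top⟩
      eq_bot_or_eq_top := fun W ↦
        (hA (W.restrictScalars Ω) fun a ha v hv ↦ W.smul_mem (⟨a, ha⟩ : A) hv).imp
          (fun h ↦ Submodule.restrictScalars_injective Ω _ _ h)
          fun h ↦ Submodule.restrictScalars_injective Ω _ _ h }
  have hschur := (IsSimpleModule.algebraMap_end_bijective_of_isAlgClosed (A := A) (V := V) Ω).2
  refine eq_top_iff.2 fun T _ ↦ ?_
  let f : Module.End (Module.End A V) V :=
    { toFun := T
      map_add' := T.map_add
      map_smul' := fun φ v ↦ by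
        obtain ⟨c, rfl⟩ := hschur φ
        simp }
  let b := Module.finBasis Ω V
  obtain ⟨r, hr⟩ := jacobson_density (R := A) f (Finset.univ.image b)
  have hT : T = r.1 := b.ext fun i ↦ hr (b i) (Finset.mem_image_of_mem b (Finset.mem_univ i))
  exact hT ▸ r.2

theorem span_submonoid_eq_top_of_forall_invariant {Ω n : Type*} [Field Ω] [IsAlgClosed Ω]
    [Fintype n] [DecidableEq n] [Nonempty n] (T : Submonoid (Matrix n n Ω))
    (hT : ∀ W : Submodule Ω (n → Ω), (∀ a ∈ T, ∀ v ∈ W, a *ᵥ v ∈ W) → W = ⊥ ∨ W = ⊤) :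
    Submodule.span Ω (T : Set (Matrix n n Ω)) = ⊤ := by
  let e : Matrix n n Ω ≃ₐ[Ω] Module.End Ω (n → Ω) := Matrix.toLinAlgEquiv'
  let A := Algebra.adjoin Ω (T : Set (Matrix n n Ω))
  have hmap : A.map e.toAlgHom = ⊤ := subalgebra_eq_top_of_forall_invariant _ fun W hW ↦
    hT W fun a ha v hv ↦ by
      simpa [e] using hW (e a) ⟨a, Algebra.subset_adjoin ha, rfl⟩ v hv
  have hA : A = ⊤ := eq_top_iff.2 fun x _ ↦ by
    obtain ⟨y, hy, hxy⟩ : e x ∈ A.map e.toAlgHom := hmap ▸ Algebra.mem_top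
    exact e.injective hxy ▸ hy
  have hspan := Algebra.adjoin_eq_span (R := Ω) (s := (T : Set (Matrix n n Ω)))
  rw [Submonoid.closure_eq] at hspan
  rw [← hspan, ← Algebra.top_toSubmodule, ← hA]

/-- The trivial absolute value; bounded sequences for it are arbitrary sequences, so the
corresponding ultralimits are ultrapowers. -/
noncomputable def trivialAbs (K : Type*) [Field K] : AbsoluteValue K ℝ :=
  open Classical in AbsoluteValue.trivial

theorem trivialAbs_of_ne_zero {K : Type*} [Field K] {x : K} (hx : x ≠ 0) : trivialAbs K x = 1 := by
  simp [trivialAbs, hx]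

theorem trivialAbs_le_one {K : Type*} [Field K] (x : K) : trivialAbs K x ≤ 1 := by
  rcases eq_or_ne x 0 with rfl | hx
  · rw [map_zero]
    exact zero_le_one
  · exact (trivialAbs_of_ne_zero hx).le

/-- The ultrapower of a field. -/
abbrev Ultrapower {ι : Type*} (U : Ultrafilter ι) (K : Type*) [Field K] : Type _ :=
  Ultralimit U fun _ ↦ trivialAbs K

section Ultrapower

variable {ι K p q : Type*} [Field K] {U : Ultrafilter ι}

theorem exists_isUltralimit_ultrapower (f : ι → K) : ∃ x : Ultrapower U K, IsUltralimit f x :=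
  exists_isUltralimit_of_eventually_le (C := 1) (.of_forall fun _ ↦ trivialAbs_le_one _)

theorem eventually_eq_zero_of_ultrapower {f : ι → K}
    (h : IsUltralimit f (0 : Ultrapower U K)) : ∀ᶠ i in (U : Filter ι), f i = 0 := by
  filter_upwards [(IsUltralimit.zero_iff.1 h).eventually (gt_mem_nhds one_pos)] with i hi
  by_contra hne
  exact hi.ne (trivialAbs_of_ne_zero hne)

theorem eventually_matrix_eq_zero_of_ultrapower [Finite p] [Finite q] {A : ι → Matrix p q K}
    (h : IsMatrixUltralimit A (0 : Matrix p q (Ultrapower U K))) :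
    ∀ᶠ i in (U : Filter ι), A i = 0 := by
  have hentries : ∀ᶠ i in (U : Filter ι), ∀ a b, A i a b = 0 :=
    eventually_all.2 fun a ↦ eventually_all.2 fun b ↦ eventually_eq_zero_of_ultrapower (h a b)
  filter_upwards [hentries] with i hi
  exact Matrix.ext hi

theorem IsMatrixUltralimit.eventually_ne_zero {av : ι → AbsoluteValue K ℝ}
    {A : ι → Matrix p q K} {X : Matrix p q (Ultralimit U av)} (hA : IsMatrixUltralimit A X)
    (hX : X ≠ 0) : ∀ᶠ i in (U : Filter ι), A i ≠ 0 := by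
  obtain ⟨a, b, hab⟩ : ∃ a b, X a b ≠ 0 := by
    by_contra! h
    exact hX (Matrix.ext h)
  filter_upwards [(hA a b).eventually_ne_zero hab] with i hi h0
  exact hi (by rw [h0, Matrix.zero_apply])

theorem exists_root_of_forall_isAlgClosed [IsAlgClosed K] {d : ℕ} (hd : d ≠ 0) (c : ℕ → K) :
    ∃ r : K, r ^ d + ∑ j ∈ Finset.range d, c j * r ^ j = 0 := by
  let s : Polynomial K := ∑ j ∈ Finset.range d, Polynomial.C (c j) * Polynomial.X ^ j
  have hs : s.degree < (Polynomial.X ^ d : Polynomial K).degree := by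
    rw [Polynomial.degree_X_pow, ← Polynomial.mem_degreeLT]
    refine Submodule.sum_mem _ fun j hj ↦ Polynomial.mem_degreeLT.2 ?_
    exact (Polynomial.degree_C_mul_X_pow_le _ _).trans_lt (mod_cast Finset.mem_range.1 hj)
  have hdeg : (Polynomial.X ^ d + s).degree ≠ 0 := by
    rw [Polynomial.degree_add_eq_left_of_degree_lt hs, Polynomial.degree_X_pow]
    exact_mod_cast hd
  obtain ⟨r, hr⟩ := IsAlgClosed.exists_root _ hdeg
  refine ⟨r, ?_⟩
  simpa only [s, Polynomial.IsRoot, Polynomial.eval_add, Polynomial.eval_pow, Polynomial.eval_X,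
    Polynomial.eval_finsetSum, Polynomial.eval_mul, Polynomial.eval_C] using hr

instance [IsAlgClosed K] : IsAlgClosed (Ultrapower U K) := by
  refine IsAlgClosed.of_exists_root _ fun p hp hirr ↦ ?_
  choose c hc using fun j ↦ (p.coeff j).exists_isUltralimit
  choose r hr using fun i ↦
    exists_root_of_forall_isAlgClosed hirr.natDegree_pos.ne' fun j ↦ c j i
  obtain ⟨x, hx⟩ := exists_isUltralimit_ultrapower (U := U) r
  have hlim : IsUltralimit
      (fun i ↦ r i ^ p.natDegree + ∑ j ∈ Finset.range p.natDegree, c j i * r i ^ j)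
      (x ^ p.natDegree + ∑ j ∈ Finset.range p.natDegree, p.coeff j * x ^ j) :=
    (hx.pow _).add (IsUltralimit.sum _ fun j _ ↦ (hc j).mul (hx.pow j))
  have hroot := hlim.unique (IsUltralimit.zero.congr (.of_forall fun i ↦ (hr i).symm))
  refine ⟨x, ?_⟩
  rw [hp.as_sum]
  simpa only [Polynomial.eval_add, Polynomial.eval_pow, Polynomial.eval_X,
    Polynomial.eval_finsetSum, Polynomial.eval_mul, Polynomial.eval_C] using hroot

end Ultrapower

theorem exists_monoidHom_isMatrixUltralimit {ι k n H : Type*} [Field k] {U : Ultrafilter ι}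
    {av : ι → AbsoluteValue k ℝ} [Fintype n] [DecidableEq n] [Group H] (A : ι → H →* GL n k)
    (hA : ∀ h a b, ∃ C : ℝ, ∀ᶠ i in (U : Filter ι), av i ((A i h).1 a b) ≤ C) :
    ∃ σ : H →* GL n (Ultralimit U av), ∀ h,
      IsMatrixUltralimit (fun i ↦ (A i h).1) (σ h).1 := by
  choose M hM using fun h ↦ exists_isMatrixUltralimit_of_eventually_le (U := U) (hA h)
  let σ : H →* Matrix n n (Ultralimit U av) :=
    { toFun := M
      map_one' := (hM 1).unique (by simpa using IsMatrixUltralimit.one)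
      map_mul' := fun g h ↦ (hM (g * h)).unique (by simpa using (hM g).mul (hM h)) }
  exact ⟨σ.toHomUnits, hM⟩

/-! ### Symmetric generating sets and strong irreducibility -/

/-- A finite symmetric generating set containing the identity. -/
structure SymmGenSet (G : Type*) [Group G] where
  carrier : Set G
  finite : carrier.Finite
  one_mem : (1 : G) ∈ carrier
  inv_mem : ∀ s ∈ carrier, s⁻¹ ∈ carrier
  closure_eq_top : Subgroup.closure carrier = ⊤

namespace SymmGenSet

variable {ι G : Type*} [Group G]

theorem inv_mem_pow (S : SymmGenSet G) {l : ℕ} {x : G} (hx : x ∈ S.carrier ^ l) :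
    x⁻¹ ∈ S.carrier ^ l := by
  have hinv : S.carrier⁻¹ = S.carrier :=
    Set.Subset.antisymm (fun s hs ↦ by simpa using S.inv_mem _ hs) S.inv_mem
  rwa [← hinv, _root_.inv_pow, Set.inv_mem_inv]

theorem pow_subset_pow (S : SymmGenSet G) {l l' : ℕ} (h : l ≤ l') :
    S.carrier ^ l ⊆ S.carrier ^ l' := Set.pow_subset_pow_right S.one_mem h

theorem induction (S : SymmGenSet G) {p : G → Prop} (one : p 1)
    (mul : ∀ s ∈ S.carrier, ∀ g, p g → p (s * g)) (g : G) : p g :=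
  Subgroup.closure_induction_left (p := fun x _ ↦ p x) one (fun s hs g _ ↦ mul s hs g)
    (fun s hs g _ ↦ mul _ (S.inv_mem s hs) g) (S.closure_eq_top ▸ Subgroup.mem_top g)

/-- The sequences `g` such that `g i` lies in the ball of radius `l` with respect to `S i`, where
`l` does not depend on `i`. -/
def boundedSeq (S : ι → SymmGenSet G) : Subgroup (ι → G) where
  carrier := {g | ∃ l : ℕ, ∀ i, g i ∈ (S i).carrier ^ l}
  mul_mem' := by
    rintro a b ⟨l, hl⟩ ⟨l', hl'⟩
    exact ⟨l + l', fun i ↦ by rw [pow_add]; exact Set.mul_mem_mul (hl i) (hl' i)⟩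
  one_mem' := ⟨0, fun i ↦ by rw [pow_zero]; rfl⟩
  inv_mem' := by
    rintro a ⟨l, hl⟩
    exact ⟨l, fun i ↦ (S i).inv_mem_pow (hl i)⟩

/-- The homomorphism `g ↦ ρ (g i)`. -/
def boundedSeqEval {H : Type*} [Group H] (S : ι → SymmGenSet G) (ρ : G →* H) (i : ι) :
    boundedSeq S →* H :=
  ρ.comp ((Pi.evalMonoidHom (fun _ : ι ↦ G) i).comp (boundedSeq S).subtype)

theorem boundedSeqEval_apply {H : Type*} [Group H] (S : ι → SymmGenSet G) (ρ : G →* H) (i : ι)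
    (g : boundedSeq S) : boundedSeqEval S ρ i g = ρ (g.1 i) := rfl

theorem eventually_forall_mem_carrier {S : ι → SymmGenSet G} {F : Filter ι} {Q : ι → G → Prop}
    (h : ∀ s : boundedSeq S, ∀ᶠ i in F, Q i (s.1 i)) : ∀ᶠ i in F, ∀ s ∈ (S i).carrier, Q i s := by
  have hworst : ∀ i, ∃ s ∈ (S i).carrier, Q i s → ∀ s' ∈ (S i).carrier, Q i s' := fun i ↦ by
    by_cases hall : ∀ s ∈ (S i).carrier, Q i s
    · exact ⟨1, (S i).one_mem, fun _ ↦ hall⟩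
    · push Not at hall
      obtain ⟨s, hs, hQ⟩ := hall
      exact ⟨s, hs, fun h ↦ absurd h hQ⟩
  choose s hs hworst using hworst
  exact (h ⟨s, 1, fun i ↦ by rw [pow_one]; exact hs i⟩).mono hworst

end SymmGenSet

open SymmGenSet

section Subspaces

variable {K n : Type*} [Field K] [Fintype n] [DecidableEq n]

theorem exists_det_ne_zero_of_span_eq_top {T : Set (n → K)} (hT : Submodule.span K T = ⊤) :
    ∃ X : n → n → K, (∀ p, X p ∈ T) ∧ (Matrix.of X).det ≠ 0 := by
  obtain ⟨b, hbT, hb, hli⟩ := exists_linearIndependent K T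
  let B : Module.Basis b K (n → K) := .mk hli (by rw [Subtype.range_coe, hb, hT])
  let e := (Pi.basisFun K n).indexEquiv B
  refine ⟨fun p ↦ (e p).1, fun p ↦ hbT (e p).2, ?_⟩
  rw [← isUnit_iff_ne_zero, ← Matrix.isUnit_iff_isUnit_det,
    ← Matrix.linearIndependent_rows_iff_isUnit]
  exact hli.comp e e.injective

/-- The matrix whose rows are the entries of the matrices `X p`. -/
def flatten {α R : Type*} (X : α → Matrix n n R) : Matrix α (n × n) R :=
  Matrix.of fun p q ↦ X p q.1 q.2

theorem exists_det_flatten_ne_zero_of_span_eq_top {T : Set (Matrix n n K)}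
    (hT : Submodule.span K T = ⊤) :
    ∃ X : n × n → Matrix n n K, (∀ p, X p ∈ T) ∧ (flatten X).det ≠ 0 := by
  let e : Matrix n n K ≃ₗ[K] (n × n → K) := (LinearEquiv.curry K K n n).symm
  have hspan : Submodule.span K (e '' T) = ⊤ := by
    rw [← LinearEquiv.coe_coe, Submodule.span_image, hT, Submodule.map_top, LinearEquiv.range]
  obtain ⟨Y, hYT, hY⟩ := exists_det_ne_zero_of_span_eq_top hspan
  choose X hX hXY using hYT
  refine ⟨X, hX, ?_⟩
  rwa [← funext hXY] at hY

theorem one_sub_mul_eq_zero_iff_range_le {P A : Matrix n n K} (hP : IsIdempotentElem P) :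
    (1 - P) * A = 0 ↔ LinearMap.range (toLin' A) ≤ LinearMap.range (toLin' P) := by
  rw [sub_mul, one_mul, sub_eq_zero]
  constructor
  · rintro h _ ⟨v, rfl⟩
    exact ⟨A *ᵥ v, by rw [toLin'_apply, toLin'_apply, mulVec_mulVec, ← h]⟩
  · refine fun h ↦ toLin'.injective (LinearMap.ext fun v ↦ ?_)
    obtain ⟨w, hw⟩ := h ⟨v, rfl⟩
    rw [toLin'_mul_apply, ← hw, ← toLin'_mul_apply, hP.eq]

theorem exists_isIdempotentElem_range_eq (W : Submodule K (n → K)) :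
    ∃ P : Matrix n n K, IsIdempotentElem P ∧ LinearMap.range (toLin' P) = W := by
  obtain ⟨W', hW'⟩ := W.exists_isCompl
  let f : (n → K) →ₗ[K] (n → K) := W.subtype ∘ₗ W.projectionOnto W' hW'
  have hf : f ∘ₗ f = f := LinearMap.ext fun v ↦
    congrArg Subtype.val (Submodule.projectionOnto_apply_left hW' _)
  refine ⟨LinearMap.toMatrix' f, ?_, ?_⟩
  · rw [IsIdempotentElem, ← LinearMap.toMatrix'_comp, hf]
  · rw [toLin'_toMatrix', LinearMap.range_comp, Submodule.range_projectionOnto,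
      Submodule.map_subtype_top]

theorem finrank_map_toLin' (A : GL n K) (V : Submodule K (n → K)) :
    Module.finrank K (V.map (toLin' A.1)) = Module.finrank K V :=
  (Submodule.equivMapOfInjective _ (mulVec_injective_of_isUnit A.isUnit) V).finrank_eq.symm

end Subspaces

section StronglyIrreducible

variable {G K n : Type*} [Group G] [Field K] [Fintype n] [DecidableEq n]

/-- A linear representation is strongly irreducible if its restriction to every subgroup of finite
index leaves no nontrivial proper subspace invariant. -/
def IsStronglyIrreducible (ρ : G →* GL n K) : Prop :=
  ∀ H : Subgroup G, H.FiniteIndex → ∀ V : Submodule K (n → K),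
    (∀ h ∈ H, ∀ v ∈ V, (ρ h).1 *ᵥ v ∈ V) → V = ⊥ ∨ V = ⊤

theorem map_toLin'_mul (ρ : G →* GL n K) (g h : G) (V : Submodule K (n → K)) :
    V.map (toLin' (ρ (g * h)).1) = (V.map (toLin' (ρ h).1)).map (toLin' (ρ g).1) := by
  rw [map_mul, Units.val_mul, toLin'_mul, Submodule.map_comp]

/-- The action of a group on the subspaces of a linear representation. -/
@[reducible]
noncomputable def subspaceAction (ρ : G →* GL n K) : MulAction G (Submodule K (n → K)) where
  smul g V := V.map (toLin' (ρ g).1)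
  one_smul V := by
    change V.map (toLin' (ρ 1).1) = V
    rw [map_one, Units.val_one, toLin'_one, Submodule.map_id]
  mul_smul g h V := map_toLin'_mul ρ g h V

variable {ρ : G →* GL n K}

theorem IsStronglyIrreducible.eq_bot_or_eq_top_of_finite_orbit (hρ : IsStronglyIrreducible ρ)
    {V : Submodule K (n → K)} (hV : (Set.range fun g ↦ V.map (toLin' (ρ g).1)).Finite) :
    V = ⊥ ∨ V = ⊤ := by
  let _ := subspaceAction ρ
  refine hρ (MulAction.stabilizer G V) ⟨?_⟩ V fun g hg v hv ↦ ?_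
  · rw [MulAction.index_stabilizer]
    exact ((Set.ncard_pos hV).2 ⟨_, MulAction.mem_orbit_self V⟩).ne'
  · have hgV : V.map (toLin' (ρ g).1) = V := hg
    rw [← hgV]
    exact ⟨v, hv, rfl⟩

theorem IsStronglyIrreducible.not_forall_exists_one_sub_mul_eq_zero
    (hρ : IsStronglyIrreducible ρ) (S : SymmGenSet G) {J : Type*} [Finite J] [Nonempty J]
    (t : J → G) {P : Matrix n n K} (hP : IsIdempotentElem P) (hP0 : P ≠ 0) (hP1 : 1 - P ≠ 0) :
    ¬ ∀ s ∈ S.carrier, ∀ j, ∃ j', (1 - P) * ((ρ ((t j')⁻¹ * s * t j)).1 * P) = 0 := by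
  intro h
  set V := LinearMap.range (toLin' P) with hV
  have hstep : ∀ s ∈ S.carrier, ∀ j, ∃ j',
      V.map (toLin' (ρ (s * t j)).1) = V.map (toLin' (ρ (t j')).1) := fun s hs j ↦ by
    obtain ⟨j', hj'⟩ := h s hs j
    rw [one_sub_mul_eq_zero_iff_range_le hP, toLin'_mul, LinearMap.range_comp] at hj'
    refine ⟨j', Submodule.eq_of_le_of_finrank_eq ?_ (by simp only [finrank_map_toLin'])⟩
    rw [show s * t j = t j' * ((t j')⁻¹ * s * t j) by group, map_toLin'_mul]
    exact Submodule.map_mono hj'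
  obtain ⟨j₀⟩ := ‹Nonempty J›
  have horbit : ∀ g, ∃ j, V.map (toLin' (ρ (g * t j₀)).1) = V.map (toLin' (ρ (t j)).1) := by
    intro g
    induction g using S.induction with
    | one => exact ⟨j₀, by rw [one_mul]⟩
    | mul s hs g ih =>
      obtain ⟨j, hj⟩ := ih
      obtain ⟨j', hj'⟩ := hstep s hs j
      exact ⟨j', by rw [mul_assoc, map_toLin'_mul, hj, ← map_toLin'_mul, hj']⟩
  have hfin : (Set.range fun g ↦ V.map (toLin' (ρ g).1)).Finite := by
    refine (Set.finite_range fun j ↦ V.map (toLin' (ρ (t j)).1)).subset ?_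
    rintro _ ⟨g, rfl⟩
    obtain ⟨j, hj⟩ := horbit (g * (t j₀)⁻¹)
    rw [inv_mul_cancel_right] at hj
    exact ⟨j, hj.symm⟩
  rcases hρ.eq_bot_or_eq_top_of_finite_orbit hfin with h0 | h1
  · exact hP0 (toLin'.map_eq_zero_iff.1 (LinearMap.range_eq_bot.1 h0))
  · refine hP1 ?_
    rw [← mul_one (1 - P), one_sub_mul_eq_zero_iff_range_le hP, ← hV, h1]
    exact le_top

end StronglyIrreducible

section Transfer

variable {ι G K n : Type*} [Group G] [Field K] [Fintype n] [DecidableEq n]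
  {ρ : G →* GL n K} {S : ι → SymmGenSet G} {U : Ultrafilter ι}
  {σ : boundedSeq S →* GL n (Ultrapower U K)}

theorem eventually_forall_exists_one_sub_mul_eq_zero
    (hσ : ∀ h, IsMatrixUltralimit (fun i ↦ (ρ (h.1 i)).1) (σ h).1)
    {Γ₀ : Subgroup (boundedSeq S)} [Γ₀.FiniteIndex] {P : ι → Matrix n n K}
    {Q : Matrix n n (Ultrapower U K)} (hPQ : IsMatrixUltralimit P Q)
    (hinv : ∀ h ∈ Γ₀, (1 - Q) * ((σ h).1 * Q) = 0) :
    ∀ᶠ i in (U : Filter ι), ∀ s ∈ (S i).carrier, ∀ j : boundedSeq S ⧸ Γ₀,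
      ∃ j' : boundedSeq S ⧸ Γ₀,
        (1 - P i) * ((ρ ((j'.out.1 i)⁻¹ * s * j.out.1 i)).1 * P i) = 0 := by
  refine eventually_forall_mem_carrier fun s ↦ eventually_all.2 fun j ↦ ?_
  let j' : boundedSeq S ⧸ Γ₀ := QuotientGroup.mk (s * j.out)
  have hmem : j'.out⁻¹ * s * j.out ∈ Γ₀ := by
    rw [mul_assoc, ← QuotientGroup.eq]
    exact Quotient.out_eq j'
  have hlim := (IsMatrixUltralimit.one.sub hPQ).mul ((hσ (j'.out⁻¹ * s * j.out)).mul hPQ)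
  rw [hinv _ hmem] at hlim
  filter_upwards [eventually_matrix_eq_zero_of_ultrapower hlim] with i hi
  exact ⟨j', hi⟩

theorem IsStronglyIrreducible.span_ultrapower_eq_top [IsAlgClosed K] [Nonempty n]
    (hρ : IsStronglyIrreducible ρ)
    (hσ : ∀ h, IsMatrixUltralimit (fun i ↦ (ρ (h.1 i)).1) (σ h).1)
    (Γ₀ : Subgroup (boundedSeq S)) [Γ₀.FiniteIndex] :
    Submodule.span (Ultrapower U K) ((fun g ↦ (σ g).1) '' (Γ₀ : Set (boundedSeq S))) = ⊤ := by
  refine span_submonoid_eq_top_of_forall_invariant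
    (Γ₀.toSubmonoid.map ((Units.coeHom _).comp σ)) fun W hW ↦ ?_
  by_contra! hne
  obtain ⟨Q, hQ, rfl⟩ := exists_isIdempotentElem_range_eq W
  have hQ0 : Q ≠ 0 := fun h ↦ hne.1 (by rw [h, map_zero, LinearMap.range_zero])
  have hQ1 : 1 - Q ≠ 0 := fun h ↦ hne.2 (by
    rw [← sub_eq_zero.1 h, toLin'_one, LinearMap.range_id])
  have hinv : ∀ h ∈ Γ₀, (1 - Q) * ((σ h).1 * Q) = 0 := fun h hh ↦ by
    rw [one_sub_mul_eq_zero_iff_range_le hQ, toLin'_mul, LinearMap.range_comp]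
    exact Submodule.map_le_iff_le_comap.2 fun v hv ↦ hW _ ⟨h, hh, rfl⟩ v hv
  obtain ⟨P, hPQ⟩ := exists_isMatrixUltralimit Q
  have hidem : ∀ᶠ i in (U : Filter ι), P i * P i = P i := by
    have hlim := (hPQ.mul hPQ).sub hPQ
    rw [hQ.eq, sub_self] at hlim
    filter_upwards [eventually_matrix_eq_zero_of_ultrapower hlim] with i hi
    exact sub_eq_zero.1 hi
  obtain ⟨i, hi, hPi, hPi0, hPi1⟩ :=
    ((eventually_forall_exists_one_sub_mul_eq_zero hσ hPQ hinv).and <| hidem.and <|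
      (hPQ.eventually_ne_zero hQ0).and
        ((IsMatrixUltralimit.one.sub hPQ).eventually_ne_zero hQ1)).exists
  exact hρ.not_forall_exists_one_sub_mul_eq_zero (S i)
    (fun j : boundedSeq S ⧸ Γ₀ ↦ j.out.1 i) hPi hPi0 hPi1 hi

theorem IsStronglyIrreducible.exists_eventually_det_flatten_ne_zero [IsAlgClosed K] [Nonempty n]
    (hρ : IsStronglyIrreducible ρ) (S : ι → SymmGenSet G) (U : Ultrafilter ι)
    (Γ₀ : Subgroup (boundedSeq S)) [Γ₀.FiniteIndex] :
    ∃ g : n × n → boundedSeq S, (∀ p, g p ∈ Γ₀) ∧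
      ∀ᶠ i in (U : Filter ι), (flatten fun p ↦ (ρ ((g p).1 i)).1).det ≠ 0 := by
  obtain ⟨σ, hσ⟩ := exists_monoidHom_isMatrixUltralimit (U := U) (boundedSeqEval S ρ)
    fun h a b ↦ ⟨1, .of_forall fun i ↦ trivialAbs_le_one _⟩
  obtain ⟨X, hX, hdet⟩ :=
    exists_det_flatten_ne_zero_of_span_eq_top (hρ.span_ultrapower_eq_top hσ Γ₀)
  choose g hg hgX using hX
  obtain rfl : (fun p ↦ (σ (g p)).1) = X := funext hgX
  have hlim : IsMatrixUltralimit (fun i ↦ flatten fun p ↦ (ρ ((g p).1 i)).1)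
      (flatten fun p ↦ (σ (g p)).1) := fun p q ↦ hσ (g p) q.1 q.2
  exact ⟨g, hg, hlim.det.eventually_ne_zero hdet⟩

end Transfer

/-! ### Gram matrices of the trace form -/

section Gram

variable {R F n : Type*} [CommRing R] [Field F] [Fintype n]

/-- The Gram matrix of the matrices `X p` with respect to the trace form. -/
def gramMatrix (X : n × n → Matrix n n R) : Matrix (n × n) (n × n) R :=
  Matrix.of fun p q ↦ (X p * X q).trace

theorem gramMatrix_eq_flatten_mul (X : n × n → Matrix n n R) :
    gramMatrix X = flatten X * ((flatten X).submatrix id (Equiv.prodComm n n))ᵀ := by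
  ext p q
  simp only [gramMatrix, flatten, Matrix.of_apply, Matrix.trace, Matrix.diag, Matrix.mul_apply,
    Matrix.transpose_apply, Matrix.submatrix_apply, Fintype.sum_prod_type, id,
    Equiv.prodComm_apply, Prod.swap]

variable [DecidableEq n]

theorem det_gramMatrix_map {R' : Type*} [CommRing R'] (f : R →+* R') (X : n × n → Matrix n n R) :
    (gramMatrix fun p ↦ (X p).map f).det = f (gramMatrix X).det := by
  rw [RingHom.map_det]
  congr 1
  ext p q
  rw [RingHom.mapMatrix_apply, Matrix.map_apply, gramMatrix, gramMatrix, Matrix.of_apply,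
    Matrix.of_apply, ← Matrix.map_mul]
  exact (AddMonoidHom.map_trace f.toAddMonoidHom _).symm

theorem det_gramMatrix_ne_zero_iff (X : n × n → Matrix n n F) :
    (gramMatrix X).det ≠ 0 ↔ (flatten X).det ≠ 0 := by
  have hswap : ((flatten X).submatrix id (Equiv.prodComm n n)).det =
      ((Equiv.Perm.sign (Equiv.prodComm n n : Equiv.Perm (n × n)) : ℤ) : F) * (flatten X).det :=
    Matrix.det_permute' _ _
  rw [gramMatrix_eq_flatten_mul, Matrix.det_mul, Matrix.det_transpose, hswap]
  rcases Int.units_eq_one_or (Equiv.Perm.sign (Equiv.prodComm n n : Equiv.Perm (n × n)))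
    with h | h <;> simp [h]

theorem eq_sum_trace_mul_smul {X : n × n → Matrix n n F} {V : Matrix (n × n) (n × n) F}
    (hV : gramMatrix X * V = 1) (M : Matrix n n F) :
    M = ∑ p, (∑ q, (M * X q).trace * V q p) • X p := by
  have hflat : IsUnit (flatten X).det :=
    isUnit_iff_ne_zero.2 ((det_gramMatrix_ne_zero_iff X).1 (Matrix.det_ne_zero_of_right_inverse hV))
  set c : n × n → F := (fun q ↦ M q.1 q.2) ᵥ* (flatten X)⁻¹ with hc
  have hcM : c ᵥ* flatten X = fun q ↦ M q.1 q.2 := by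
    rw [hc, Matrix.vecMul_vecMul, Matrix.nonsing_inv_mul _ hflat, Matrix.vecMul_one]
  have hM : M = ∑ p, c p • X p := by
    ext a b
    rw [Matrix.sum_apply, ← congrFun hcM (a, b)]
    rfl
  have htrace : (fun q ↦ (M * X q).trace) = c ᵥ* gramMatrix X := by
    ext q
    rw [hM, Finset.sum_mul, Matrix.trace_sum]
    exact Finset.sum_congr rfl fun p _ ↦ by
      rw [Matrix.smul_mul, Matrix.trace_smul, smul_eq_mul]; rfl
  have hcV : c = (fun q ↦ (M * X q).trace) ᵥ* V := by
    rw [htrace, Matrix.vecMul_vecMul, hV, Matrix.vecMul_one]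
  conv_lhs => rw [hM, hcV]
  rfl

theorem abs_sum_le_card_mul (v : AbsoluteValue F ℝ) {α : Type*} [Fintype α] {f : α → F} {B : ℝ}
    (h : ∀ i, v (f i) ≤ B) : v (∑ i, f i) ≤ Fintype.card α * B := by
  refine (v.sum_le _ _).trans ((Finset.sum_le_card_nsmul _ _ B fun i _ ↦ h i).trans ?_)
  rw [nsmul_eq_mul, Finset.card_univ]

theorem abs_trace_mul_le (v : AbsoluteValue F ℝ) {X : n × n → Matrix n n F}
    {V : Matrix (n × n) (n × n) F} (hV : gramMatrix X * V = 1) {N M : Matrix n n F} {B C : ℝ}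
    (hB : 0 ≤ B) (hC : 0 ≤ C) (hVB : ∀ q p, v (V q p) ≤ B) (hN : ∀ p, v (N * X p).trace ≤ B)
    (hM : ∀ q, v (M * X q).trace ≤ C) :
    v (N * M).trace ≤ Fintype.card (n × n) * (Fintype.card (n × n) * B * B) * C := by
  have hcoef : ∀ p, v (∑ q, (M * X q).trace * V q p) ≤ Fintype.card (n × n) * (C * B) :=
    fun p ↦ abs_sum_le_card_mul v fun q ↦ by
      rw [v.map_mul]
      exact mul_le_mul (hM q) (hVB q p) (v.nonneg _) hC
  have htrace : (N * M).trace = ∑ p, (∑ q, (M * X q).trace * V q p) * (N * X p).trace := by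
    conv_lhs => rw [eq_sum_trace_mul_smul hV M]
    simp only [Finset.mul_sum, Matrix.mul_smul, Matrix.trace_sum, Matrix.trace_smul, smul_eq_mul]
  calc v (N * M).trace
      ≤ Fintype.card (n × n) * (Fintype.card (n × n) * (C * B) * B) := by
        rw [htrace]
        refine abs_sum_le_card_mul v fun p ↦ ?_
        rw [v.map_mul]
        exact mul_le_mul (hcoef p) (hN p) (v.nonneg _) (by positivity)
    _ = _ := by ring

theorem abs_trace_le_of_mem_pow (v : AbsoluteValue F ℝ) {X : n × n → Matrix n n F}
    {V : Matrix (n × n) (n × n) F} (hV : gramMatrix X * V = 1) {G : Type*} [Monoid G]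
    (φ : G →* Matrix n n F) {T : Set G} {B : ℝ} (hB : 0 ≤ B) (hVB : ∀ q p, v (V q p) ≤ B)
    (hT : ∀ s ∈ T, ∀ p q, v (φ s * X p * X q).trace ≤ B) (hX : ∀ p, v (X p).trace ≤ B) {l : ℕ}
    {g : G} (hg : g ∈ T ^ l) :
    v (φ g).trace ≤
      (Fintype.card (n × n) * (Fintype.card (n × n) * B * B)) ^ (l + 1) * B := by
  have hstep : ∀ l, ∀ g ∈ T ^ l, ∀ q, v (φ g * X q).trace ≤
      (Fintype.card (n × n) * (Fintype.card (n × n) * B * B)) ^ l * B := by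
    intro l
    induction l with
    | zero =>
      intro g hg q
      rw [pow_zero, Set.mem_one] at hg
      rw [hg, map_one, one_mul, pow_zero, one_mul]
      exact hX q
    | succ l ih =>
      intro g hg q
      rw [pow_succ'] at hg
      obtain ⟨s, hs, g', hg', rfl⟩ := Set.mem_mul.1 hg
      rw [map_mul, Matrix.trace_mul_comm, ← mul_assoc, pow_succ', mul_assoc (_ * _)]
      refine abs_trace_mul_le v hV hB (by positivity) hVB (fun p ↦ ?_) (ih g' hg')
      rw [mul_assoc, Matrix.trace_mul_comm]
      exact hT s hs p q
  rw [← one_mul (φ g), pow_succ', mul_assoc (_ * _)]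
  exact abs_trace_mul_le v hV hB (by positivity) hVB (fun p ↦ by rw [one_mul]; exact hX p)
    (hstep l g hg)

end Gram

section Eigenvalues

variable {F n : Type*} [Field F] [Fintype n] [DecidableEq n] (v : AbsoluteValue F ℝ)

theorem abs_det_le {A : Matrix n n F} {B : ℝ} (h : ∀ a b, v (A a b) ≤ B) :
    v A.det ≤ (Fintype.card n).factorial * B ^ Fintype.card n := by
  rw [← nsmul_eq_mul]
  exact Matrix.det_le h

theorem abs_adjugate_le {A : Matrix n n F} {B : ℝ} (hB : 1 ≤ B) (h : ∀ a b, v (A a b) ≤ B)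
    (a b : n) : v (A.adjugate a b) ≤ (Fintype.card n).factorial * B ^ Fintype.card n := by
  rw [Matrix.adjugate_apply]
  refine abs_det_le v fun c d ↦ ?_
  rw [Matrix.updateRow_apply, Pi.single_apply]
  split_ifs
  · rwa [v.map_one]
  · rw [v.map_zero]
    exact zero_le_one.trans hB
  · exact h c d

theorem abs_le_of_mem_roots_charpoly {A : Matrix n n F} {B : ℝ} (h : ∀ a b, v (A a b) ≤ B) {x : F}
    (hx : x ∈ A.charpoly.roots) : v x ≤ Fintype.card n * B := by
  have hdet : (Matrix.scalar n x - A).det = 0 := by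
    rw [← Matrix.eval_charpoly]
    exact (Polynomial.mem_roots'.1 hx).2
  obtain ⟨u, hu, hu0⟩ := Matrix.exists_mulVec_eq_zero_iff.2 hdet
  obtain ⟨j₀, hj₀⟩ := Function.ne_iff.1 hu
  have : Nonempty n := ⟨j₀⟩
  obtain ⟨j, hj⟩ := Finite.exists_max fun j ↦ v (u j)
  have heig : x * u j = ∑ b, A j b * u b := by
    have hj := congrFun hu0 j
    rwa [Matrix.sub_mulVec, Pi.sub_apply, Pi.zero_apply, sub_eq_zero, Matrix.scalar_apply,
      Matrix.mulVec_diagonal] at hj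
  refine le_of_mul_le_mul_right ?_ ((v.pos hj₀).trans_le (hj j₀))
  rw [← v.map_mul, heig, mul_assoc]
  refine abs_sum_le_card_mul v fun b ↦ ?_
  rw [v.map_mul]
  exact mul_le_mul (h j b) (hj b) (v.nonneg _) ((v.nonneg _).trans (h j b))

theorem abs_trace_le_of_roots_charpoly_le [IsAlgClosed F] {A : Matrix n n F} {B : ℝ}
    (h : ∀ x ∈ A.charpoly.roots, v x ≤ B) : v A.trace ≤ Fintype.card n * B := by
  have hcard : A.charpoly.roots.card = Fintype.card n := by
    rw [IsAlgClosed.card_roots_eq_natDegree, Matrix.charpoly_natDegree_eq_dim]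
  rw [Matrix.trace_eq_sum_roots_charpoly, ← hcard]
  have hsum : ∀ s : Multiset F, (∀ x ∈ s, v x ≤ B) → v s.sum ≤ s.card * B := by
    intro s hs
    induction s using Multiset.induction with
    | empty => simp
    | cons a s ih =>
      rw [Multiset.sum_cons, Multiset.card_cons, Nat.cast_add_one, add_one_mul, add_comm (_ * _)]
      exact (v.add_le _ _).trans (add_le_add (hs a (Multiset.mem_cons_self a s))
        (ih fun x hx ↦ hs x (Multiset.mem_cons_of_mem hx)))
  exact hsum _ h

theorem exists_mem_roots_charpoly_abs_le_one [IsAlgClosed F] [Nonempty n] {A : Matrix n n F}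
    (hA : A.det = 1) : ∃ x ∈ A.charpoly.roots, v x ≤ 1 := by
  by_contra! hbig
  have hroots : A.charpoly.roots ≠ 0 := by
    rw [← Multiset.card_pos, IsAlgClosed.card_roots_eq_natDegree, Matrix.charpoly_natDegree_eq_dim]
    exact Fintype.card_pos
  have hprod : ∀ s : Multiset F, s ≠ 0 → (∀ x ∈ s, 1 < v x) → 1 < v s.prod := by
    intro s hs0 hs
    induction s using Multiset.induction with
    | empty => exact absurd rfl hs0
    | cons a s ih =>
      have ha := hs a (Multiset.mem_cons_self a s)
      rw [Multiset.prod_cons, v.map_mul]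
      rcases eq_or_ne s 0 with rfl | hs'
      · rwa [Multiset.prod_zero, v.map_one, mul_one]
      · exact one_lt_mul_of_lt_of_le ha (ih hs' fun x hx ↦ hs x (Multiset.mem_cons_of_mem hx)).le
  have hgt := hprod _ hroots hbig
  rw [← Matrix.det_eq_prod_roots_charpoly, hA, v.map_one] at hgt
  exact lt_irrefl _ hgt

end Eigenvalues

/-! ### Free subgroups in degenerating families of representations -/

section Conjugation

variable {F n : Type*} [Field F] [Fintype n] [DecidableEq n] {v : AbsoluteValue F ℝ}

theorem mem_span_range_of_det_gramMatrix_ne_zero {X : n × n → Matrix n n F}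
    (hX : (gramMatrix X).det ≠ 0) (M : Matrix n n F) : M ∈ Submodule.span F (Set.range X) := by
  rw [eq_sum_trace_mul_smul (Matrix.mul_nonsing_inv _ (isUnit_iff_ne_zero.2 hX)) M]
  exact Submodule.sum_mem _ fun p _ ↦
    Submodule.smul_mem _ _ (Submodule.subset_span (Set.mem_range_self p))

-- Take columns maximizing the absolute value of the determinant and use Cramer's rule.
theorem exists_col_mem_range_and_abs_inv_mulVec_le_one {α : Type*} [Finite α] {w : α → n → F}
    (hw : Submodule.span F (Set.range w) = ⊤) :
    ∃ P : GL n F, (∀ b, ∃ p, P.1.col b = w p) ∧ ∀ p a, v ((P⁻¹.1 *ᵥ w p) a) ≤ 1 := by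
  let D : (n → α) → Matrix n n F := fun f ↦ (Matrix.of fun b ↦ w (f b))ᵀ
  have hex : ∃ f, (D f).det ≠ 0 := by
    obtain ⟨Y, hY, hdet⟩ := exists_det_ne_zero_of_span_eq_top hw
    choose f hf using hY
    refine ⟨f, ?_⟩
    rwa [Matrix.det_transpose, funext hf]
  have : Nonempty (n → α) := ⟨hex.choose⟩
  obtain ⟨f, hf⟩ := Finite.exists_max fun f ↦ v (D f).det
  have hpos : 0 < v (D f).det := by
    obtain ⟨f', hf'⟩ := hex
    exact (v.pos hf').trans_le (hf f')
  let P : GL n F := Matrix.GeneralLinearGroup.mkOfDetNeZero (D f) (v.pos_iff.1 hpos)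
  refine ⟨P, fun b ↦ ⟨f b, rfl⟩, fun p a ↦ ?_⟩
  have hcramer : (D f).det • (P⁻¹.1 *ᵥ w p) = Matrix.cramer (D f) (w p) := by
    rw [show P⁻¹.1 = (D f)⁻¹ from Matrix.coe_units_inv P]
    exact Matrix.det_smul_inv_mulVec_eq_cramer _ _ (isUnit_iff_ne_zero.2 (v.pos_iff.1 hpos))
  have hupdate : (D f).updateCol a (w p) = D (Function.update f a p) := by
    ext c b
    rw [Matrix.updateCol_apply]
    obtain rfl | hb := eq_or_ne b a
    · simp [D]
    · simp [D, hb]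
  refine le_of_mul_le_mul_left ?_ hpos
  rw [← v.map_mul, ← smul_eq_mul, ← Pi.smul_apply, hcramer, Matrix.cramer_apply, hupdate, mul_one]
  exact hf _

theorem abs_conj_le {X : n × n → Matrix n n F} (hX : (gramMatrix X).det ≠ 0) {P : GL n F}
    {e : n → F} (hP : ∀ b, ∃ p, P.1.col b = X p *ᵥ e)
    (hv : ∀ p a, v ((P⁻¹.1 *ᵥ (X p *ᵥ e)) a) ≤ 1) {N : Matrix n n F} {B C : ℝ} (hC : 0 ≤ C)
    (hB : ∀ p q, v ((gramMatrix X)⁻¹ p q) ≤ B) (hN : ∀ p q, v (N * X p * X q).trace ≤ C)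
    (a b : n) :
    v ((P⁻¹.1 * N * P.1) a b) ≤ Fintype.card (n × n) * (Fintype.card (n × n) * (C * B)) := by
  obtain ⟨r, hr⟩ := hP b
  have hentry : (P⁻¹.1 * N * P.1) a b = (P⁻¹.1 *ᵥ ((N * X r) *ᵥ e)) a := by
    rw [← Matrix.mulVec_mulVec e N (X r), ← hr, Matrix.mulVec_mulVec, Matrix.mul_apply]
    rfl
  rw [hentry, eq_sum_trace_mul_smul (Matrix.mul_nonsing_inv _ (isUnit_iff_ne_zero.2 hX)) (N * X r),
    Matrix.sum_mulVec, Matrix.mulVec_sum, Finset.sum_apply]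
  refine abs_sum_le_card_mul v fun p ↦ ?_
  rw [Matrix.smul_mulVec, Matrix.mulVec_smul, Pi.smul_apply, smul_eq_mul, v.map_mul]
  have hcoef : v (∑ q, (N * X r * X q).trace * (gramMatrix X)⁻¹ q p) ≤
      Fintype.card (n × n) * (C * B) := abs_sum_le_card_mul v fun q ↦ by
    rw [v.map_mul]
    exact mul_le_mul (hN r q) (hB q p) (v.nonneg _) hC
  exact (mul_le_of_le_one_right (v.nonneg _) (hv p a)).trans hcoef

theorem abs_inv_gramMatrix_le {X : n × n → Matrix n n F} {c C : ℝ} (hc : 0 < c) (hC : 1 ≤ C)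
    (hdet : c ≤ v (gramMatrix X).det) (hX : ∀ p q, v (X p * X q).trace ≤ C) (p q : n × n) :
    v ((gramMatrix X)⁻¹ p q) ≤
      c⁻¹ * ((Fintype.card (n × n)).factorial * C ^ Fintype.card (n × n)) := by
  rw [Matrix.inv_def, Matrix.smul_apply, smul_eq_mul, v.map_mul, Ring.inverse_eq_inv', map_inv₀]
  exact mul_le_mul (inv_anti₀ hc hdet) (abs_adjugate_le v hC hX p q) (v.nonneg _) (by positivity)

theorem exists_abs_conj_le [Nonempty n] {X : n × n → Matrix n n F} {c : ℝ} (hc : 0 < c)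
    (hdet : c ≤ v (gramMatrix X).det) :
    ∃ P : GL n F, ∀ (N : Matrix n n F) (C : ℝ), 1 ≤ C → (∀ p q, v (X p * X q).trace ≤ C) →
      (∀ p q, v (N * X p * X q).trace ≤ C) → ∀ a b, v ((P⁻¹.1 * N * P.1) a b) ≤
        Fintype.card (n × n) * (Fintype.card (n × n) *
          (C * (c⁻¹ * ((Fintype.card (n × n)).factorial * C ^ Fintype.card (n × n))))) := by
  obtain ⟨a₀⟩ := ‹Nonempty n›
  let e : n → F := Pi.single a₀ 1
  have hX : (gramMatrix X).det ≠ 0 := v.pos_iff.1 (hc.trans_le hdet)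
  have hspan : Submodule.span F (Set.range fun p ↦ X p *ᵥ e) = ⊤ := by
    refine eq_top_iff.2 fun w _ ↦ ?_
    have hw : (Matrix.of fun a _ ↦ w a) *ᵥ e = w := by
      ext a
      simp [e]
    rw [← hw, eq_sum_trace_mul_smul (Matrix.mul_nonsing_inv _ (isUnit_iff_ne_zero.2 hX))
      (Matrix.of fun a _ ↦ w a), Matrix.sum_mulVec]
    refine Submodule.sum_mem _ fun p _ ↦ ?_
    rw [Matrix.smul_mulVec]
    exact Submodule.smul_mem _ _ (Submodule.subset_span ⟨p, rfl⟩)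
  obtain ⟨P, hcol, hP⟩ := exists_col_mem_range_and_abs_inv_mulVec_le_one (v := v) hspan
  exact ⟨P, fun N C hC hXC hNC ↦ abs_conj_le hX hcol hP (zero_le_one.trans hC)
    (abs_inv_gramMatrix_le hc hC hdet hXC) hNC⟩

theorem exists_mulVec_eq_smul_of_eval_charpoly_eq_zero {A : Matrix n n F} {x : F}
    (hx : A.charpoly.eval x = 0) : ∃ u, u ≠ 0 ∧ A *ᵥ u = x • u := by
  rw [Matrix.eval_charpoly] at hx
  obtain ⟨u, hu, hu0⟩ := Matrix.exists_mulVec_eq_zero_iff.2 hx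
  refine ⟨u, hu, ?_⟩
  rw [Matrix.sub_mulVec, sub_eq_zero] at hu0
  ext j
  rw [← hu0, Matrix.scalar_apply, Matrix.mulVec_diagonal, Pi.smul_apply, smul_eq_mul]

end Conjugation

section Families

variable {ι F n Γ : Type*} [Field F] [Fintype n] [DecidableEq n] [Group Γ] {U : Ultrafilter ι}
  {av : ι → AbsoluteValue F ℝ} {M : ι → Γ →* GL n F}

theorem exists_eventually_forall_abs_trace_le
    (htrace : ∀ h, ∃ C, ∀ᶠ i in (U : Filter ι), av i (M i h).1.trace ≤ C) {α : Type*} [Finite α]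
    (x : α → Γ) :
    ∃ C : ℝ, 1 ≤ C ∧ ∀ᶠ i in (U : Filter ι), ∀ j, av i (M i (x j)).1.trace ≤ C := by
  choose C hC using fun j ↦ htrace (x j)
  obtain ⟨B, hB⟩ := (Set.finite_range C).bddAbove
  refine ⟨max 1 B, le_max_left _ _, eventually_all.2 fun j ↦ (hC j).mono fun i hi ↦ ?_⟩
  exact hi.trans ((hB (Set.mem_range_self j)).trans (le_max_right _ _))

theorem exists_conj_eventually_abs_le [Nonempty n]
    (htrace : ∀ h, ∃ C, ∀ᶠ i in (U : Filter ι), av i (M i h).1.trace ≤ C) {g : n × n → Γ} {c : ℝ}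
    (hc : 0 < c) (hg : ∀ᶠ i in (U : Filter ι), c ≤ av i (gramMatrix fun p ↦ (M i (g p)).1).det) :
    ∃ P : ι → GL n F, ∀ h a b, ∃ C, ∀ᶠ i in (U : Filter ι),
      av i (((P i)⁻¹.1 * (M i h).1 * (P i).1) a b) ≤ C := by
  have hconj : ∀ i, ∃ P : GL n F, c ≤ av i (gramMatrix fun p ↦ (M i (g p)).1).det → _ := fun i ↦ by
    by_cases h : c ≤ av i (gramMatrix fun p ↦ (M i (g p)).1).det
    · obtain ⟨P, hP⟩ := exists_abs_conj_le hc h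
      exact ⟨P, fun _ ↦ hP⟩
    · exact ⟨1, fun h' ↦ absurd h' h⟩
  choose P hP using hconj
  refine ⟨P, fun h a b ↦ ?_⟩
  obtain ⟨B, hB1, hB⟩ := exists_eventually_forall_abs_trace_le htrace
    fun x : (n × n) × (n × n) ↦ h * g x.1 * g x.2
  obtain ⟨B', -, hB'⟩ := exists_eventually_forall_abs_trace_le htrace
    fun x : (n × n) × (n × n) ↦ g x.1 * g x.2
  refine ⟨_, (hB.and (hB'.and hg)).mono fun i ⟨hi, hi', hdet⟩ ↦
    hP i hdet _ (max B B') (hB1.trans (le_max_left _ _)) (fun p q ↦ ?_) (fun p q ↦ ?_) a b⟩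
  · rw [← Units.val_mul, ← map_mul]
    exact (hi' (p, q)).trans (le_max_right _ _)
  · rw [← Units.val_mul, ← map_mul, ← Units.val_mul, ← map_mul]
    exact (hi (p, q)).trans (le_max_left _ _)

variable (U av) in
/-- A family of representations spans uniformly if every subgroup of finite index contains elements
whose images are a basis of the matrix algebra with Gram determinant bounded away from zero. -/
def SpansUniformly (M : ι → Γ →* GL n F) : Prop :=
  ∀ Γ₀ : Subgroup Γ, Γ₀.FiniteIndex → ∃ g : n × n → Γ, (∀ p, g p ∈ Γ₀) ∧ ∃ c > 0,
    ∀ᶠ i in (U : Filter ι), c ≤ av i (gramMatrix fun p ↦ (M i (g p)).1).det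

theorem SpansUniformly.conj (hM : SpansUniformly U av M) (P : ι → GL n F) :
    SpansUniformly U av fun i ↦ (MulAut.conj (P i)).toMonoidHom.comp (M i) := by
  intro Γ₀ hΓ₀
  obtain ⟨g, hg, c, hc, hdet⟩ := hM Γ₀ hΓ₀
  refine ⟨g, hg, c, hc, hdet.mono fun i hi ↦ hi.trans_eq ?_⟩
  congr 2
  ext p q
  simp only [gramMatrix, Matrix.of_apply, ← Units.val_mul, ← map_mul]
  exact (Matrix.trace_units_conj (P i) _).symm

theorem SpansUniformly.span_ultralimit_eq_top (hM : SpansUniformly U av M)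
    {σ : Γ →* GL n (Ultralimit U av)} (hσ : ∀ h, IsMatrixUltralimit (fun i ↦ (M i h).1) (σ h).1)
    {Γ₀ : Subgroup Γ} (hΓ₀ : Γ₀.FiniteIndex) :
    Submodule.span (Ultralimit U av) ((fun g ↦ (σ g).1) '' (Γ₀ : Set Γ)) = ⊤ := by
  obtain ⟨g, hg, c, hc, hdet⟩ := hM Γ₀ hΓ₀
  have hgram : IsMatrixUltralimit (fun i ↦ gramMatrix fun p ↦ (M i (g p)).1)
      (gramMatrix fun p ↦ (σ (g p)).1) := fun p q ↦ ((hσ (g p)).mul (hσ (g q))).trace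
  have hne : (gramMatrix fun p ↦ (σ (g p)).1).det ≠ 0 :=
    (ultralimitAbs U av).pos_iff.1 (hc.trans_le (ge_of_tendsto hgram.det.tendsto hdet))
  refine eq_top_iff.2 fun N _ ↦
    Submodule.span_mono ?_ (mem_span_range_of_det_gramMatrix_ne_zero hne N)
  rintro _ ⟨p, rfl⟩
  exact ⟨g p, hg p, rfl⟩

theorem IsMatrixUltralimit.exists_mulVec_eq_smul {A : ι → Matrix n n F}
    {X : Matrix n n (Ultralimit U av)} (hA : IsMatrixUltralimit A X) {y : ι → F}
    {x : Ultralimit U av} (hx : IsUltralimit y x)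
    (hy : ∀ᶠ i in (U : Filter ι), y i ∈ (A i).charpoly.roots) : ∃ u, u ≠ 0 ∧ X *ᵥ u = x • u := by
  have hlim : IsMatrixUltralimit (fun i ↦ Matrix.scalar n (y i) - A i) (Matrix.scalar n x - X) := by
    refine IsMatrixUltralimit.sub (fun a b ↦ ?_) hA
    obtain rfl | hab := eq_or_ne a b
    · simpa [Matrix.scalar_apply] using hx
    · simpa [Matrix.scalar_apply, hab] using IsUltralimit.zero
  refine exists_mulVec_eq_smul_of_eval_charpoly_eq_zero ?_
  rw [Matrix.eval_charpoly]
  refine hlim.det.unique (IsUltralimit.zero.congr ?_)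
  filter_upwards [hy] with i hi
  rw [← Matrix.eval_charpoly]
  exact (Polynomial.mem_roots'.1 hi).2.symm

variable [IsAlgClosed F] [Nonempty n] {γ : Γ} {lam : ι → F}

theorem SpansUniformly.exists_eventually_injective_of_bounded (hM : SpansUniformly U av M)
    (hbdd : ∀ h a b, ∃ C, ∀ᶠ i in (U : Filter ι), av i ((M i h).1 a b) ≤ C)
    (hdet : ∀ i, (M i γ).1.det = 1)
    (hlam : ∀ᶠ i in (U : Filter ι), lam i ∈ (M i γ).1.charpoly.roots) {r : ℝ} (hr : 1 < r)
    (hlam_abs : ∀ᶠ i in (U : Filter ι), av i (lam i) = r) :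
    ∃ a : Fin 2 → Γ, ∀ᶠ i in (U : Filter ι),
      Function.Injective (FreeGroup.lift fun j ↦ M i (a j)) := by
  obtain ⟨σ, hσ⟩ := exists_monoidHom_isMatrixUltralimit M hbdd
  choose mu hmu hmu_abs using fun i ↦ exists_mem_roots_charpoly_abs_le_one (av i) (hdet i)
  obtain ⟨x, hx⟩ := exists_isUltralimit_of_eventually_le (hlam_abs.mono fun i hi ↦ hi.le)
  obtain ⟨x', hx'⟩ := exists_isUltralimit_of_eventually_le (U := U) (.of_forall hmu_abs)
  obtain ⟨u, hu, hxu⟩ := (hσ γ).exists_mulVec_eq_smul hx hlam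
  obtain ⟨z, hz, hxz⟩ := (hσ γ).exists_mulVec_eq_smul hx' (.of_forall hmu)
  have hlt : ultralimitAbs U av x' < ultralimitAbs U av x :=
    (le_of_tendsto hx'.tendsto (.of_forall hmu_abs)).trans_lt
      (hr.trans_le (ge_of_tendsto hx.tendsto (hlam_abs.mono fun i hi ↦ hi.ge)))
  obtain ⟨a, ha⟩ := exists_pingPongCertificate_of_eigenvectors
    (fun Γ₀ hΓ₀ ↦ hM.span_ultralimit_eq_top hσ hΓ₀) hlt hu hz hxu hxz
  refine ⟨a, (PingPongCertificate.eventually (a := fun i j ↦ M i (a j)) (fun x ↦ ?_) ha).mono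
    fun i hi ↦ hi.injective_lift⟩
  simp only [letter_map]
  exact hσ _

theorem SpansUniformly.exists_eventually_injective (hM : SpansUniformly U av M)
    (htrace : ∀ h, ∃ C, ∀ᶠ i in (U : Filter ι), av i (M i h).1.trace ≤ C)
    (hdet : ∀ i, (M i γ).1.det = 1)
    (hlam : ∀ᶠ i in (U : Filter ι), lam i ∈ (M i γ).1.charpoly.roots) {r : ℝ} (hr : 1 < r)
    (hlam_abs : ∀ᶠ i in (U : Filter ι), av i (lam i) = r) :
    ∃ a : Fin 2 → Γ, ∀ᶠ i in (U : Filter ι),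
      Function.Injective (FreeGroup.lift fun j ↦ M i (a j)) := by
  obtain ⟨g, -, c, hc, hg⟩ := hM ⊤ inferInstance
  obtain ⟨P, hP⟩ := exists_conj_eventually_abs_le htrace hc hg
  have hval : ∀ i h, ((MulAut.conj (P i)⁻¹).toMonoidHom.comp (M i) h).1 =
      (P i)⁻¹.1 * (M i h).1 * (P i).1 := fun i h ↦ by simp
  have hlift : ∀ i (a : Fin 2 → Γ),
      (FreeGroup.lift fun j ↦ (MulAut.conj (P i)⁻¹).toMonoidHom.comp (M i) (a j)) =
      (MulAut.conj (P i)⁻¹).toMonoidHom.comp (FreeGroup.lift fun j ↦ M i (a j)) := fun i a ↦ by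
    ext j : 1
    simp
  obtain ⟨a, ha⟩ := (hM.conj fun i ↦ (P i)⁻¹).exists_eventually_injective_of_bounded (γ := γ)
    (by simpa only [hval] using hP)
    (fun i ↦ by rw [hval, Matrix.det_units_conj', hdet i])
    (hlam.mono fun i hi ↦ by
      rwa [hval, Matrix.coe_units_inv, Matrix.charpoly_units_conj']) hr hlam_abs
  refine ⟨a, ha.mono fun i hi ↦ ?_⟩
  rw [hlift, MonoidHom.coe_comp] at hi
  exact hi.of_comp

end Families

/-! ### Growth of traces -/

section Growth

theorem natCast_le_pow {H : ℝ} (hH : 2 ≤ H) (k : ℕ) : (k : ℝ) ≤ H ^ k :=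
  calc (k : ℝ) ≤ 2 ^ k := by exact_mod_cast Nat.lt_two_pow_self.le
    _ ≤ H ^ k := by gcongr

variable {n : Type*} [Fintype n]

theorem trace_map {R R' : Type*} [CommRing R] [CommRing R'] (f : R →+* R') (A : Matrix n n R) :
    (A.map f).trace = f A.trace :=
  (AddMonoidHom.map_trace f.toAddMonoidHom A).symm

variable [DecidableEq n]

theorem det_flatten_map {R R' : Type*} [CommRing R] [CommRing R'] (f : R →+* R')
    (X : n × n → Matrix n n R) :
    (flatten fun p ↦ (X p).map f).det = f (flatten X).det :=
  (f.map_det (flatten X)).symm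

theorem abs_inv_gramMatrix_le_pow {F : Type*} [Field F] {v : AbsoluteValue F ℝ}
    {X : n × n → Matrix n n F} {H : ℝ} (hH : 2 ≤ H) {a t : ℕ}
    (hdet : 1 ≤ v (gramMatrix X).det * H ^ a) (hX : ∀ p q, v (X p * X q).trace ≤ H ^ t)
    (p q : n × n) :
    v ((gramMatrix X)⁻¹ p q) ≤
      H ^ (a + ((Fintype.card (n × n)).factorial + t * Fintype.card (n × n))) := by
  have hH1 : 1 ≤ H := one_le_two.trans hH
  have hlow : (H ^ a)⁻¹ ≤ v (gramMatrix X).det := by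
    rwa [inv_le_iff_one_le_mul₀ (by positivity)]
  refine (abs_inv_gramMatrix_le (by positivity) (one_le_pow₀ hH1) hlow hX p q).trans ?_
  rw [inv_inv, pow_add, pow_add, pow_mul]
  gcongr
  exact natCast_le_pow hH _

theorem abs_trace_le_pow_of_mem_pow {F : Type*} [Field F] {v : AbsoluteValue F ℝ} {H : ℝ}
    (hH : 2 ≤ H) {X : n × n → Matrix n n F} {V : Matrix (n × n) (n × n) F}
    (hV : gramMatrix X * V = 1) {b : ℕ} (hVb : ∀ q p, v (V q p) ≤ H ^ b) {G : Type*} [Monoid G]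
    (φ : G →* Matrix n n F) {T : Set G} (hT : ∀ s ∈ T, ∀ p q, v (φ s * X p * X q).trace ≤ H ^ b)
    (hX : ∀ p, v (X p).trace ≤ H ^ b) {l : ℕ} {g : G} (hg : g ∈ T ^ l) :
    v (φ g).trace ≤
      H ^ ((Fintype.card (n × n) + (Fintype.card (n × n) + b + b)) * (l + 1) + b) := by
  have : 0 < H := two_pos.trans_le hH
  refine (abs_trace_le_of_mem_pow v hV φ (by positivity) hVb hT hX hg).trans ?_
  rw [pow_add H, pow_mul H, pow_add H _ (_ + b + b), pow_add H (_ + b), pow_add H]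
  gcongr <;> exact natCast_le_pow hH _

namespace PlaceSystem

variable {R : Type*} [CommRing R] (P : PlaceSystem R)

variable (n) in
theorem exists_one_le_norm_det_gramMatrix_mul_pow (t : ℕ) : ∃ a : ℕ, ∀ Ψ ∈ P.homSets,
    ∀ X : n × n → Matrix n n R, (∀ w, ∀ ψ ∈ Ψ w, ψ (flatten X).det ≠ 0) → ∀ H : ℝ, 2 ≤ H →
    (∀ w, ∀ ψ ∈ Ψ w, ∀ p q, ‖ψ (X p * X q).trace‖ ≤ H ^ t) →
    ∀ w, ∀ ψ ∈ Ψ w, 1 ≤ ‖ψ (gramMatrix X).det‖ * H ^ a := by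
  refine ⟨((Fintype.card (n × n)).factorial + t * Fintype.card (n × n)) * P.exponent,
    fun Ψ hΨ X hX H hH htrace ↦ ?_⟩
  have hne : ∀ w, ∀ ψ ∈ Ψ w, ψ (gramMatrix X).det ≠ 0 := fun w ψ hψ ↦ by
    rw [← det_gramMatrix_map, det_gramMatrix_ne_zero_iff, det_flatten_map]
    exact hX w ψ hψ
  have hle : ∀ w, ∀ ψ ∈ Ψ w, ‖ψ (gramMatrix X).det‖ ≤
      H ^ ((Fintype.card (n × n)).factorial + t * Fintype.card (n × n)) := fun w ψ hψ ↦ by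
    rw [ψ.map_det]
    refine (abs_det_le (NormedField.toAbsoluteValue _) (htrace w ψ hψ)).trans ?_
    rw [pow_add, pow_mul]
    gcongr
    exact natCast_le_pow hH _
  simpa only [pow_mul] using
    P.one_le_norm_mul_pow Ψ hΨ _ hne _ (one_le_pow₀ (one_le_two.trans hH)) hle

theorem exists_norm_trace_le_pow {G : Type*} [Monoid G] (φ : G →* Matrix n n R) (t l : ℕ) :
    ∃ C : ℕ, ∀ Ψ ∈ P.homSets, ∀ (T : Set G) (x : n × n → G), 1 ∈ T →
    (∀ w, ∀ ψ ∈ Ψ w, ψ (flatten fun p ↦ φ (x p)).det ≠ 0) → ∀ H : ℝ, 2 ≤ H →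
    (∀ w, ∀ ψ ∈ Ψ w, ∀ s ∈ T, ∀ p q, ‖ψ (φ (s * x p * x q)).trace‖ ≤ H ^ t) →
    (∀ w, ∀ ψ ∈ Ψ w, ∀ p, ‖ψ (φ (x p)).trace‖ ≤ H ^ t) →
    ∀ w, ∀ ψ ∈ Ψ w, ∀ g ∈ T ^ l, ‖ψ (φ g).trace‖ ≤ H ^ C := by
  obtain ⟨a, ha⟩ := P.exists_one_le_norm_det_gramMatrix_mul_pow n t
  set d := Fintype.card (n × n) with hd
  set b := a + (d.factorial + t * d) + t with hb
  refine ⟨(d + (d + b + b)) * (l + 1) + b, fun Ψ hΨ T x h1 hne H hH hT hx w ψ hψ g hg ↦ ?_⟩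
  have hmono : ∀ {k}, k ≤ b → H ^ k ≤ H ^ b := pow_le_pow_right₀ (one_le_two.trans hH)
  have hgram : ∀ w, ∀ ψ ∈ Ψ w, ∀ p q, ‖ψ (φ (x p) * φ (x q)).trace‖ ≤ H ^ t :=
    fun w ψ hψ p q ↦ by simpa using hT w ψ hψ 1 h1 p q
  let φψ : G →* Matrix n n (P.Completion w) := ψ.mapMatrix.toMonoidHom.comp φ
  have htrace : ∀ g, (φψ g).trace = ψ (φ g).trace := fun g ↦ trace_map ψ (φ g)
  have hdet : 1 ≤ ‖(gramMatrix fun p ↦ φψ (x p)).det‖ * H ^ a := by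
    have := ha Ψ hΨ (fun p ↦ φ (x p)) hne H hH hgram w ψ hψ
    rwa [← det_gramMatrix_map] at this
  have hunit : IsUnit (gramMatrix fun p ↦ φψ (x p)).det := isUnit_iff_ne_zero.2 fun h0 ↦ by
    rw [h0, norm_zero, zero_mul] at hdet
    exact absurd hdet zero_lt_one.not_ge
  rw [← htrace]
  refine abs_trace_le_pow_of_mem_pow (v := NormedField.toAbsoluteValue _) hH
    (Matrix.mul_nonsing_inv _ hunit) (fun p q ↦ ?_) φψ (fun s hs p q ↦ ?_) (fun p ↦ ?_) hg
  · refine (abs_inv_gramMatrix_le_pow hH hdet (t := t) (fun p q ↦ ?_) p q).trans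
      (hmono (by rw [hb, hd]; omega))
    rw [← map_mul, htrace, map_mul]
    exact hgram w ψ hψ p q
  · rw [← map_mul, ← map_mul, htrace]
    exact (hT w ψ hψ s hs p q).trans (hmono (by omega))
  · rw [htrace]
    exact (hx w ψ hψ p).trans (hmono (by omega))

end PlaceSystem

end Growth

/-! ### Large eigenvalues -/

section SpansEventually

variable {ι R n Γ : Type*} [CommRing R] [Fintype n] [DecidableEq n] [Group Γ]

/-- A family of representations spans eventually if every subgroup of finite index contains elements
whose images are, eventually, linearly independent; the qualitative form of `SpansUniformly`. -/
def SpansEventually (U : Ultrafilter ι) (M : ι → Γ →* GL n R) : Prop :=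
  ∀ Γ₀ : Subgroup Γ, Γ₀.FiniteIndex → ∃ g : n × n → Γ, (∀ p, g p ∈ Γ₀) ∧
    ∀ᶠ i in (U : Filter ι), (flatten fun p ↦ (M i (g p)).1).det ≠ 0

/-- The elements acting trivially for almost all indices. -/
def eventualKer (U : Ultrafilter ι) (M : ι → Γ →* GL n R) : Subgroup Γ where
  carrier := {h | ∀ᶠ i in (U : Filter ι), M i h = 1}
  mul_mem' ha hb := by
    filter_upwards [ha, hb] with i ha hb
    rw [map_mul, ha, hb, one_mul]
  one_mem' := .of_forall fun i ↦ map_one _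
  inv_mem' ha := by
    filter_upwards [ha] with i ha
    rw [map_inv, ha, inv_one]

theorem SpansEventually.not_finiteIndex_eventualKer [Nontrivial n] {U : Ultrafilter ι}
    {M : ι → Γ →* GL n R} (hM : SpansEventually U M) : ¬(eventualKer U M).FiniteIndex := by
  intro hfin
  obtain ⟨g, hg, hdet⟩ := hM _ hfin
  have hone : ∀ᶠ i in (U : Filter ι), ∀ p, M i (g p) = 1 := eventually_all.2 hg
  obtain ⟨i, hone, hdet⟩ := (hone.and hdet).exists
  obtain ⟨a, b, hab⟩ := exists_pair_ne n
  refine hdet (Matrix.det_zero_of_row_eq (i := (a, a)) (j := (a, b)) (by simpa using hab) ?_)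
  funext q
  simp only [flatten, Matrix.of_apply, hone]

theorem mem_eventualKer_of_trace_eq {F : Type*} [Field F] {U : Ultrafilter ι} {M : ι → Γ →* GL n F}
    {g : n × n → Γ} (hg : ∀ᶠ i in (U : Filter ι), (flatten fun p ↦ (M i (g p)).1).det ≠ 0)
    {h h' : Γ} (htrace : ∀ p, ∀ᶠ i in (U : Filter ι),
      (M i (h * g p)).1.trace = (M i (h' * g p)).1.trace) : h⁻¹ * h' ∈ eventualKer U M := by
  change ∀ᶠ i in (U : Filter ι), M i (h⁻¹ * h') = 1
  filter_upwards [hg, eventually_all.2 htrace] with i hdet htrace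
  have hV := Matrix.mul_nonsing_inv _
    (isUnit_iff_ne_zero.2 ((det_gramMatrix_ne_zero_iff fun p ↦ (M i (g p)).1).2 hdet))
  simp only [map_mul, Units.val_mul] at htrace
  have heq : M i h = M i h' := Units.ext <| by
    rw [eq_sum_trace_mul_smul hV (M i h).1, eq_sum_trace_mul_smul hV (M i h').1]
    simp only [htrace]
  rw [map_mul, map_inv, heq, inv_mul_cancel]

theorem SpansEventually.exists_not_eventually_trace_mem {F : Type*} [Field F] [Nontrivial n]
    {U : Ultrafilter ι} {M : ι → Γ →* GL n F} (hM : SpansEventually U M) {Y : Set F}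
    (hY : Y.Finite) : ∃ h, ¬∀ᶠ i in (U : Filter ι), (M i h).1.trace ∈ Y := by
  by_contra! htrace
  have := hY.to_subtype
  obtain ⟨g, -, hg⟩ := hM ⊤ inferInstance
  have hconst : ∀ h p, ∃ y : Y, ∀ᶠ i in (U : Filter ι), (M i (h * g p)).1.trace = y := fun h p ↦
    Ultrafilter.eventually_exists_iff.1 ((htrace (h * g p)).mono fun i hi ↦ ⟨⟨_, hi⟩, rfl⟩)
  choose c hc using hconst
  have hquot : Finite (Γ ⧸ eventualKer U M) := by
    refine Finite.of_injective (fun q : Γ ⧸ eventualKer U M ↦ c q.out) fun q q' hqq' ↦ ?_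
    rw [← q.out_eq', ← q'.out_eq', QuotientGroup.eq]
    refine mem_eventualKer_of_trace_eq hg fun p ↦ ?_
    filter_upwards [hc q.out p, hc q'.out p] with i hi hi'
    rw [hi, hi']
    exact congrArg Subtype.val (congrFun hqq' p)
  exact hM.not_finiteIndex_eventualKer Subgroup.finiteIndex_of_finite_quotient

end SpansEventually

section PowersOfNorm

variable {F : Type*} [NormedField F] {v : AbsoluteValue F ℝ} {H : ℝ}

/-- `v` is the power of the norm which takes the value `2` on elements of norm `H`. -/
def IsNormalizedAt (v : AbsoluteValue F ℝ) (H : ℝ) : Prop :=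
  ∃ θ : ℝ, 0 < θ ∧ H ^ θ = 2 ∧ ∀ x, v x = ‖x‖ ^ θ

variable (F) in
theorem exists_isNormalizedAt (hH : 2 ≤ H) : ∃ v : AbsoluteValue F ℝ, IsNormalizedAt v H := by
  have hH0 : 0 < H := two_pos.trans_le hH
  have hlog : 1 ≤ Real.logb 2 H := by
    rw [Real.le_logb_iff_rpow_le one_lt_two hH0]
    simpa using hH
  have hθ0 : 0 < (Real.logb 2 H)⁻¹ := inv_pos.2 (one_pos.trans_le hlog)
  have hθ1 : (Real.logb 2 H)⁻¹ ≤ 1 := inv_le_one_of_one_le₀ hlog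
  refine ⟨
    { toFun := fun x ↦ ‖x‖ ^ (Real.logb 2 H)⁻¹
      map_mul' := fun x y ↦ by rw [norm_mul, Real.mul_rpow (norm_nonneg _) (norm_nonneg _)]
      nonneg' := fun x ↦ Real.rpow_nonneg (norm_nonneg _) _
      eq_zero' := fun x ↦ by rw [Real.rpow_eq_zero (norm_nonneg _) hθ0.ne', norm_eq_zero]
      add_le' := fun x y ↦
        (Real.rpow_le_rpow (norm_nonneg _) (norm_add_le x y) hθ0.le).trans
          (Real.rpow_add_le_add_rpow (norm_nonneg _) (norm_nonneg _) hθ0.le hθ1) },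
    (Real.logb 2 H)⁻¹, hθ0, ?_, fun _ ↦ rfl⟩
  rw [Real.inv_logb, Real.rpow_logb hH0 (by linarith) two_pos]

namespace IsNormalizedAt

theorem eq_two (hv : IsNormalizedAt v H) {x : F} (hx : ‖x‖ = H) : v x = 2 := by
  obtain ⟨θ, -, hHθ, hv⟩ := hv
  rw [hv, hx, hHθ]

theorem le_pow (hv : IsNormalizedAt v H) (hH : 0 ≤ H) {x : F} {k : ℕ} (hx : ‖x‖ ≤ H ^ k) :
    v x ≤ 2 ^ k := by
  obtain ⟨θ, hθ, hHθ, hv⟩ := hv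
  rw [hv, ← hHθ, Real.rpow_pow_comm hH]
  exact Real.rpow_le_rpow (norm_nonneg _) hx hθ.le

theorem one_le_mul_pow (hv : IsNormalizedAt v H) (hH : 0 ≤ H) {x : F} {k : ℕ}
    (hx : 1 ≤ ‖x‖ * H ^ k) : 1 ≤ v x * 2 ^ k := by
  obtain ⟨θ, hθ, hHθ, hv⟩ := hv
  rw [hv, ← hHθ, Real.rpow_pow_comm hH, ← Real.mul_rpow (norm_nonneg _) (by positivity)]
  exact Real.one_le_rpow hx hθ.le

end IsNormalizedAt

theorem exists_mem_forall_le_sq {A : Set ℝ} (hA : BddAbove A) (h : ∃ a ∈ A, 2 < a) :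
    ∃ H ∈ A, 2 < H ∧ ∀ a ∈ A, a ≤ H ^ 2 := by
  obtain ⟨a, ha, ha2⟩ := h
  have hsup : 2 < sSup A := ha2.trans_le (le_csSup hA ha)
  have hlt : max 2 √(sSup A) < sSup A := max_lt hsup <| by
    rw [Real.sqrt_lt' (by linarith)]
    nlinarith
  obtain ⟨H, hHA, hH⟩ := exists_lt_of_lt_csSup ⟨a, ha⟩ hlt
  obtain ⟨hH2, hsqrt⟩ := max_lt_iff.1 hH
  exact ⟨H, hHA, hH2, fun b hb ↦
    (le_csSup hA hb).trans ((Real.sqrt_lt' (two_pos.trans hH2)).1 hsqrt).le⟩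

end PowersOfNorm

namespace SymmGenSet

variable {ι α G : Type*} [Group G]

theorem finite_pow (S : SymmGenSet G) (l : ℕ) : (S.carrier ^ l).Finite := by
  induction l with
  | zero => simp
  | succ l ih => exact pow_succ S.carrier l ▸ ih.mul S.finite

theorem exists_forall_mem_pow [Finite α] {S : ι → SymmGenSet G} (g : α → boundedSeq S) :
    ∃ l, ∀ p i, (g p).1 i ∈ (S i).carrier ^ l := by
  have := Fintype.ofFinite α
  choose l hl using fun p ↦ (g p).2
  exact ⟨Finset.univ.sup l, fun p i ↦
    (S i).pow_subset_pow (Finset.le_sup (Finset.mem_univ p)) (hl p i)⟩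

theorem exists_boundedSeq_eventually {S : ι → SymmGenSet G} {F : Filter ι} {L : ℕ}
    {Q : ι → G → Prop} (h : ∀ᶠ i in F, ∃ g ∈ (S i).carrier ^ L, Q i g) :
    ∃ γ : boundedSeq S, ∀ᶠ i in F, Q i (γ.1 i) := by
  have hexists : ∀ i, ∃ g ∈ (S i).carrier ^ L, (∃ g ∈ (S i).carrier ^ L, Q i g) → Q i g := by
    intro i
    by_cases hi : ∃ g ∈ (S i).carrier ^ L, Q i g
    · obtain ⟨g, hg, hQ⟩ := hi
      exact ⟨g, hg, fun _ ↦ hQ⟩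
    · exact ⟨1, Set.one_mem_pow (S i).one_mem, fun h ↦ absurd h hi⟩
  choose γ hγ hQ using hexists
  exact ⟨⟨γ, L, hγ⟩, h.mono hQ⟩

end SymmGenSet

section Specialization

variable {ι G R n : Type*} [Group G] [CommRing R] [Fintype n] [DecidableEq n]
  {P : PlaceSystem R} {ρ : G →* GL n R} {S : ι → SymmGenSet G} {U : Ultrafilter ι}

variable (P ρ S U) in
/-- A choice, for every index, of a member of a place system under which linearly independent
matrices attached to bounded sequences eventually remain linearly independent. -/
structure Specialization where
  homSet : ι → ∀ w, Set (R →+* P.Completion w)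
  mem_homSets : ∀ i, homSet i ∈ P.homSets
  eventually_ne_zero : ∀ x : n × n → boundedSeq S,
    (∀ᶠ i in (U : Filter ι), (flatten fun p ↦ (ρ ((x p).1 i)).1).det ≠ 0) →
    ∀ᶠ i in (U : Filter ι), ∀ w, ∀ ψ ∈ homSet i w, ψ (flatten fun p ↦ (ρ ((x p).1 i)).1).det ≠ 0

variable (P ρ S) in
theorem nonempty_specialization {r : ι → ℕ} (hr : Tendsto r U atTop) :
    Nonempty (Specialization P ρ S U) := by
  have hball : ∀ i, ∃ Ψ ∈ P.homSets, ∀ x : n × n → G, (∀ p, x p ∈ (S i).carrier ^ r i) →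
      (flatten fun p ↦ (ρ (x p)).1).det ≠ 0 →
      ∀ w, ∀ ψ ∈ Ψ w, ψ (flatten fun p ↦ (ρ (x p)).1).det ≠ 0 := by
    intro i
    have hfin : {x : n × n → G | ∀ p, x p ∈ (S i).carrier ^ r i}.Finite :=
      Set.Finite.pi' fun _ ↦ (S i).finite_pow _
    obtain ⟨Ψ, hΨ, h⟩ := P.exists_forall_ne_zero
      ((fun x ↦ (flatten fun p ↦ (ρ (x p)).1).det) ''
        {x : n × n → G | ∀ p, x p ∈ (S i).carrier ^ r i} ∩ {y | y ≠ 0})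
      ((hfin.image _).subset Set.inter_subset_left) fun x hx ↦ hx.2
    exact ⟨Ψ, hΨ, fun x hx hx0 ↦ h _ ⟨⟨x, hx, rfl⟩, hx0⟩⟩
  choose Ψ hΨ hne using hball
  refine ⟨Ψ, hΨ, fun x hx ↦ ?_⟩
  obtain ⟨l, hl⟩ := exists_forall_mem_pow x
  filter_upwards [hx, hr (eventually_ge_atTop l)] with i hdet hi
  exact hne i (fun p ↦ (x p).1 i) (fun p ↦ (S i).pow_subset_pow hi (hl p i)) hdet

/-- An eigenvalue larger than `2`, with respect to one of the given homomorphisms and an element of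
`T`, whose square bounds all eigenvalues of elements of `T` at all places. -/
structure IsDominantEigenvalue (ρ : G →* GL n R) (Ψ : ∀ w, Set (R →+* P.Completion w)) (T : Set G)
    {w : P.Place} (ψ : R →+* P.Completion w) (g : G) (x : P.Completion w) : Prop where
  mem_homs : ψ ∈ Ψ w
  mem : g ∈ T
  mem_roots : x ∈ ((ρ g).1.map ψ).charpoly.roots
  two_lt_norm : 2 < ‖x‖
  norm_le_sq : ∀ w', ∀ ψ' ∈ Ψ w', ∀ g' ∈ T, ∀ x' ∈ ((ρ g').1.map ψ').charpoly.roots,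
    ‖x'‖ ≤ ‖x‖ ^ 2

theorem IsDominantEigenvalue.norm_trace_le {Ψ : ∀ w, Set (R →+* P.Completion w)} {T : Set G}
    {w : P.Place} {ψ : R →+* P.Completion w} {g : G} {x : P.Completion w}
    (h : IsDominantEigenvalue ρ Ψ T ψ g x) {w' : P.Place} {ψ' : R →+* P.Completion w'}
    (hψ' : ψ' ∈ Ψ w') {g' : G} (hg' : g' ∈ T) :
    ‖ψ' (ρ g').1.trace‖ ≤ Fintype.card n * ‖x‖ ^ 2 := by
  rw [← trace_map]
  exact abs_trace_le_of_roots_charpoly_le (NormedField.toAbsoluteValue _)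
    (h.norm_le_sq w' ψ' hψ' g' hg')

theorem exists_isDominantEigenvalue {Ψ : ∀ w, Set (R →+* P.Completion w)} (hΨ : Ψ ∈ P.homSets)
    {T : Set G} (hT : T.Finite)
    (h : ∃ w, ∃ ψ ∈ Ψ w, ∃ g ∈ T, ∃ x ∈ ((ρ g).1.map ψ).charpoly.roots, 2 < ‖x‖) :
    ∃ (w : _) (ψ : R →+* P.Completion w), ∃ g ∈ T, ∃ x, IsDominantEigenvalue ρ Ψ T ψ g x := by
  choose B hB using P.exists_norm_le Ψ hΨ
  obtain ⟨C, hC⟩ := ((hT.prod (Set.finite_univ (α := n × n))).image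
    fun t ↦ B ((ρ t.1).1 t.2.1 t.2.2)).bddAbove
  have hbdd : BddAbove {r | ∃ w, ∃ ψ ∈ Ψ w, ∃ g ∈ T,
      ∃ x ∈ ((ρ g).1.map ψ).charpoly.roots, ‖x‖ = r} := by
    refine ⟨Fintype.card n * C, ?_⟩
    rintro r ⟨w, ψ, hψ, g, hg, x, hx, rfl⟩
    exact abs_le_of_mem_roots_charpoly (NormedField.toAbsoluteValue _)
      (fun a b ↦ (hB _ w ψ hψ).trans (hC ⟨(g, a, b), ⟨hg, Set.mem_univ _⟩, rfl⟩)) hx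
  obtain ⟨w₀, ψ₀, hψ₀, g₀, hg₀, x₀, hx₀, hx₀2⟩ := h
  obtain ⟨-, ⟨w, ψ, hψ, g, hg, x, hx, rfl⟩, hx2, hle⟩ := exists_mem_forall_le_sq hbdd
    ⟨_, ⟨w₀, ψ₀, hψ₀, g₀, hg₀, x₀, hx₀, rfl⟩, hx₀2⟩
  exact ⟨w, ψ, g, hg, x, hψ, hg, hx, hx2, fun w' ψ' hψ' g' hg' x' hx' ↦
    hle _ ⟨w', ψ', hψ', g', hg', x', hx', rfl⟩⟩

namespace Specialization

variable (Φ : Specialization P ρ S U) (hρ : SpansEventually U (boundedSeqEval S ρ))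
include hρ

theorem spansEventually_map {w : P.Place} {ψ : ι → R →+* P.Completion w}
    (hψ : ∀ i, ψ i ∈ Φ.homSet i w) :
    SpansEventually U fun i ↦ (GeneralLinearGroup.map (ψ i)).comp (boundedSeqEval S ρ i) := by
  intro Γ₀ hΓ₀
  obtain ⟨g, hg, hdet⟩ := hρ Γ₀ hΓ₀
  refine ⟨g, hg, (Φ.eventually_ne_zero g hdet).mono fun i hi ↦ ?_⟩
  have hne := hi w (ψ i) (hψ i)
  rwa [← det_flatten_map] at hne

theorem exists_eventually_two_lt_norm [Nontrivial n] : ∃ L, ∀ᶠ i in (U : Filter ι), ∃ w,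
    ∃ ψ ∈ Φ.homSet i w, ∃ g ∈ (S i).carrier ^ L,
      ∃ x ∈ ((ρ g).1.map ψ).charpoly.roots, 2 < ‖x‖ := by
  by_contra! hsmall
  obtain ⟨w⟩ := P.nonemptyPlace
  choose ψ hψ using fun i ↦ P.nonempty_of_mem _ (Φ.mem_homSets i) w
  obtain ⟨⟨h, L, hL⟩, hh⟩ := (Φ.spansEventually_map hρ hψ).exists_not_eventually_trace_mem
    (P.finite_values (Fintype.card n * 2) w)
  refine hh ((hsmall L).mono fun i hi ↦ ?_)
  refine ⟨_, Φ.mem_homSets i, (ρ (h i)).1.trace, fun w' ψ' hψ' ↦ ?_, ψ i, hψ i,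
    (trace_map (ψ i) _).symm⟩
  rw [← trace_map]
  exact abs_trace_le_of_roots_charpoly_le (NormedField.toAbsoluteValue _)
    (hi w' ψ' hψ' (h i) (hL i))

theorem exists_boundedSeq_isDominantEigenvalue [Nontrivial n] : ∃ L₀, ∀ L ≥ L₀,
    ∃ (w : _) (ψ : ι → R →+* P.Completion w) (γ : boundedSeq S) (x : ι → P.Completion w),
      ∀ᶠ i in (U : Filter ι),
        IsDominantEigenvalue ρ (Φ.homSet i) ((S i).carrier ^ L) (ψ i) (γ.1 i) (x i) := by
  obtain ⟨L₀, hL₀⟩ := Φ.exists_eventually_two_lt_norm hρ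
  refine ⟨L₀, fun L hL ↦ ?_⟩
  have hdom : ∀ᶠ i in (U : Filter ι), ∃ (w : _) (ψ : R →+* P.Completion w),
      ∃ g ∈ (S i).carrier ^ L, ∃ x,
        IsDominantEigenvalue ρ (Φ.homSet i) ((S i).carrier ^ L) ψ g x := by
    filter_upwards [hL₀] with i ⟨w, ψ, hψ, g, hg, h⟩
    exact exists_isDominantEigenvalue (Φ.mem_homSets i) ((S i).finite_pow L)
      ⟨w, ψ, hψ, g, (S i).pow_subset_pow hL hg, h⟩
  obtain ⟨w, hdom⟩ := Ultrafilter.eventually_exists_iff.1 hdom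
  obtain ⟨ψ, hdom⟩ := hdom.choice
  obtain ⟨γ, hdom⟩ := exists_boundedSeq_eventually hdom
  obtain ⟨x, hdom⟩ := hdom.choice
  exact ⟨w, ψ, γ, x, hdom⟩

theorem exists_eventually_norm_trace_le_pow : ∃ L₀, ∀ L ≥ L₀, ∀ l, ∃ C : ℕ,
    ∀ᶠ i in (U : Filter ι), ∀ (w : _) (ψ : R →+* P.Completion w) (g : G) (x : P.Completion w),
      IsDominantEigenvalue ρ (Φ.homSet i) ((S i).carrier ^ L) ψ g x →
      ∀ w', ∀ ψ' ∈ Φ.homSet i w', ∀ g' ∈ (S i).carrier ^ l, ‖ψ' (ρ g').1.trace‖ ≤ ‖x‖ ^ C := by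
  obtain ⟨y, -, hy⟩ := hρ ⊤ inferInstance
  obtain ⟨k, hk⟩ := exists_forall_mem_pow y
  refine ⟨1 + k + k, fun L hL l ↦ ?_⟩
  obtain ⟨C, hC⟩ := P.exists_norm_trace_le_pow ((Units.coeHom _).comp ρ) (Fintype.card n + 2) l
  refine ⟨C, ?_⟩
  filter_upwards [Φ.eventually_ne_zero y hy] with i hne w ψ g x hx
  have hle : ∀ w', ∀ ψ' ∈ Φ.homSet i w', ∀ g' ∈ (S i).carrier ^ L,
      ‖ψ' (ρ g').1.trace‖ ≤ ‖x‖ ^ (Fintype.card n + 2) := fun w' ψ' hψ' g' hg' ↦ by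
    refine (hx.norm_trace_le hψ' hg').trans ?_
    rw [pow_add]
    gcongr
    exact natCast_le_pow hx.two_lt_norm.le _
  have hmem : ∀ s ∈ (S i).carrier, ∀ p q, s * (y p).1 i * (y q).1 i ∈ (S i).carrier ^ L :=
    fun s hs p q ↦ (S i).pow_subset_pow hL <| by
      rw [pow_add, pow_add, pow_one]
      exact Set.mul_mem_mul (Set.mul_mem_mul hs (hk p i)) (hk q i)
  exact hC _ (Φ.mem_homSets i) _ (fun p ↦ (y p).1 i) (S i).one_mem hne _ hx.two_lt_norm.le
    (fun w' ψ' hψ' s hs p q ↦ hle w' ψ' hψ' _ (hmem s hs p q))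
    fun w' ψ' hψ' p ↦ hle w' ψ' hψ' _ ((S i).pow_subset_pow (by omega) (hk p i))

theorem spansUniformly_map {w : P.Place} {ψ : ι → R →+* P.Completion w}
    (hψ : ∀ᶠ i in (U : Filter ι), ψ i ∈ Φ.homSet i w) {H : ι → ℝ}
    (hH : ∀ᶠ i in (U : Filter ι), 2 ≤ H i)
    (htrace : ∀ l, ∃ C : ℕ, ∀ᶠ i in (U : Filter ι), ∀ w, ∀ ψ ∈ Φ.homSet i w,
      ∀ g ∈ (S i).carrier ^ l, ‖ψ (ρ g).1.trace‖ ≤ H i ^ C)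
    {av : ι → AbsoluteValue (P.Completion w) ℝ}
    (hav : ∀ᶠ i in (U : Filter ι), IsNormalizedAt (av i) (H i)) :
    SpansUniformly U av fun i ↦
      (GeneralLinearGroup.map (ψ i)).comp (boundedSeqEval S ρ i) := by
  intro Γ₀ hΓ₀
  obtain ⟨g, hg, hdet⟩ := hρ Γ₀ hΓ₀
  obtain ⟨l, hl⟩ := exists_forall_mem_pow g
  obtain ⟨C, hC⟩ := htrace (l + l)
  obtain ⟨a, ha⟩ := P.exists_one_le_norm_det_gramMatrix_mul_pow n C
  refine ⟨g, hg, (2 ^ a)⁻¹, by positivity, ?_⟩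
  filter_upwards [hψ, hH, hC, hav, Φ.eventually_ne_zero g hdet] with i hψ hH hC hav hne
  have hgram := ha _ (Φ.mem_homSets i) (fun p ↦ (ρ ((g p).1 i)).1) hne (H i) hH
    (fun w' ψ' hψ' p q ↦ by
      rw [← Units.val_mul, ← map_mul]
      exact hC w' ψ' hψ' _ (pow_add (S i).carrier l l ▸ Set.mul_mem_mul (hl p i) (hl q i)))
    w (ψ i) hψ
  rw [← det_gramMatrix_map] at hgram
  rw [inv_le_iff_one_le_mul₀ (by positivity)]
  exact hav.one_le_mul_pow (by linarith) hgram

end Specialization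

theorem SpansEventually.exists_eventually_injective [Nontrivial n] (P : PlaceSystem R)
    (hdet : ∀ g, (ρ g).1.det = 1) {r : ι → ℕ} (hr : Tendsto r U atTop)
    (hρ : SpansEventually U (boundedSeqEval S ρ)) :
    ∃ a : Fin 2 → boundedSeq S, ∀ᶠ i in (U : Filter ι),
      Function.Injective (FreeGroup.lift fun j ↦ (a j).1 i) := by
  obtain ⟨Φ⟩ := nonempty_specialization P ρ S hr
  obtain ⟨L₁, hL₁⟩ := Φ.exists_boundedSeq_isDominantEigenvalue hρ
  obtain ⟨L₂, hL₂⟩ := Φ.exists_eventually_norm_trace_le_pow hρ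
  obtain ⟨w, ψ, γ, x, hx⟩ := hL₁ (max L₁ L₂) (le_max_left _ _)
  have htrace : ∀ l, ∃ C : ℕ, ∀ᶠ i in (U : Filter ι), ∀ w, ∀ ψ ∈ Φ.homSet i w,
      ∀ g ∈ (S i).carrier ^ l, ‖ψ (ρ g).1.trace‖ ≤ ‖x i‖ ^ C := fun l ↦ by
    obtain ⟨C, hC⟩ := hL₂ (max L₁ L₂) (le_max_right _ _) l
    exact ⟨C, by filter_upwards [hC, hx] with i hC hx using hC w _ _ _ hx⟩
  obtain ⟨av, hav⟩ := (hx.mono fun i hi ↦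
    exists_isNormalizedAt (P.Completion w) hi.two_lt_norm.le).choice
  have hspan := Φ.spansUniformly_map hρ (hx.mono fun i hi ↦ hi.mem_homs)
    (hx.mono fun i hi ↦ hi.two_lt_norm.le) htrace hav
  obtain ⟨a, ha⟩ := hspan.exists_eventually_injective (γ := γ) (lam := x)
    (fun ⟨h, l, hl⟩ ↦ by
      obtain ⟨C, hC⟩ := htrace l
      refine ⟨2 ^ C, ?_⟩
      filter_upwards [hC, hx, hav] with i hC hx hav
      refine hav.le_pow (norm_nonneg _) ?_
      exact (congrArg norm (trace_map (ψ i) _)).trans_le (hC w _ hx.mem_homs _ (hl i)))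
    (fun i ↦ by
      change ((ρ (γ.1 i)).1.map (ψ i)).det = 1
      rw [← RingHom.mapMatrix_apply, ← RingHom.map_det, hdet, map_one])
    (hx.mono fun i hi ↦ hi.mem_roots) one_lt_two
    (by filter_upwards [hav] with i hav using hav.eq_two rfl)
  refine ⟨a, ha.mono fun i hi ↦ ?_⟩
  have hlift : (FreeGroup.lift fun j ↦
        (GeneralLinearGroup.map (ψ i)).comp (boundedSeqEval S ρ i) (a j)) =
      ((GeneralLinearGroup.map (ψ i)).comp ρ).comp (FreeGroup.lift fun j ↦ (a j).1 i) := by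
    ext1 j
    simp [boundedSeqEval_apply]
  rw [hlift, MonoidHom.coe_comp] at hi
  exact hi.of_comp

end Specialization

/-! ### The uniform alternative for strongly irreducible representations -/

/-- A group has finite independence diameter if a single `N` is such that every ball of radius `N`,
for a finite symmetric generating set containing `1`, has two elements generating a free group of
rank two. -/
def HasFiniteIndependenceDiameter (G : Type*) [Group G] : Prop :=
  ∃ N, ∀ S : SymmGenSet G, ∃ a : Fin 2 → G,
    (∀ j, a j ∈ S.carrier ^ N) ∧ Function.Injective (FreeGroup.lift a)

section Descent

variable {n : Type*} [Fintype n] [DecidableEq n]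

theorem generalLinearGroup_map_injective {R K : Type*} [CommRing R] [CommRing K] {f : R →+* K}
    (hf : Function.Injective f) : Function.Injective (GeneralLinearGroup.map (n := n) f) :=
  fun _ _ h ↦ Units.ext (Matrix.map_injective hf (congrArg Units.val h))

theorem mem_range_generalLinearGroup_map {R K : Type*} [CommRing R] [CommRing K] {f : R →+* K}
    (hf : Function.Injective f) {A : GL n K} (hA : ∀ a b, A.1 a b ∈ Set.range f)
    (hA' : ∀ a b, A⁻¹.1 a b ∈ Set.range f) : A ∈ (GeneralLinearGroup.map (n := n) f).range := by
  choose B hB using hA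
  choose C hC using hA'
  have hBA : f.mapMatrix (of B) = A.1 := ext hB
  have hCA : f.mapMatrix (of C) = A⁻¹.1 := ext hC
  have hf' : Function.Injective (f.mapMatrix : Matrix n n R → Matrix n n K) :=
    Matrix.map_injective hf
  refine ⟨⟨of B, of C, hf' ?_, hf' ?_⟩, Units.ext hBA⟩
  · rw [map_mul, hBA, hCA, Units.mul_inv, map_one]
  · rw [map_mul, hBA, hCA, Units.inv_mul, map_one]

theorem exists_lift_to_placeSystem {G : Type*} [Group G] [Group.FG G] {K : Type u} [Field K]
    (ρ : G →* GL n K) : ∃ (R : Type u) (_ : CommRing R) (f : R →+* K) (σ : G →* GL n R),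
      Function.Injective f ∧ Nonempty (PlaceSystem R) ∧
        (GeneralLinearGroup.map f).comp σ = ρ := by
  classical
  obtain ⟨T, hT⟩ := Group.FG.out (G := G)
  obtain ⟨R, _, f, hf, hY, hP⟩ := exists_placeSystem
    ((T ∪ T⁻¹) ×ˢ (Finset.univ : Finset (n × n)) |>.image fun t ↦ (ρ t.1).1 t.2.1 t.2.2)
  have hentry : ∀ t ∈ T ∪ T⁻¹, ∀ a b, (ρ t).1 a b ∈ Set.range f := fun t ht a b ↦
    hY _ (Finset.mem_image.2 ⟨(t, a, b), by simpa using ht, rfl⟩)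
  have hrange : ρ.range ≤ (GeneralLinearGroup.map (n := n) f).range := by
    rw [MonoidHom.range_eq_map, ← hT, MonoidHom.map_closure, Subgroup.closure_le]
    rintro _ ⟨t, ht, rfl⟩
    refine mem_range_generalLinearGroup_map hf (hentry t (Finset.mem_union_left _ ht)) ?_
    rw [← map_inv]
    exact hentry t⁻¹ (Finset.mem_union_right _ (Finset.inv_mem_inv ht))
  let e := MonoidHom.ofInjective (generalLinearGroup_map_injective (n := n) hf)
  refine ⟨R, _, f, e.symm.toMonoidHom.comp (ρ.codRestrict _ fun g ↦ hrange ⟨g, rfl⟩), hf, hP, ?_⟩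
  ext1 g
  exact congrArg Subtype.val (e.apply_symm_apply _)

end Descent

theorem SymmGenSet.fg {G : Type*} [Group G] (S : SymmGenSet G) : Group.FG G :=
  Group.fg_iff.2 ⟨S.carrier, S.closure_eq_top, S.finite⟩

theorem IsStronglyIrreducible.hasFiniteIndependenceDiameter_of_det_eq_one {G : Type*} [Group G]
    {K : Type*} [Field K] [IsAlgClosed K] {n : Type*} [Fintype n] [DecidableEq n] [Nontrivial n]
    {ρ : G →* GL n K} (hρ : IsStronglyIrreducible ρ) (hdet : ∀ g, (ρ g).1.det = 1) :
    HasFiniteIndependenceDiameter G := by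
  by_contra! hcon
  simp only [HasFiniteIndependenceDiameter, not_exists, not_forall, not_and] at hcon
  choose S hS using hcon
  have : Group.FG G := (S 0).fg
  obtain ⟨R, _, f, σ, hf, ⟨P⟩, hσ⟩ := exists_lift_to_placeSystem ρ
  have hmap : ∀ g, (σ g).1.map f = (ρ g).1 := fun g ↦
    congrArg Units.val (DFunLike.congr_fun hσ g)
  have hdet' : ∀ g, (σ g).1.det = 1 := fun g ↦
    hf (by rw [RingHom.map_det, RingHom.mapMatrix_apply, hmap, hdet, map_one])
  have hspan : SpansEventually (hyperfilter ℕ) (boundedSeqEval S σ) := fun Γ₀ _ ↦ by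
    obtain ⟨g, hg, hd⟩ := hρ.exists_eventually_det_flatten_ne_zero S (hyperfilter ℕ) Γ₀
    refine ⟨g, hg, hd.mono fun i hi h0 ↦ hi ?_⟩
    have h := det_flatten_map f fun p ↦ (σ ((g p).1 i)).1
    simp only [hmap] at h
    rw [h]
    exact (congrArg f h0).trans f.map_zero
  obtain ⟨a, ha⟩ :=
    hspan.exists_eventually_injective P hdet' (r := id) Nat.hyperfilter_le_atTop
  obtain ⟨l, hl⟩ := SymmGenSet.exists_forall_mem_pow a
  obtain ⟨i, hinj, hli⟩ := (ha.and (Nat.hyperfilter_le_atTop (eventually_ge_atTop l))).exists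
  exact hS i (fun j ↦ (a j).1 i) (fun j ↦ (S i).pow_subset_pow hli (hl j i)) hinj

/-! ### Finite extensions and scalar twists -/

section Extension

variable {G Δ : Type*} [Group G] [Group Δ]

/-- The full preimage of a finite symmetric generating set under an epimorphism with finite
kernel. -/
def SymmGenSet.comap (S : SymmGenSet G) {f : Δ →* G} (hf : Function.Surjective f)
    [Finite f.ker] : SymmGenSet Δ where
  carrier := f ⁻¹' S.carrier
  finite := by
    refine S.finite.preimage' fun g _ ↦ ?_
    obtain ⟨x, rfl⟩ := hf g
    refine ((f.ker : Set Δ).toFinite.image (x * ·)).subset fun y hy ↦ ⟨x⁻¹ * y, ?_, by simp⟩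
    have hy : f y = f x := hy
    simp [MonoidHom.mem_ker, hy]
  one_mem := by simpa using S.one_mem
  inv_mem s hs := by simpa using S.inv_mem _ hs
  closure_eq_top := by
    have key : ∀ g p, f p = g → p ∈ Subgroup.closure (f ⁻¹' S.carrier) := fun g ↦ by
      induction g using S.induction with
      | one => exact fun p hp ↦ Subgroup.subset_closure (by simpa [hp] using S.one_mem)
      | mul s hs g ih =>
        intro p hp
        obtain ⟨q, rfl⟩ := hf s
        have hq : q ∈ Subgroup.closure (f ⁻¹' S.carrier) := Subgroup.subset_closure hs
        have h := ih (q⁻¹ * p) (by rw [map_mul, map_inv, hp, inv_mul_cancel_left])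
        simpa using mul_mem hq h
    exact eq_top_iff.2 fun p _ ↦ key _ p rfl

theorem map_mem_pow {f : Δ →* G} {s : Set Δ} {t : Set G} (h : Set.MapsTo f s t) {x : Δ} {l : ℕ}
    (hx : x ∈ s ^ l) : f x ∈ t ^ l :=
  Set.pow_subset_pow_left h.image_subset (Set.image_pow f s l ▸ Set.mem_image_of_mem f hx)

theorem injective_comp_of_finite_ker {F : Type*} [Group F] [IsMulTorsionFree F] {φ : F →* Δ}
    (hφ : Function.Injective φ) (f : Δ →* G) [Finite f.ker] : Function.Injective (f.comp φ) := by
  refine (injective_iff_map_eq_one _).2 fun w hw ↦ ?_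
  have hfin : IsOfFinOrder (⟨φ w, hw⟩ : f.ker) := isOfFinOrder_of_finite _
  exact ((hφ.isOfFinOrder_iff).1 (Submonoid.isOfFinOrder_coe.2 hfin)).eq_one'

theorem freeGroup_lift_comp (f : Δ →* G) {α : Type*} (a : α → Δ) :
    FreeGroup.lift (fun j ↦ f (a j)) = f.comp (FreeGroup.lift a) :=
  FreeGroup.ext_hom _ _ (by simp)

theorem HasFiniteIndependenceDiameter.of_surjective (hΔ : HasFiniteIndependenceDiameter Δ)
    {f : Δ →* G} (hf : Function.Surjective f) [Finite f.ker] :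
    HasFiniteIndependenceDiameter G := by
  obtain ⟨N, hN⟩ := hΔ
  refine ⟨N, fun S ↦ ?_⟩
  obtain ⟨a, ha, hinj⟩ := hN (S.comap hf)
  exact ⟨fun j ↦ f (a j), fun j ↦ map_mem_pow (fun _ hx ↦ hx) (ha j),
    freeGroup_lift_comp f a ▸ injective_comp_of_finite_ker hinj f⟩

end Extension

section Twist

variable {G Δ : Type*} [Group G] [Group Δ] {K : Type*} [Field K]
variable {n : Type*} [Fintype n] [DecidableEq n]

theorem IsStronglyIrreducible.of_eq_smul {ρ : G →* GL n K} (hρ : IsStronglyIrreducible ρ)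
    {f : Δ →* G} (hf : Function.Surjective f) {σ : Δ →* GL n K} (c : Δ → Kˣ)
    (hσ : ∀ p, (σ p).1 = (c p : K) • (ρ (f p)).1) : IsStronglyIrreducible σ := by
  refine fun H hH V hV ↦ hρ (H.map f) ⟨fun h0 ↦ hH.index_ne_zero ?_⟩ V ?_
  · exact Nat.eq_zero_of_zero_dvd (h0 ▸ Subgroup.index_map_dvd H hf)
  · rintro _ ⟨p, hp, rfl⟩ v hv
    have h := hV p hp v hv
    rw [hσ, smul_mulVec] at h
    exact (V.smul_mem_iff (c p).ne_zero).1 h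

/-- The action of `G × Kˣ` in which the second factor acts by homotheties. -/
def scalarTwist (ρ : G →* GL n K) : G × Kˣ →* GL n K :=
  ρ.noncommCoprod (GeneralLinearGroup.scalar n) fun g z ↦
    .symm (GeneralLinearGroup.scalar_commute z (ρ g))

theorem scalarTwist_val (ρ : G →* GL n K) (p : G × Kˣ) :
    (scalarTwist ρ p).1 = (p.2 : K) • (ρ p.1).1 := by
  rw [scalarTwist, MonoidHom.noncommCoprod_apply, ← GeneralLinearGroup.scalar_commute,
    Units.val_mul, GeneralLinearGroup.coe_scalar, scalar_apply, smul_eq_diagonal_mul]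

theorem det_scalarTwist (ρ : G →* GL n K) (p : G × Kˣ) :
    (scalarTwist ρ p).det = p.2 ^ Fintype.card n * (ρ p.1).det :=
  Units.ext (by simp [scalarTwist_val])

/-- The extension of `G` by roots of unity on which the scalar twist of `ρ` is unimodular. -/
def unimodularCover (ρ : G →* GL n K) : Subgroup (G × Kˣ) :=
  (GeneralLinearGroup.det.comp (scalarTwist ρ)).ker

/-- The projection of the unimodular cover onto `G`. -/
def unimodularCoverFst (ρ : G →* GL n K) : unimodularCover ρ →* G :=
  (MonoidHom.fst G Kˣ).comp (unimodularCover ρ).subtype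

theorem mem_unimodularCover {ρ : G →* GL n K} {p : G × Kˣ} :
    p ∈ unimodularCover ρ ↔ p.2 ^ Fintype.card n * (ρ p.1).det = 1 := by
  rw [← det_scalarTwist]
  rfl

theorem unimodularCoverFst_surjective [IsAlgClosed K] [Nonempty n] (ρ : G →* GL n K) :
    Function.Surjective (unimodularCoverFst ρ) := fun g ↦ by
  obtain ⟨z, hz⟩ := IsAlgClosed.exists_pow_nat_eq ((ρ g).det⁻¹ : Kˣ).1 (Fintype.card_pos (α := n))
  have hz0 : z ≠ 0 := fun h ↦ Units.ne_zero ((ρ g).det⁻¹) (by simp [← hz, h])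
  refine ⟨⟨(g, Units.mk0 z hz0), mem_unimodularCover.2 ?_⟩, rfl⟩
  exact mul_eq_one_iff_eq_inv.2 (Units.ext hz)

instance [Nonempty n] (ρ : G →* GL n K) : Finite (unimodularCoverFst ρ).ker := by
  have hfst : ∀ p : (unimodularCoverFst ρ).ker, p.1.1.1 = 1 := fun p ↦ p.2
  refine Finite.of_injective (β := rootsOfUnity (Fintype.card n) K)
    (fun p ↦ ⟨p.1.1.2, ?_⟩) fun p q h ↦ ?_
  · have h := mem_unimodularCover.1 p.1.2
    rwa [hfst, map_one, map_one, mul_one] at h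
  · exact Subtype.ext (Subtype.ext
      (Prod.ext ((hfst p).trans (hfst q).symm) (congrArg Subtype.val h)))

theorem IsStronglyIrreducible.hasFiniteIndependenceDiameter [IsAlgClosed K] [Nontrivial n]
    {ρ : G →* GL n K} (hρ : IsStronglyIrreducible ρ) : HasFiniteIndependenceDiameter G := by
  have hsurj := unimodularCoverFst_surjective ρ
  have hirr : IsStronglyIrreducible ((scalarTwist ρ).comp (unimodularCover ρ).subtype) :=
    hρ.of_eq_smul hsurj (fun p ↦ p.1.2) fun p ↦ scalarTwist_val ρ p.1
  have hdet : ∀ p : unimodularCover ρ, (scalarTwist ρ p.1).1.det = 1 := fun p ↦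
    congrArg Units.val (MonoidHom.mem_ker.1 p.2)
  exact (hirr.hasFiniteIndependenceDiameter_of_det_eq_one hdet).of_surjective hsurj

end Twist

/-! ### Solvable or strongly irreducible -/

section VirtuallySolvableImage

open scoped commutatorElement

variable {Γ X : Type*} [Group Γ] [Monoid X] {ρ : Γ →* X}

/-- `ρ` has virtually solvable image: the image of some subgroup of finite index is solvable.
Vanishing of an iterated commutator subgroup expresses this without requiring `X` to be a group. -/
def HasVirtuallySolvableImage (ρ : Γ →* X) : Prop :=
  ∃ H : Subgroup Γ, H.FiniteIndex ∧ ∃ j, derivedSeries H j ≤ (ρ.comp H.subtype).ker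

theorem derivedSeries_le_ker_of_le {H H' : Subgroup Γ} (hH : H ≤ H') {j j' : ℕ} (hj : j' ≤ j)
    (h : derivedSeries H' j' ≤ (ρ.comp H'.subtype).ker) :
    derivedSeries H j ≤ (ρ.comp H.subtype).ker := fun _ hx ↦
  h (derivedSeries_antitone _ hj (map_derivedSeries_le_derivedSeries (Subgroup.inclusion hH) j
    (Subgroup.mem_map_of_mem _ hx)))

theorem finiteIndex_map_subtype {H : Subgroup Γ} [H.FiniteIndex] {A : Subgroup H}
    (hA : A.FiniteIndex) : (A.map H.subtype).FiniteIndex :=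
  ⟨Subgroup.index_map_subtype A ▸ mul_ne_zero hA.index_ne_zero Subgroup.FiniteIndex.index_ne_zero⟩

theorem commutatorElement_mem_ker {g h : Γ} (hgh : Commute (ρ g) (ρ h)) : ⁅g, h⁆ ∈ ρ.ker := by
  rw [MonoidHom.mem_ker, commutatorElement_def, mul_assoc, map_mul ρ (g * h), map_mul ρ g, hgh.eq,
    ← map_mul, ← map_mul, mul_assoc, mul_inv_cancel_left, mul_inv_cancel, map_one]

namespace HasVirtuallySolvableImage

theorem of_commute_of_eq_one {X₁ X₂ : Type*} [Monoid X₁] [Monoid X₂] {ρ₁ : Γ →* X₁} {ρ₂ : Γ →* X₂}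
    (h₁ : HasVirtuallySolvableImage ρ₁) (h₂ : HasVirtuallySolvableImage ρ₂)
    (hρ : ∀ g h, ρ₁ g = 1 → ρ₂ g = 1 → ρ₁ h = 1 → ρ₂ h = 1 → Commute (ρ g) (ρ h)) :
    HasVirtuallySolvableImage ρ := by
  obtain ⟨H₁, _, j₁, hj₁⟩ := h₁
  obtain ⟨H₂, _, j₂, hj₂⟩ := h₂
  have hker₁ := derivedSeries_le_ker_of_le (H := H₁ ⊓ H₂) inf_le_left (le_max_left j₁ j₂) hj₁
  have hker₂ := derivedSeries_le_ker_of_le (H := H₁ ⊓ H₂) inf_le_right (le_max_right j₁ j₂) hj₂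
  refine ⟨H₁ ⊓ H₂, inferInstance, max j₁ j₂ + 1, Subgroup.commutator_le.2 fun g hg h hh ↦ ?_⟩
  exact commutatorElement_mem_ker (hρ g h (hker₁ hg) (hker₂ hg) (hker₁ hh) (hker₂ hh))

theorem of_commute (hρ : ∀ g h, Commute (ρ g) (ρ h)) : HasVirtuallySolvableImage ρ :=
  ⟨⊤, inferInstance, 1, Subgroup.commutator_le.2 fun g _ h _ ↦
    commutatorElement_mem_ker (hρ g h)⟩

theorem of_subgroup {H : Subgroup Γ} [H.FiniteIndex]
    (h : HasVirtuallySolvableImage (ρ.comp H.subtype)) : HasVirtuallySolvableImage ρ := by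
  obtain ⟨A, hA, j, hj⟩ := h
  let e := A.equivMapOfInjective H.subtype H.subtype_injective
  refine ⟨A.map H.subtype, finiteIndex_map_subtype hA, j, ?_⟩
  rw [← map_derivedSeries_eq (f := e.toMonoidHom) e.surjective, Subgroup.map_le_iff_le_comap]
  exact hj

theorem exists_isSolvable (h : HasVirtuallySolvableImage ρ) (hρ : Function.Injective ρ) :
    ∃ H : Subgroup Γ, H.FiniteIndex ∧ Group.IsSolvable H := by
  obtain ⟨H, hH, j, hj⟩ := h
  refine ⟨H, hH, ⟨j, eq_bot_iff.2 (hj.trans ?_)⟩⟩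
  exact ((ρ.comp H.subtype).ker_eq_bot_iff.2 (hρ.comp H.subtype_injective)).le

end HasVirtuallySolvableImage

end VirtuallySolvableImage

universe v

section Dichotomy

variable {K : Type*} [Field K] {Γ : Type u} [Group Γ] {V : Type v} [AddCommGroup V] [Module K V]

theorem hasVirtuallySolvableImage_of_finrank_le_one [FiniteDimensional K V]
    (hV : Module.finrank K V ≤ 1) (ρ : Representation K Γ V) : HasVirtuallySolvableImage ρ := by
  obtain ⟨v, hv⟩ := finrank_le_one_iff.1 hV
  refine .of_commute fun g h ↦ LinearMap.ext fun w ↦ ?_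
  obtain ⟨c, rfl⟩ := hv w
  obtain ⟨a, ha⟩ := hv (ρ g v)
  obtain ⟨b, hb⟩ := hv (ρ h v)
  simp only [Module.End.mul_apply, map_smul, ← ha, ← hb]
  rw [smul_comm a b]

theorem hasVirtuallySolvableImage_of_subrepresentation_of_quotient {ρ : Representation K Γ V}
    {W : Submodule K V} (hW : ∀ g, W ≤ W.comap (ρ g))
    (hsub : HasVirtuallySolvableImage (ρ.subrepresentation W hW))
    (hquot : HasVirtuallySolvableImage (ρ.quotient W hW)) : HasVirtuallySolvableImage ρ := by
  have hfix : ∀ k, ρ.subrepresentation W hW k = 1 → ∀ v ∈ W, ρ k v = v := fun k hk v hv ↦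
    congrArg Subtype.val (LinearMap.congr_fun hk ⟨v, hv⟩)
  have hsub_mem : ∀ k, ρ.quotient W hW k = 1 → ∀ v, ρ k v - v ∈ W := fun k hk v ↦
    (Submodule.Quotient.eq W).1 (LinearMap.congr_fun hk (Submodule.Quotient.mk v))
  refine hsub.of_commute_of_eq_one hquot fun g h hg₁ hg₂ hh₁ hh₂ ↦ LinearMap.ext fun v ↦ ?_
  have hgh := hfix g hg₁ _ (hsub_mem h hh₂ v)
  have hhg := hfix h hh₁ _ (hsub_mem g hg₂ v)
  rw [map_sub, sub_eq_iff_eq_add] at hgh hhg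
  rw [Module.End.mul_apply, Module.End.mul_apply, hgh, hhg]
  abel

variable (K Γ) in
/-- Some subgroup of finite index has a strongly irreducible representation over `K` of dimension
at least two. -/
def VirtuallyHasStronglyIrreducibleRep : Prop :=
  ∃ H : Subgroup Γ, H.FiniteIndex ∧ ∃ m, 2 ≤ m ∧ ∃ σ : H →* GL (Fin m) K, IsStronglyIrreducible σ

theorem VirtuallyHasStronglyIrreducibleRep.of_subgroup {H : Subgroup Γ} [H.FiniteIndex]
    (h : VirtuallyHasStronglyIrreducibleRep K H) : VirtuallyHasStronglyIrreducibleRep K Γ := by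
  obtain ⟨A, hA, m, hm, σ, hσ⟩ := h
  let e := A.equivMapOfInjective H.subtype H.subtype_injective
  exact ⟨A.map H.subtype, finiteIndex_map_subtype hA, m, hm, σ.comp e.symm.toMonoidHom,
    hσ.of_eq_smul e.symm.surjective 1 fun p ↦ (one_smul K _).symm⟩

theorem virtuallyHasStronglyIrreducibleRep_of_forall_invariant [FiniteDimensional K V]
    (hV : 2 ≤ Module.finrank K V) (ρ : Representation K Γ V)
    (hρ : ∀ H : Subgroup Γ, H.FiniteIndex → ∀ W : Submodule K V,
      (∀ h ∈ H, W ≤ W.comap (ρ h)) → W = ⊥ ∨ W = ⊤) :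
    VirtuallyHasStronglyIrreducibleRep K Γ := by
  let b := Module.finBasis K V
  let φ : Γ →* Matrix (Fin (Module.finrank K V)) (Fin (Module.finrank K V)) K :=
    (LinearMap.toMatrixAlgEquiv b : Module.End K V →* _).comp ρ
  have hφ : ∀ g v, φ g *ᵥ b.equivFun v = b.equivFun (ρ g v) := fun g v ↦
    LinearMap.toMatrix_mulVec_repr b b (ρ g) v
  have hirr : IsStronglyIrreducible φ.toHomUnits := fun H hH W hW ↦ by
    let e := (Submodule.orderIsoMapComap b.equivFun).symm
    have hinv : ∀ h ∈ H, e W ≤ (e W).comap (ρ h) := fun h hh v hv ↦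
      show b.equivFun (ρ h v) ∈ W from hφ h v ▸ hW h hh _ hv
    exact (hρ H hH (e W) hinv).imp (map_eq_bot_iff e).1 (map_eq_top_iff e).1
  refine ⟨⊤, inferInstance, _, hV, φ.toHomUnits.comp (⊤ : Subgroup Γ).subtype, ?_⟩
  exact hirr.of_eq_smul (fun g ↦ ⟨⟨g, trivial⟩, rfl⟩) 1 fun p ↦ (one_smul K _).symm

theorem hasVirtuallySolvableImage_or_virtuallyHasStronglyIrreducibleRep [FiniteDimensional K V]
    (ρ : Representation K Γ V) :
    HasVirtuallySolvableImage ρ ∨ VirtuallyHasStronglyIrreducibleRep K Γ := by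
  induction hd : Module.finrank K V using Nat.strong_induction_on generalizing Γ V with
  | _ d ih =>
    rcases le_or_gt (Module.finrank K V) 1 with hV | hV
    · exact .inl (hasVirtuallySolvableImage_of_finrank_le_one hV ρ)
    by_contra! hcon
    refine hcon.2 (virtuallyHasStronglyIrreducibleRep_of_forall_invariant hV ρ fun H _ W hW ↦ ?_)
    by_contra! hW'
    have hW : ∀ h : H, W ≤ W.comap (ρ.comp H.subtype h) := fun h ↦ hW h h.2
    have hsub_lt : Module.finrank K W < d := hd ▸ Submodule.finrank_lt hW'.2
    have hquot_lt : Module.finrank K (V ⧸ W) < d := by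
      have := Submodule.finrank_quotient_add_finrank W
      have := Submodule.one_le_finrank_iff.2 hW'.1
      omega
    have hH : ¬ VirtuallyHasStronglyIrreducibleRep K H := fun h ↦ hcon.2 h.of_subgroup
    have hsub := (ih _ hsub_lt (Representation.subrepresentation _ W hW) rfl).resolve_right hH
    have hquot := (ih _ hquot_lt (Representation.quotient _ W hW) rfl).resolve_right hH
    exact hcon.1 (.of_subgroup
      (hasVirtuallySolvableImage_of_subrepresentation_of_quotient hW hsub hquot))

end Dichotomy

/-! ### Subgroups of finite index -/

section FiniteIndex

variable {Γ : Type*} [Group Γ] (S : SymmGenSet Γ) (H : Subgroup Γ)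

theorem SymmGenSet.image_mk_pow_eq_univ_of_eq {k : ℕ}
    (hk : (QuotientGroup.mk : Γ → Γ ⧸ H) '' S.carrier ^ k =
      QuotientGroup.mk '' S.carrier ^ (k + 1)) :
    (QuotientGroup.mk : Γ → Γ ⧸ H) '' S.carrier ^ k = Set.univ := by
  refine Set.eq_univ_of_forall fun q ↦ ?_
  obtain ⟨g, rfl⟩ := QuotientGroup.mk_surjective q
  induction g using S.induction with
  | one => exact ⟨1, S.pow_subset_pow (Nat.zero_le k) (by simp), rfl⟩
  | mul s hs g ih =>
    obtain ⟨r, hr, hrg⟩ := ih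
    rw [hk]
    refine ⟨s * r, pow_succ' S.carrier k ▸ Set.mul_mem_mul hs hr, ?_⟩
    exact congrArg (s • ·) hrg

variable [H.FiniteIndex]

theorem SymmGenSet.image_mk_pow_index_eq_univ :
    (QuotientGroup.mk : Γ → Γ ⧸ H) '' S.carrier ^ H.index = Set.univ := by
  set C : ℕ → Set (Γ ⧸ H) := fun k ↦ QuotientGroup.mk '' S.carrier ^ k
  have hmono : ∀ k, C k ⊆ C (k + 1) := fun k ↦ Set.image_mono (S.pow_subset_pow k.le_succ)
  have hgrow : ∀ k, k < (C k).ncard ∨ C k = Set.univ := fun k ↦ by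
    induction k with
    | zero => simp [C]
    | succ k ih =>
      rcases eq_or_ne (C k) (C (k + 1)) with h | h
      · exact .inr (h ▸ S.image_mk_pow_eq_univ_of_eq H h)
      · refine ih.imp (fun ih ↦ ?_) fun ih ↦ Set.eq_univ_of_univ_subset (ih.ge.trans (hmono k))
        have := Set.ncard_lt_ncard ((hmono k).ssubset_of_ne h) (Set.toFinite _)
        omega
  refine (hgrow H.index).resolve_left (not_lt.2 ?_)
  rw [Subgroup.index_eq_card]
  exact Set.ncard_le_card _

theorem SymmGenSet.exists_mem_pow_index_inv_mul_mem (g : Γ) :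
    ∃ r ∈ S.carrier ^ H.index, r⁻¹ * g ∈ H := by
  obtain ⟨r, hr, hrg⟩ := (S.image_mk_pow_index_eq_univ H).ge (Set.mem_univ (g : Γ ⧸ H))
  exact ⟨r, hr, QuotientGroup.eq.1 hrg⟩

theorem SymmGenSet.exists_eq_mul_mem_closure (g : Γ) :
    ∃ r ∈ S.carrier ^ H.index,
      ∃ t ∈ Subgroup.closure (H.subtype ⁻¹' S.carrier ^ (2 * H.index + 1)), g = r * t := by
  induction g using S.induction with
  | one => exact ⟨1, S.pow_subset_pow (Nat.zero_le _) (by simp), 1, Subgroup.one_mem _, by simp⟩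
  | mul s hs g ih =>
    obtain ⟨r, hr, t, ht, rfl⟩ := ih
    obtain ⟨r', hr', hmem⟩ := S.exists_mem_pow_index_inv_mul_mem H (s * r)
    refine ⟨r', hr', ⟨_, hmem⟩ * t, mul_mem (Subgroup.subset_closure ?_) ht, ?_⟩
    · rw [two_mul, add_assoc, pow_add, pow_succ']
      exact Set.mul_mem_mul (S.inv_mem_pow hr') (Set.mul_mem_mul hs hr)
    · simp [mul_assoc]

/-- The generators of a subgroup of finite index given by Schreier's lemma: elements of length
at most `2 * H.index + 1`, since each coset has a representative of length at most `H.index`. -/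
def SymmGenSet.schreier : SymmGenSet H where
  carrier := H.subtype ⁻¹' S.carrier ^ (2 * H.index + 1)
  finite := (S.finite_pow _).preimage H.subtype_injective.injOn
  one_mem := S.pow_subset_pow (Nat.zero_le _) (by simp)
  inv_mem _ hs := S.inv_mem_pow hs
  closure_eq_top := eq_top_iff.2 fun x _ ↦ by
    obtain ⟨r, hr, t, ht, hx⟩ := S.exists_eq_mul_mem_closure H x
    have hxt : x * t⁻¹ ∈ Subgroup.closure (H.subtype ⁻¹' S.carrier ^ (2 * H.index + 1)) := by
      refine Subgroup.subset_closure ?_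
      rw [Set.mem_preimage, map_mul, map_inv, Subgroup.subtype_apply, Subgroup.subtype_apply, hx,
        mul_inv_cancel_right]
      exact S.pow_subset_pow (by omega) hr
    simpa using mul_mem hxt ht

variable {H}

theorem HasFiniteIndependenceDiameter.of_subgroup (h : HasFiniteIndependenceDiameter H) :
    HasFiniteIndependenceDiameter Γ := by
  obtain ⟨N, hN⟩ := h
  refine ⟨(2 * H.index + 1) * N, fun S ↦ ?_⟩
  obtain ⟨a, ha, hinj⟩ := hN (S.schreier H)
  refine ⟨fun j ↦ a j, fun j ↦ ?_, ?_⟩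
  · rw [pow_mul]
    exact map_mem_pow (f := H.subtype) (fun _ hx ↦ hx) (ha j)
  · rw [show FreeGroup.lift (fun j ↦ (a j : Γ)) = H.subtype.comp (FreeGroup.lift a) from
      freeGroup_lift_comp H.subtype a]
    exact H.subtype_injective.comp hinj

end FiniteIndex

theorem VirtuallyHasStronglyIrreducibleRep.hasFiniteIndependenceDiameter {K : Type*} [Field K]
    [IsAlgClosed K] {Γ : Type*} [Group Γ] (h : VirtuallyHasStronglyIrreducibleRep K Γ) :
    HasFiniteIndependenceDiameter Γ := by
  obtain ⟨H, _, m, hm, σ, hσ⟩ := h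
  have : Nontrivial (Fin m) := Fin.nontrivial_iff_two_le.2 hm
  exact hσ.hasFiniteIndependenceDiameter.of_subgroup

theorem exists_injective_representation_algebraicClosure {K : Type*} [Field K] {n : Type*}
    [Fintype n] [DecidableEq n] (Γ : Subgroup (GL n K)) :
    ∃ ρ : Representation (AlgebraicClosure K) Γ (n → AlgebraicClosure K), Function.Injective ρ := by
  let f := algebraMap K (AlgebraicClosure K)
  let e : Matrix n n (AlgebraicClosure K) ≃ₐ[AlgebraicClosure K] _ := toLinAlgEquiv'
  refine ⟨(e : Matrix n n (AlgebraicClosure K) →* _).comp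
    ((Units.coeHom _).comp ((GeneralLinearGroup.map f).comp Γ.subtype)), ?_⟩
  exact e.injective.comp (Units.val_injective.comp
    ((generalLinearGroup_map_injective f.injective).comp Γ.subtype_injective))

end UniformTits

/-- **Uniform Tits alternative.** If `Γ ≤ GL_n(K)` is finitely generated and not virtually
solvable, then there is `N` such that for every finite symmetric generating set `S` of `Γ`
containing `1`, the ball `S ^ N` contains two elements generating a free group of rank 2. -/
theorem uniform_tits_alternative {K : Type*} [Field K] {n : ℕ}
    (Γ : Subgroup (GL (Fin n) K)) (hfg : Group.FG Γ)
    (hns : ¬ ∃ H : Subgroup Γ, H.FiniteIndex ∧ IsSolvable ↥H) :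
    ∃ N : ℕ, ∀ S : Finset Γ, (1 : Γ) ∈ S → (∀ s ∈ S, s⁻¹ ∈ S) →
      Subgroup.closure (S : Set Γ) = ⊤ →
      ∃ a ∈ (S : Set Γ) ^ N, ∃ b ∈ (S : Set Γ) ^ N,
        Function.Injective (FreeGroup.lift ![a, b] : FreeGroup (Fin 2) →* Γ) := by
  obtain ⟨ρ, hρ⟩ := UniformTits.exists_injective_representation_algebraicClosure Γ
  have hirr : UniformTits.VirtuallyHasStronglyIrreducibleRep (AlgebraicClosure K) Γ :=
    (UniformTits.hasVirtuallySolvableImage_or_virtuallyHasStronglyIrreducibleRep ρ).resolve_left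
      fun h ↦ hns (h.exists_isSolvable hρ)
  obtain ⟨N, hN⟩ := hirr.hasFiniteIndependenceDiameter
  refine ⟨N, fun S h1 hinv hgen ↦ ?_⟩
  obtain ⟨a, ha, hinj⟩ := hN ⟨S, S.finite_toSet, h1, hinv, hgen⟩
  refine ⟨a 0, ha 0, a 1, ha 1, ?_⟩
  rwa [show ![a 0, a 1] = a from List.ofFn_injective rfl]
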